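/- Let n ≥ 2 and let X ⊆ ℂ^n be an open set. Assume there is a smooth (C^∞) exhaustion function ρ : X → ℝ such that at each point z ∈ X the Levi form of ρ has at least 2 positive eigenvalues. Then for every point p ∈ X and every vector v ∈ ℂ^n there exist a real number λ > 0 and a holomorphic map f : 𝔻 → X which is proper (i.e. f⁻¹(K) is compact for every compact K ⊆ X) such that f(0) = p and f′(0) = λ·v. (This is the paper's Theorem 1 stated for domains in ℂ^n, where all notions are expressible without abstract complex-manifold theory.) -/

import Mathlib

open Metric

/-!
The linear disc `ζ ↦ p + λ ζ v` with `λ` small lies in `X`. It is modified infinitely often, keeping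
its 1-jet at `0` and changing it little on large compact subsets of `𝔻`, so that its boundary climbs
to ever higher levels of `ρ` while `ρ` never decreases much on the part already pushed up. The limit
is then proper.

Where `dρ ≠ 0`, the complex tangent space meets the two-dimensional Levi-positive space, so through
each point there is a quadratic disc `η ↦ z + η a + η² b` along which `ρ` increases. Given a disc
`f`, inserting `η = ζ ^ N` into a continuous family of such quadratic discs centred at the boundary
of `f` gives, for large `N`, a map that is uniformly close to an entire one, is close to `f` away
from the unit circle, and has its boundary at a higher level.

After a small linear perturbation, `ρ` is Morse. At a critical point the Levi condition bounds the
dimension of the negative eigenspace of the Hessian by `2n - 2`, so a generic small perturbation of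
`f` has boundary disjoint from it. Away from this eigenspace `ρ` can be changed near the critical
point, without lowering the boundary values of `f` below the level in question, into a function all
of whose higher points are regular, and the boundary is pushed along the new function instead.
-/

namespace ProperDisc

open Filter Set Topology

/-! ### Approximation by polynomials after multiplication by a high power of `ζ` -/

section PowApprox

variable {R : Type*} [SeminormedCommRing R]

/-- `a` is approximated by elements of the subring `A` after multiplication by any sufficiently
high power of `u`. For the ring of continuous functions on the closed disc, with `A` the
polynomials and `u` the coordinate function, this is how continuous families of discs are
turned into holomorphic ones. -/
def PowApprox (A : Subring R) (u a : R) : Prop :=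
  ∀ ε > 0, ∀ᶠ N : ℕ in atTop, ∃ p ∈ A, ‖u ^ N * a - p‖ < ε

variable {A : Subring R} {u a b : R}

lemma PowApprox.of_mem (hu : u ∈ A) (ha : a ∈ A) : PowApprox A u a := fun ε hε =>
  Eventually.of_forall fun N => ⟨u ^ N * a, mul_mem (pow_mem hu N) ha, by simpa⟩

lemma PowApprox.add (ha : PowApprox A u a) (hb : PowApprox A u b) : PowApprox A u (a + b) := by
  intro ε hε
  filter_upwards [ha (ε / 2) (half_pos hε), hb (ε / 2) (half_pos hε)]
    with N ⟨p, hp, hap⟩ ⟨q, hq, hbq⟩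
  refine ⟨p + q, add_mem hp hq, ?_⟩
  calc ‖u ^ N * (a + b) - (p + q)‖ = ‖(u ^ N * a - p) + (u ^ N * b - q)‖ := by ring_nf
    _ < ε / 2 + ε / 2 := (norm_add_le _ _).trans_lt (add_lt_add hap hbq)
    _ = ε := add_halves ε

lemma norm_pow_mul_le (hu : ∀ k : ℕ, ‖u ^ k‖ ≤ 1) (k : ℕ) (a : R) : ‖u ^ k * a‖ ≤ ‖a‖ :=
  (norm_mul_le _ _).trans (mul_le_of_le_one_left (norm_nonneg a) (hu k))

lemma PowApprox.mul (hu : ∀ k : ℕ, ‖u ^ k‖ ≤ 1) (ha : PowApprox A u a) (hb : PowApprox A u b) :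
    PowApprox A u (a * b) := by
  intro ε hε
  obtain ⟨m, p, hp, hap⟩ := (ha (ε / (2 * (‖b‖ + 1))) (by positivity)).exists
  have hb' := (tendsto_sub_atTop_nat m).eventually (hb (ε / (2 * (‖p‖ + 1))) (by positivity))
  filter_upwards [hb', eventually_ge_atTop m] with N ⟨q, hq, hbq⟩ hmN
  refine ⟨p * q, mul_mem hp hq, ?_⟩
  have hsplit : u ^ N * (a * b) - p * q
      = (u ^ m * a - p) * (u ^ (N - m) * b) + p * (u ^ (N - m) * b - q) := by
    rw [← Nat.add_sub_cancel' hmN, pow_add, Nat.add_sub_cancel_left]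
    ring
  have hfst : ‖(u ^ m * a - p) * (u ^ (N - m) * b)‖ ≤ ε / (2 * (‖b‖ + 1)) * ‖b‖ :=
    norm_mul_le_of_le hap.le (norm_pow_mul_le hu _ b)
  have hsnd : ‖p * (u ^ (N - m) * b - q)‖ ≤ ‖p‖ * (ε / (2 * (‖p‖ + 1))) :=
    norm_mul_le_of_le le_rfl hbq.le
  calc ‖u ^ N * (a * b) - p * q‖
      ≤ ε / (2 * (‖b‖ + 1)) * ‖b‖ + ‖p‖ * (ε / (2 * (‖p‖ + 1))) :=
        hsplit ▸ norm_add_le_of_le hfst hsnd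
    _ < ε / (2 * (‖b‖ + 1)) * (‖b‖ + 1) + (‖p‖ + 1) * (ε / (2 * (‖p‖ + 1))) := by
        gcongr <;> exact lt_add_one _
    _ = ε := by field_simp; ring

lemma PowApprox.of_frequently (hu : ∀ k : ℕ, ‖u ^ k‖ ≤ 1)
    (h : ∃ᶠ b in 𝓝 a, PowApprox A u b) : PowApprox A u a := by
  intro ε hε
  obtain ⟨b, hb, hab⟩ := (h.and_eventually (ball_mem_nhds a (half_pos hε))).exists
  filter_upwards [hb (ε / 2) (half_pos hε)] with N ⟨p, hp, hbp⟩
  refine ⟨p, hp, ?_⟩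
  have hclose : ‖u ^ N * (a - b)‖ < ε / 2 :=
    (norm_pow_mul_le hu N _).trans_lt (by rwa [← dist_eq_norm, dist_comm])
  calc ‖u ^ N * a - p‖ = ‖u ^ N * (a - b) + (u ^ N * b - p)‖ := by ring_nf
    _ < ε / 2 + ε / 2 := (norm_add_le _ _).trans_lt (add_lt_add hclose hbp)
    _ = ε := add_halves ε

end PowApprox

lemma pow_mul_one_sub_le {x : ℝ} (h0 : 0 ≤ x) (h1 : x ≤ 1) (m : ℕ) :
    x ^ m * (1 - x) ≤ 1 / (m + 1) := by
  rw [le_div_iff₀ (by positivity)]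
  calc x ^ m * (1 - x) * (m + 1) = (∑ _j ∈ Finset.range (m + 1), x ^ m) * (1 - x) := by
        simp; ring
    _ ≤ (∑ j ∈ Finset.range (m + 1), x ^ j) * (1 - x) := by
        refine mul_le_mul_of_nonneg_right (Finset.sum_le_sum fun j hj => ?_) (sub_nonneg.2 h1)
        exact pow_le_pow_of_le_one h0 h1 (Finset.mem_range_succ_iff.1 hj)
    _ = 1 - x ^ (m + 1) := geom_sum_mul_neg x (m + 1)
    _ ≤ 1 := sub_le_self 1 (by positivity)

section ClosedDisc

/-- The coordinate function on the closed unit disc. -/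
noncomputable def discCoord : C(closedBall (0 : ℂ) 1, ℂ) := .restrict _ (.id ℂ)

/-- The ring of complex polynomials, as functions on the closed unit disc. -/
noncomputable def discPolynomials : Subring C(closedBall (0 : ℂ) 1, ℂ) :=
  (polynomialFunctions (closedBall (0 : ℂ) 1)).toSubring

lemma discCoord_mem_discPolynomials : discCoord ∈ discPolynomials :=
  ⟨Polynomial.X, trivial, Polynomial.toContinuousMapOn_X_eq_restrict_id _⟩

lemma norm_discCoord_pow_le (k : ℕ) : ‖discCoord ^ k‖ ≤ 1 := by
  refine (ContinuousMap.norm_le _ zero_le_one).2 fun ζ => ?_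
  simpa [discCoord] using pow_le_one₀ (norm_nonneg _) (mem_closedBall_zero_iff.1 ζ.2)

/-- Multiplying `conj ζ` by `ζ ^ (m + 1)` gives `ζ ^ m` up to an error that only lives near the
boundary, where `1 - |ζ| ^ 2` is small. -/
lemma norm_discCoord_pow_mul_star_sub_le (m : ℕ) :
    ‖discCoord ^ (m + 1) * star discCoord - discCoord ^ m‖ ≤ 2 * (1 / (m + 1)) := by
  refine (ContinuousMap.norm_le _ (by positivity)).2 fun ζ => ?_
  have hζ : ‖(ζ : ℂ)‖ ≤ 1 := mem_closedBall_zero_iff.1 ζ.2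
  have hconj : (ζ : ℂ) * star (ζ : ℂ) = (‖(ζ : ℂ)‖ ^ 2 : ℝ) := by
    rw [Complex.star_def, Complex.mul_conj, Complex.normSq_eq_norm_sq]
  have hpt : (discCoord ^ (m + 1) * star discCoord - discCoord ^ m) ζ
      = -((ζ : ℂ) ^ m * ((1 - ‖(ζ : ℂ)‖ ^ 2 : ℝ) : ℂ)) := by
    change (ζ : ℂ) ^ (m + 1) * star (ζ : ℂ) - (ζ : ℂ) ^ m = _
    push_cast at hconj ⊢
    linear_combination (ζ : ℂ) ^ m * hconj
  have hsq : 0 ≤ 1 - ‖(ζ : ℂ)‖ ^ 2 := sub_nonneg.2 (pow_le_one₀ (norm_nonneg _) hζ)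
  rw [hpt, norm_neg, norm_mul, norm_pow, Complex.norm_real, Real.norm_of_nonneg hsq]
  calc ‖(ζ : ℂ)‖ ^ m * (1 - ‖(ζ : ℂ)‖ ^ 2)
      = (1 + ‖(ζ : ℂ)‖) * (‖(ζ : ℂ)‖ ^ m * (1 - ‖(ζ : ℂ)‖)) := by ring
    _ ≤ 2 * (1 / (m + 1)) := by
        gcongr
        · linarith
        · exact pow_mul_one_sub_le (norm_nonneg _) hζ m

lemma powApprox_star_discCoord : PowApprox discPolynomials discCoord (star discCoord) := by
  intro ε hε
  have hlim := (tendsto_one_div_add_atTop_nhds_zero_nat (𝕜 := ℝ)).const_mul 2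
  rw [mul_zero] at hlim
  have hsmall := (tendsto_sub_atTop_nat 1).eventually (hlim.eventually_lt_const hε)
  filter_upwards [hsmall, eventually_ge_atTop 1] with N hN hN1
  obtain ⟨m, rfl⟩ := Nat.exists_eq_add_of_le' hN1
  exact ⟨discCoord ^ m, pow_mem discCoord_mem_discPolynomials m,
    (norm_discCoord_pow_mul_star_sub_le m).trans_lt hN⟩

lemma powApprox_discPolynomials (a : C(closedBall (0 : ℂ) 1, ℂ)) :
    PowApprox discPolynomials discCoord a := by
  induction a using ContinuousMap.induction_on_of_compact with
  | const c =>
    exact .of_mem discCoord_mem_discPolynomials ((polynomialFunctions _).algebraMap_mem c)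
  | id => exact .of_mem discCoord_mem_discPolynomials discCoord_mem_discPolynomials
  | star_id => exact powApprox_star_discCoord
  | add _ _ hf hg => exact hf.add hg
  | mul _ _ hf hg => exact hf.mul norm_discCoord_pow_le hg
  | frequently _ h => exact .of_frequently norm_discCoord_pow_le h

end ClosedDisc

lemma eventually_exists_differentiable_norm_sub_pow_mul_lt {a : ℂ → ℂ}
    (ha : ContinuousOn a (closedBall 0 1)) {ε : ℝ} (hε : 0 < ε) :
    ∀ᶠ N : ℕ in atTop, ∃ p : ℂ → ℂ, Differentiable ℂ p ∧
      ∀ ζ, ‖ζ‖ ≤ 1 → ‖p ζ - ζ ^ N * a ζ‖ < ε := by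
  filter_upwards [powApprox_discPolynomials ⟨_, ha.domRestrict⟩ ε hε] with N ⟨_, ⟨P, _, rfl⟩, hP⟩
  refine ⟨fun ζ => P.eval ζ, P.differentiable, fun ζ hζ => ?_⟩
  rw [norm_sub_rev]
  exact (ContinuousMap.norm_lt_iff _ hε).1 hP ⟨ζ, mem_closedBall_zero_iff.2 hζ⟩

lemma eventually_exists_differentiable_norm_sub_pow_smul_le {E : Type*} [NormedAddCommGroup E]
    [NormedSpace ℂ E] [FiniteDimensional ℂ E] {a : ℂ → E} (ha : ContinuousOn a (closedBall 0 1))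
    {ε : ℝ} (hε : 0 < ε) :
    ∀ᶠ N : ℕ in atTop, ∃ p : ℂ → E, Differentiable ℂ p ∧
      ∀ ζ, ‖ζ‖ ≤ 1 → ‖p ζ - ζ ^ N • a ζ‖ ≤ ε := by
  let e : E ≃L[ℂ] (Fin (Module.finrank ℂ E) → ℂ) := (Module.finBasis ℂ E).equivFunL
  let L : (Fin (Module.finrank ℂ E) → ℂ) →L[ℂ] E := e.symm
  have hδ : 0 < ε / (‖L‖ + 1) := by positivity
  have hcoord : ∀ i, ContinuousOn (fun ζ => e (a ζ) i) (closedBall 0 1) :=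
    continuousOn_pi.1 (e.continuous.comp_continuousOn ha)
  filter_upwards [eventually_all.2 fun i =>
    eventually_exists_differentiable_norm_sub_pow_mul_lt (hcoord i) hδ] with N hN
  choose p hp hpa using hN
  refine ⟨fun ζ => L fun i => p i ζ, L.differentiable.comp (differentiable_pi.2 hp),
    fun ζ hζ => ?_⟩
  have hL : L (fun i => p i ζ) - ζ ^ N • a ζ = L ((fun i => p i ζ) - ζ ^ N • e (a ζ)) := by
    simp [L]
  rw [hL]
  calc _ ≤ ‖L‖ * (ε / (‖L‖ + 1)) :=
        L.le_opNorm_of_le ((pi_norm_le_iff_of_nonneg hδ.le).2 fun i => (hpa i ζ hζ).le)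
    _ ≤ (‖L‖ + 1) * (ε / (‖L‖ + 1)) := by gcongr; exact (lt_add_one _).le
    _ = ε := by field_simp

/-! ### Discs along which a function with a positive Levi direction increases -/

section Regular

variable {E : Type*} [NormedAddCommGroup E] [NormedSpace ℂ E] {φ : E → ℝ} {z : E}

/-- The Levi form of `φ` at `z`, evaluated on `w`; it is `4` times the usual
`∑ ∂²φ/∂z_j∂z̄_k w_j w̄_k`. -/
noncomputable def levi (φ : E → ℝ) (z w : E) : ℝ :=
  fderiv ℝ (fderiv ℝ φ) z w w + fderiv ℝ (fderiv ℝ φ) z (Complex.I • w) (Complex.I • w)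

/-- The Levi form of `φ` at `z` has at least two positive eigenvalues. -/
def LeviTwoPos (φ : E → ℝ) (z : E) : Prop :=
  ∃ V : Submodule ℂ E, Module.finrank ℂ V = 2 ∧ ∀ w ∈ V, w ≠ 0 → 0 < levi φ z w

/-- The form `2∂φ` at `z`: the complex-linear functional with real part `Dφ(z)`. Its kernel is the
complex tangent space of the level set of `φ`. -/
noncomputable def complexDeriv (φ : E → ℝ) (z : E) : E →L[ℂ] ℂ :=
  StrongDual.extendRCLike (fderiv ℝ φ z)

lemma re_complexDeriv (φ : E → ℝ) (z w : E) : (complexDeriv φ z w).re = fderiv ℝ φ z w :=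
  StrongDual.re_extendRCLike_apply (𝕜 := ℂ) _ w

lemma complexDeriv_ne_zero (hd : fderiv ℝ φ z ≠ 0) : complexDeriv φ z ≠ 0 := fun h =>
  hd (ContinuousLinearMap.ext fun w => by rw [← re_complexDeriv, h]; rfl)

lemma continuousAt_complexDeriv (h : ContinuousAt (fderiv ℝ φ) z) :
    ContinuousAt (complexDeriv φ) z :=
  (StrongDual.extendRCLikeL (𝕜 := ℂ) (F := E)).continuous.continuousAt.comp h

/-- `z` is not critical for `φ`, and the Levi form of `φ` is positive on some vector of the complex
tangent space at `z` of the level set of `φ`. -/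
def Regular (φ : E → ℝ) (z : E) : Prop :=
  complexDeriv φ z ≠ 0 ∧ ∃ w, complexDeriv φ z w = 0 ∧ 0 < levi φ z w

lemma LeviTwoPos.regular (h : LeviTwoPos φ z) (hd : fderiv ℝ φ z ≠ 0) : Regular φ z := by
  obtain ⟨V, hV, hpos⟩ := h
  have : Module.Finite ℂ V := Module.finite_of_finrank_pos (by omega)
  obtain ⟨w, hw, hw0⟩ := (Submodule.ne_bot_iff _).1
    (LinearMap.ker_ne_bot_of_finrank_lt
      (f := (complexDeriv φ z : E →ₗ[ℂ] ℂ).comp V.subtype) (by simp [hV]))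
  exact ⟨complexDeriv_ne_zero hd, w, hw, hpos w w.2 (by simpa using hw0)⟩

end Regular

section TangentField

variable {E Z : Type*} [NormedAddCommGroup E] [NormedSpace ℂ E] [TopologicalSpace Z]

lemma exists_field_mem_ker {α : Z → E →L[ℂ] ℂ} {z₀ : Z}
    (hα : ∀ᶠ z in 𝓝 z₀, ContinuousAt α z) (h0 : α z₀ ≠ 0) {w₀ : E} (hw₀ : α z₀ w₀ = 0) :
    ∃ w : Z → E, w z₀ = w₀ ∧ ∀ᶠ z in 𝓝 z₀, ContinuousAt w z ∧ α z (w z) = 0 := by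
  obtain ⟨e, he⟩ : ∃ e, α z₀ e ≠ 0 := by
    contrapose! h0
    exact ContinuousLinearMap.ext h0
  have hev : ∀ᶠ z in 𝓝 z₀, α z e ≠ 0 :=
    (hα.self_of_nhds.clm_apply continuousAt_const).eventually_ne he
  refine ⟨fun z => w₀ - (α z w₀ / α z e) • e, by simp [hw₀], ?_⟩
  filter_upwards [hα, hev] with z hz hze
  exact ⟨continuousAt_const.sub (((hz.clm_apply continuousAt_const).div
    (hz.clm_apply continuousAt_const) hze).smul continuousAt_const), by simp [hze]⟩

end TangentField

section Quad

variable {E : Type*} [NormedAddCommGroup E] [NormedSpace ℂ E] {φ : E → ℝ}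

/-- The disc of degree two with centre `z` and coefficients `a`, `b`. -/
def quad (z a b : E) (η : ℂ) : E := z + η • a + η ^ 2 • b

@[simp] lemma quad_zero (z a b : E) : quad z a b 0 = z := by simp [quad]

@[simp] lemma quad_coeff_zero (z : E) (η : ℂ) : quad z 0 0 η = z := by simp [quad]

lemma quad_smul (z a b : E) (c η : ℂ) : quad z (c • a) (c ^ 2 • b) η = quad z a b (η * c) := by
  simp [quad, smul_smul, mul_pow]

lemma hasDerivAt_quad (z a b : E) (s : ℝ) :
    HasDerivAt (fun s : ℝ => quad z a b s) (a + (2 * s : ℂ) • b) s := by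
  have hs : HasDerivAt (fun s : ℝ => (s : ℂ)) 1 s := Complex.ofRealCLM.hasDerivAt
  refine (((hs.smul_const a).const_add z).add ((hs.pow 2).smul_const b)).congr_deriv ?_
  simp

/-- The second derivative of `s ↦ φ (quad z a b s)` at the real point `s`. -/
noncomputable def quadDeriv2 (φ : E → ℝ) (z a b : E) (s : ℝ) : ℝ :=
  fderiv ℝ (fderiv ℝ φ) (quad z a b s) (a + (2 * s : ℂ) • b) (a + (2 * s : ℂ) • b) +
    fderiv ℝ φ (quad z a b s) ((2 : ℂ) • b)

lemma hasDerivAt_comp_quad {z a b : E} {s : ℝ} (hφ : ContDiffAt ℝ 2 φ (quad z a b s)) :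
    HasDerivAt (fun s : ℝ => φ (quad z a b s))
      (fderiv ℝ φ (quad z a b s) (a + (2 * s : ℂ) • b)) s :=
  (hφ.differentiableAt (by simp)).hasFDerivAt.comp_hasDerivAt s (hasDerivAt_quad z a b s)

lemma hasDerivAt_fderiv_comp_quad {z a b : E} {s : ℝ} (hφ : ContDiffAt ℝ 2 φ (quad z a b s)) :
    HasDerivAt (fun s : ℝ => fderiv ℝ φ (quad z a b s) (a + (2 * s : ℂ) • b))
      (quadDeriv2 φ z a b s) s := by
  have hD : DifferentiableAt ℝ (fderiv ℝ φ) (quad z a b s) :=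
    (hφ.fderiv_right (m := 1) (by norm_num)).differentiableAt (by simp)
  have hv : HasDerivAt (fun s : ℝ => a + (2 * s : ℂ) • b) ((2 : ℂ) • b) s := by
    have h2 : HasDerivAt (fun s : ℝ => (2 * s : ℂ)) 2 s := by
      simpa using (Complex.ofRealCLM.hasDerivAt (x := s)).const_mul (2 : ℂ)
    exact (h2.smul_const b).const_add a
  have hc := hD.hasFDerivAt.comp_hasDerivAt s (hasDerivAt_quad z a b s)
  exact hc.clm_apply hv

lemma add_sq_le_of_deriv2_ge {g g' g'' : ℝ → ℝ} {r c : ℝ} (hr : 0 ≤ r)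
    (hg : ∀ s ∈ Icc 0 r, HasDerivAt g (g' s) s)
    (hg' : ∀ s ∈ Icc 0 r, HasDerivAt g' (g'' s) s) (h0 : g' 0 = 0)
    (hc : ∀ s ∈ Icc 0 r, c ≤ g'' s) : g 0 + c / 2 * r ^ 2 ≤ g r := by
  have hmono : ∀ {k k' : ℝ → ℝ}, (∀ s ∈ Icc 0 r, HasDerivAt k (k' s) s) →
      (∀ s ∈ Icc 0 r, 0 ≤ k' s) → MonotoneOn k (Icc 0 r) := fun hk hk0 =>
    monotoneOn_of_hasDerivWithinAt_nonneg (convex_Icc 0 r)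
      (fun s hs => (hk s hs).continuousAt.continuousWithinAt)
      (fun s hs => (hk s (interior_subset hs)).hasDerivWithinAt)
      (fun s hs => hk0 s (interior_subset hs))
  have hlin : MonotoneOn (fun s => g' s - c * s) (Icc 0 r) :=
    hmono (fun s hs => (hg' s hs).sub (((hasDerivAt_id s).const_mul c).congr_deriv (mul_one c)))
      fun s hs => sub_nonneg.2 (hc s hs)
  have hquad : MonotoneOn (fun s => g s - c / 2 * s ^ 2) (Icc 0 r) := by
    refine hmono (k' := fun s => g' s - c * s) (fun s hs => ?_) fun s hs => ?_
    · exact ((hg s hs).sub (((hasDerivAt_id s).pow 2).const_mul (c / 2))).congr_deriv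
        (by simp; ring)
    · simpa [h0] using hlin ⟨le_rfl, hr⟩ hs hs.1
  have := hquad ⟨le_rfl, hr⟩ ⟨hr, le_rfl⟩ hr
  simp only at this
  linarith

lemma add_sq_le_quad {z a b : E} {r c : ℝ} (hr : 0 ≤ r)
    (hφ : ∀ s ∈ Icc 0 r, ContDiffAt ℝ 2 φ (quad z a b s)) (ha : fderiv ℝ φ z a = 0)
    (hc : ∀ s ∈ Icc 0 r, c ≤ quadDeriv2 φ z a b s) :
    φ z + c / 2 * r ^ 2 ≤ φ (quad z a b r) := by
  simpa using add_sq_le_of_deriv2_ge hr (fun s hs => hasDerivAt_comp_quad (hφ s hs))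
    (fun s hs => hasDerivAt_fderiv_comp_quad (hφ s hs)) (by simpa using ha) hc

lemma continuousAt_quad {T : Type*} [TopologicalSpace T] {z a b : T → E} {s : T → ℝ} {t : T}
    (hz : ContinuousAt z t) (ha : ContinuousAt a t) (hb : ContinuousAt b t)
    (hs : ContinuousAt s t) : ContinuousAt (fun t => quad (z t) (a t) (b t) (s t)) t := by
  have hs' : ContinuousAt (fun t => (s t : ℂ)) t := Complex.continuous_ofReal.continuousAt.comp hs
  exact (hz.add (hs'.smul ha)).add ((hs'.pow 2).smul hb)

lemma continuousAt_quadDeriv2 {T : Type*} [TopologicalSpace T] {z a b : T → E} {s : T → ℝ} {t : T}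
    (hz : ContinuousAt z t) (ha : ContinuousAt a t) (hb : ContinuousAt b t)
    (hs : ContinuousAt s t) (hφ : ContDiffAt ℝ 2 φ (quad (z t) (a t) (b t) (s t))) :
    ContinuousAt (fun t => quadDeriv2 φ (z t) (a t) (b t) (s t)) t := by
  have hD : ContDiffAt ℝ 1 (fderiv ℝ φ) (quad (z t) (a t) (b t) (s t)) :=
    hφ.fderiv_right (by norm_num)
  have hH : ContDiffAt ℝ 0 (fderiv ℝ (fderiv ℝ φ)) (quad (z t) (a t) (b t) (s t)) :=
    hD.fderiv_right (by norm_num)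
  have hq := continuousAt_quad hz ha hb hs
  have hHq := ContinuousAt.comp (g := fderiv ℝ (fderiv ℝ φ)) (x := t) hH.continuousAt hq
  have hDq := ContinuousAt.comp (g := fderiv ℝ φ) (x := t) hD.continuousAt hq
  have hv : ContinuousAt (fun t => a t + (2 * s t : ℂ) • b t) t :=
    ha.add ((continuousAt_const.mul (Complex.continuous_ofReal.continuousAt.comp hs)).smul hb)
  exact ((hHq.clm_apply hv).clm_apply hv).add (hDq.clm_apply (hb.const_smul (2 : ℂ)))

end Quad

section LocalPush

variable {E : Type*} [NormedAddCommGroup E] [NormedSpace ℂ E] {φ : E → ℝ} {X : Set E} {z₀ : E}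

/-- Under `w ↦ ω • w` the quadratic form of `H` splits into its Hermitian part and the real part
of a complex quadratic form. -/
lemma apply_smul_smul_self {H : E →L[ℝ] E →L[ℝ] ℝ} (hH : ∀ v w, H v w = H w v) (ω : ℂ) (w : E) :
    H (ω • w) (ω • w) = ‖ω‖ ^ 2 * ((H w w + H (Complex.I • w) (Complex.I • w)) / 2) +
      (ω ^ 2 *
        (⟨(H w w - H (Complex.I • w) (Complex.I • w)) / 2, -H w (Complex.I • w)⟩ : ℂ)).re := by
  have hω : ω • w = ω.re • w + ω.im • Complex.I • w := by
    conv_lhs => rw [← Complex.re_add_im ω, add_smul, mul_smul]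
    rfl
  rw [hω, Complex.sq_norm, Complex.normSq_apply]
  simp only [map_add, map_smul, add_apply, smul_apply, smul_eq_mul, pow_two, Complex.mul_re,
    Complex.mul_im, hH (Complex.I • w) w]
  ring

/-- The second order coefficient `b` cancels the non-Hermitian part of the second derivative. -/
lemma exists_quadDeriv2_eq_levi (hφ : ContDiffAt ℝ 2 φ z₀) (h0 : complexDeriv φ z₀ ≠ 0) (w : E) :
    ∃ b : E, ∀ ω : ℂ, ‖ω‖ = 1 →
      quadDeriv2 φ z₀ (ω • w) (ω ^ 2 • b) 0 = levi φ z₀ w / 2 := by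
  obtain ⟨e, he⟩ : ∃ e, complexDeriv φ z₀ e ≠ 0 := by
    contrapose! h0
    exact ContinuousLinearMap.ext h0
  set H := fderiv ℝ (fderiv ℝ φ) z₀ with hH
  set Q : ℂ := ⟨(H w w - H (Complex.I • w) (Complex.I • w)) / 2, -H w (Complex.I • w)⟩ with hQ
  refine ⟨(-Q / (2 * complexDeriv φ z₀ e)) • e, fun ω hω => ?_⟩
  have hsymm : ∀ v w, H v w = H w v := (hφ.isSymmSndFDerivAt (by simp)).eq
  have hcancel : complexDeriv φ z₀ ((2 : ℂ) • ω ^ 2 • (-Q / (2 * complexDeriv φ z₀ e)) • e)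
      = -(ω ^ 2 * Q) := by
    simp only [map_smul, smul_eq_mul]
    field_simp
  simp only [quadDeriv2, Complex.ofReal_zero, quad_zero, mul_zero, zero_smul, add_zero, ← hH]
  rw [apply_smul_smul_self hsymm, ← hQ, ← re_complexDeriv, hcancel, hω, levi, ← hH, Complex.neg_re]
  ring

lemma exists_norm_eq_one_mul (η : ℂ) : ∃ ω : ℂ, ‖ω‖ = 1 ∧ η = (‖η‖ : ℂ) * ω := by
  rcases eq_or_ne η 0 with rfl | hη
  · exact ⟨1, by simp⟩
  · refine ⟨η / ‖η‖, by simp [hη], ?_⟩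
    rw [mul_div_cancel₀ _ (by simpa using hη)]

lemma eventually_quad_mem_and_lt_quadDeriv2 (hX : X ∈ 𝓝 z₀) (hφ : ContDiffAt ℝ 2 φ z₀)
    {w : E → E} (hw : ContinuousAt w z₀) {b : E} {c : ℝ}
    (hc : ∀ ω : ℂ, ‖ω‖ = 1 → c < quadDeriv2 φ z₀ (ω • w z₀) (ω ^ 2 • b) 0) :
    ∀ᶠ x : E × ℝ in 𝓝 (z₀, 0), ∀ ω ∈ sphere (0 : ℂ) 1,
      quad x.1 (ω • w x.1) (ω ^ 2 • b) x.2 ∈ X ∧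
        c < quadDeriv2 φ x.1 (ω • w x.1) (ω ^ 2 • b) x.2 := by
  refine (isCompact_sphere (0 : ℂ) 1).eventually_forall_of_forall_eventually fun ω hω => ?_
  have cz : ContinuousAt (fun y : (E × ℝ) × ℂ => y.1.1) ((z₀, 0), ω) := by fun_prop
  have cs : ContinuousAt (fun y : (E × ℝ) × ℂ => y.1.2) ((z₀, 0), ω) := by fun_prop
  have cω : ContinuousAt (fun y : (E × ℝ) × ℂ => y.2) ((z₀, 0), ω) := by fun_prop
  have ca : ContinuousAt (fun y : (E × ℝ) × ℂ => y.2 • w y.1.1) ((z₀, 0), ω) :=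
    cω.smul (ContinuousAt.comp' (x := ((z₀, (0 : ℝ)), ω)) hw cz)
  have cb : ContinuousAt (fun y : (E × ℝ) × ℂ => y.2 ^ 2 • b) ((z₀, 0), ω) :=
    (cω.pow 2).smul continuousAt_const
  refine ((continuousAt_quad cz ca cb cs).eventually_mem (by simpa using hX)).and
    ((continuousAt_quadDeriv2 cz ca cb cs (by simpa using hφ)).eventually_const_lt ?_)
  exact hc ω (by simpa using hω)

lemma exists_local_push (hX : IsOpen X) (hφ : ∀ z ∈ X, ContDiffAt ℝ 2 φ z) (hz₀ : z₀ ∈ X)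
    (hreg : Regular φ z₀) :
    ∃ (w : E → E) (b : E), ∃ r > 0, ∃ c > 0, ContinuousOn w (ball z₀ r) ∧
      ∀ z ∈ ball z₀ r, ∀ η : ℂ, ‖η‖ < r →
        quad z (w z) b η ∈ X ∧ φ z + c * ‖η‖ ^ 2 ≤ φ (quad z (w z) b η) := by
  obtain ⟨h0, w₀, hw₀, hlevi⟩ := hreg
  obtain ⟨b, hb⟩ := exists_quadDeriv2_eq_levi (hφ z₀ hz₀) h0 w₀
  have hα : ∀ᶠ z in 𝓝 z₀, ContinuousAt (complexDeriv φ) z := by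
    filter_upwards [hX.mem_nhds hz₀] with z hz
    exact continuousAt_complexDeriv ((hφ z hz).fderiv_right (m := 1) (by norm_num)).continuousAt
  obtain ⟨w, rfl, hw⟩ := exists_field_mem_ker hα h0 hw₀
  have hpush := eventually_quad_mem_and_lt_quadDeriv2 (c := levi φ z₀ (w z₀) / 4) (hX.mem_nhds hz₀)
    (hφ z₀ hz₀) hw.self_of_nhds.1 fun ω hω => by rw [hb ω hω]; linarith
  obtain ⟨r, hr, hball⟩ := eventually_nhds_iff_ball.1
    (hpush.and ((continuous_fst.tendsto (z₀, (0 : ℝ))).eventually hw))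
  have hmem : ∀ z ∈ ball z₀ r, ∀ s : ℝ, |s| < r → (z, s) ∈ ball (z₀, (0 : ℝ)) r := by
    intro z hz s hs
    rw [← ball_prod_same]
    exact ⟨hz, by simpa using hs⟩
  refine ⟨w, b, r, hr, levi φ z₀ (w z₀) / 4 / 2, by positivity, fun z hz =>
    (hball _ (hmem z hz 0 (by simpa using hr))).2.1.continuousWithinAt, fun z hz η hη => ?_⟩
  obtain ⟨ω, hω, hηω⟩ := exists_norm_eq_one_mul η
  have hω' : ω ∈ sphere (0 : ℂ) 1 := by simpa using hω
  have hker : complexDeriv φ z (w z) = 0 := (hball _ (hmem z hz 0 (by simpa using hr))).2.2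
  have htan : fderiv ℝ φ z (ω • w z) = 0 := by
    rw [← re_complexDeriv, map_smul, hker, smul_zero, Complex.zero_re]
  have hs : ∀ s ∈ Icc 0 ‖η‖, (z, s) ∈ ball (z₀, (0 : ℝ)) r := fun s hs =>
    hmem z hz s (by rw [abs_of_nonneg hs.1]; exact hs.2.trans_lt hη)
  rw [show quad z (w z) b η = quad z (ω • w z) (ω ^ 2 • b) ‖η‖ by rw [quad_smul, ← hηω]]
  exact ⟨((hball _ (hs _ ⟨norm_nonneg η, le_rfl⟩)).1 ω hω').1,
    add_sq_le_quad (norm_nonneg η) (fun s h => hφ _ ((hball _ (hs s h)).1 ω hω').1) htan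
      fun s h => ((hball _ (hs s h)).1 ω hω').2.le⟩

end LocalPush

section PushField

variable {E : Type*} [NormedAddCommGroup E] [NormedSpace ℂ E] {φ : E → ℝ} {X : Set E}

/-- A continuous family of discs of degree two in `X`, centred at all points of `X`, along which
`φ` increases by at least `κ` times the square of the parameter. -/
structure PushField (φ : E → ℝ) (X : Set E) (W B : E → E) (κ : E → ℝ) (C : ℝ) : Prop where
  continuous_linear : Continuous W
  continuous_quadratic : Continuous B
  continuous_gain : Continuous κ
  gain_nonneg : ∀ z, 0 ≤ κ z
  mem : ∀ z ∈ X, ∀ η : ℂ, ‖η‖ ≤ 1 → quad z (W z) (B z) η ∈ X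
  add_le : ∀ z ∈ X, ∀ η : ℂ, ‖η‖ ≤ 1 → φ z + κ z * ‖η‖ ^ 2 ≤ φ (quad z (W z) (B z) η)
  bound : ∀ z, ‖W z‖ + ‖B z‖ ≤ C

lemma PushField.scale {W B : E → E} {κ : E → ℝ} {C : ℝ} (h : PushField φ X W B κ C) {s : ℝ}
    (h0 : 0 ≤ s) (h1 : s ≤ 1) :
    PushField φ X (fun z => (s : ℂ) • W z) (fun z => (s : ℂ) ^ 2 • B z)
      (fun z => s ^ 2 * κ z) (s * C) := by
  have hnorm : ∀ η : ℂ, ‖η * s‖ = ‖η‖ * s := fun η => by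
    rw [norm_mul, Complex.norm_real, Real.norm_of_nonneg h0]
  have hle : ∀ η : ℂ, ‖η‖ ≤ 1 → ‖η * s‖ ≤ 1 := fun η hη => by
    rw [hnorm]; exact mul_le_one₀ hη h0 h1
  refine ⟨h.continuous_linear.const_smul _, h.continuous_quadratic.const_smul _,
    h.continuous_gain.const_mul _, fun z => mul_nonneg (sq_nonneg s) (h.gain_nonneg z),
    fun z hz η hη => ?_, fun z hz η hη => ?_, fun z => ?_⟩
  · rw [quad_smul]; exact h.mem z hz _ (hle η hη)
  · rw [quad_smul]
    calc φ z + s ^ 2 * κ z * ‖η‖ ^ 2 = φ z + κ z * ‖η * s‖ ^ 2 := by rw [hnorm]; ring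
      _ ≤ _ := h.add_le z hz _ (hle η hη)
  · rw [norm_smul, norm_smul, norm_pow, Complex.norm_real, Real.norm_of_nonneg h0]
    calc s * ‖W z‖ + s ^ 2 * ‖B z‖ ≤ s * ‖W z‖ + s * ‖B z‖ := by
          gcongr; exact pow_le_of_le_one h0 h1 two_ne_zero
      _ = s * (‖W z‖ + ‖B z‖) := by ring
      _ ≤ s * C := by gcongr; exact h.bound z

/-- Scaling a disc by a cutoff replaces its parameter `η` by `η * χ z`, so local discs extend by
constant discs. -/
lemma exists_pushField [FiniteDimensional ℂ E] (hX : IsOpen X)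
    (hφ : ∀ z ∈ X, ContDiffAt ℝ 2 φ z) {z₀ : E} (hz₀ : z₀ ∈ X) (hreg : Regular φ z₀) :
    ∃ (W B : E → E) (κ : E → ℝ) (C : ℝ), PushField φ X W B κ C ∧ 0 < κ z₀ := by
  have := FiniteDimensional.proper ℂ E
  obtain ⟨w, b, r, hr, c, hc, hw, hpush⟩ := exists_local_push hX hφ hz₀ hreg
  let χ : E → ℝ := fun z => max 0 (r / 2 - dist z z₀)
  have hχc : Continuous χ := by fun_prop
  have hχ0 : ∀ z, 0 ≤ χ z := fun z => le_max_left _ _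
  have hχr : ∀ z, χ z < r := fun z =>
    max_lt hr (by linarith [dist_nonneg (x := z) (y := z₀)])
  have hχs : ∀ z, z ∉ closedBall z₀ (r / 2) → χ z = 0 := fun z hz =>
    max_eq_left (by linarith [not_le.1 (mt mem_closedBall.2 hz)])
  have hsupp : Function.support (fun z => (χ z : ℂ) • w z) ⊆ closedBall z₀ (r / 2) :=
    fun z hz => by_contra fun h => hz (by simp [hχs z h])
  have hWc : Continuous fun z => (χ z : ℂ) • w z :=
    (ContinuousOn.smul (by fun_prop) hw).continuous_of_tsupport_subset isOpen_ball
      ((closure_minimal hsupp isClosed_closedBall).trans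
        (closedBall_subset_ball (half_lt_self hr)))
  have hBc : Continuous fun z => (χ z : ℂ) ^ 2 • b := by fun_prop
  obtain ⟨C₁, hC₁⟩ := hWc.bounded_above_of_compact_support
    (.intro (isCompact_closedBall z₀ (r / 2)) fun z hz => by simp [hχs z hz])
  obtain ⟨C₂, hC₂⟩ := hBc.bounded_above_of_compact_support
    (.intro (isCompact_closedBall z₀ (r / 2)) fun z hz => by simp [hχs z hz])
  have hnorm : ∀ z, ∀ η : ℂ, ‖η * χ z‖ = ‖η‖ * χ z := fun z η => by
    rw [norm_mul, Complex.norm_real, Real.norm_of_nonneg (hχ0 z)]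
  have hquad : ∀ z ∈ X, ∀ η : ℂ, ‖η‖ ≤ 1 → quad z ((χ z : ℂ) • w z) ((χ z : ℂ) ^ 2 • b) η ∈ X ∧
      φ z + c * χ z ^ 2 * ‖η‖ ^ 2 ≤ φ (quad z ((χ z : ℂ) • w z) ((χ z : ℂ) ^ 2 • b) η) := by
    intro z hz η hη
    by_cases hzr : z ∈ ball z₀ r
    · rw [quad_smul, mul_assoc, ← mul_pow, mul_comm (χ z), ← hnorm]
      refine hpush z hzr _ ?_
      rw [hnorm]
      exact (mul_le_of_le_one_left (hχ0 z) hη).trans_lt (hχr z)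
    · rw [hχs z fun h => hzr (closedBall_subset_ball (half_lt_self hr) h)]
      simpa using hz
  refine ⟨_, _, fun z => c * χ z ^ 2, C₁ + C₂, ⟨hWc, hBc, by fun_prop, fun z => by positivity,
    fun z hz η hη => (hquad z hz η hη).1, fun z hz η hη => (hquad z hz η hη).2,
    fun z => add_le_add (hC₁ z) (hC₂ z)⟩, ?_⟩
  have : 0 < χ z₀ := lt_max_of_lt_right (by simpa using hr)
  positivity

end PushField

/-! ### Pushing the boundary of a disc across regular levels -/

lemma exists_uniform_nhd_of_isCompact {E : Type*} [SeminormedAddCommGroup E] {X K : Set E}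
    (hX : IsOpen X) {φ : E → ℝ} (hφ : ContinuousOn φ X) (hK : IsCompact K) (hKX : K ⊆ X) {ε : ℝ}
    (hε : 0 < ε) :
    ∃ δ > 0, ∀ x ∈ K, ∀ y, ‖y - x‖ < δ → y ∈ X ∧ φ x - ε < φ y := by
  obtain ⟨δ₁, hδ₁, hsub⟩ := hK.exists_thickening_subset_open hX hKX
  obtain ⟨δ₂, hδ₂, hunif⟩ := mem_uniformity_dist.1 <| hK.uniformContinuousAt_of_continuousAt φ
    (fun a ha => hφ.continuousAt (hX.mem_nhds (hKX ha))) (dist_mem_uniformity hε)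
  refine ⟨min δ₁ δ₂, lt_min hδ₁ hδ₂, fun x hx y hy => ⟨hsub ?_, ?_⟩⟩
  · exact mem_thickening_iff.2 ⟨x, hx, dist_eq_norm y x ▸ hy.trans_le (min_le_left _ _)⟩
  · have hxy : dist (φ x) (φ y) < ε := hunif (dist_comm y x ▸ dist_eq_norm y x ▸
      hy.trans_le (min_le_right _ _)) hx
    linarith [(abs_lt.1 hxy).2]

section Modification

variable {E : Type*} [NormedAddCommGroup E] [NormedSpace ℂ E]

/-- `f` is an entire curve mapping the closed unit disc into `X`. -/
structure Adm (X : Set E) (f : ℂ → E) : Prop where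
  differentiable : Differentiable ℂ f
  mem : ∀ ζ, ‖ζ‖ ≤ 1 → f ζ ∈ X

/-- `F` is another admissible disc with the same `1`-jet at `0` as `f`, which is `ε`-close to `f` on
the disc of radius `r`, and on which `ψ` is nowhere smaller than on `f` by more than `ε`. -/
structure Modification (X : Set E) (ψ : E → ℝ) (r ε : ℝ) (f F : ℂ → E) : Prop where
  adm : Adm X F
  apply_zero : F 0 = f 0
  deriv_zero : deriv F 0 = deriv f 0
  norm_sub_lt : ∀ ζ, ‖ζ‖ ≤ r → ‖F ζ - f ζ‖ < ε
  sub_le : ∀ ζ, ‖ζ‖ ≤ 1 → ψ (f ζ) - ε ≤ ψ (F ζ)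

variable {X : Set E} {φ ψ : E → ℝ} {r ε ε₁ ε₂ : ℝ} {f F G : ℂ → E}

lemma Adm.continuousOn_comp (hf : Adm X f) (hφ : ContinuousOn φ X) :
    ContinuousOn (fun ζ => φ (f ζ)) (closedBall 0 1) :=
  hφ.comp hf.differentiable.continuous.continuousOn
    fun ζ hζ => hf.mem ζ (mem_closedBall_zero_iff.1 hζ)

lemma Adm.exists_uniform_nhd (hX : IsOpen X) (hφ : ContinuousOn φ X) (hf : Adm X f) (hε : 0 < ε) :
    ∃ δ > 0, ∀ ζ, ‖ζ‖ ≤ 1 → ∀ y, ‖y - f ζ‖ < δ → y ∈ X ∧ φ (f ζ) - ε < φ y := by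
  obtain ⟨δ, hδ, hnear⟩ := exists_uniform_nhd_of_isCompact hX hφ
    ((isCompact_closedBall (0 : ℂ) 1).image hf.differentiable.continuous)
    (image_subset_iff.2 fun ζ hζ => hf.mem ζ (mem_closedBall_zero_iff.1 hζ)) hε
  exact ⟨δ, hδ, fun ζ hζ => hnear _ ⟨ζ, mem_closedBall_zero_iff.2 hζ, rfl⟩⟩

lemma Modification.refl (hf : Adm X f) (hε : 0 < ε) : Modification X ψ r ε f f :=
  ⟨hf, rfl, rfl, fun ζ _ => by simpa using hε, fun ζ _ => by linarith⟩

lemma Modification.trans (h₁ : Modification X ψ r ε₁ f F) (h₂ : Modification X ψ r ε₂ F G) :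
    Modification X ψ r (ε₁ + ε₂) f G where
  adm := h₂.adm
  apply_zero := h₂.apply_zero.trans h₁.apply_zero
  deriv_zero := h₂.deriv_zero.trans h₁.deriv_zero
  norm_sub_lt ζ hζ := by
    linarith [norm_sub_le_norm_sub_add_norm_sub (G ζ) (F ζ) (f ζ), h₁.norm_sub_lt ζ hζ,
      h₂.norm_sub_lt ζ hζ]
  sub_le ζ hζ := by linarith [h₁.sub_le ζ hζ, h₂.sub_le ζ hζ]

lemma Modification.mono (h : Modification X ψ r ε₁ f F) (hε : ε₁ ≤ ε₂) :
    Modification X ψ r ε₂ f F :=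
  { h with
    norm_sub_lt := fun ζ hζ => (h.norm_sub_lt ζ hζ).trans_le hε
    sub_le := fun ζ hζ => by linarith [h.sub_le ζ hζ] }

end Modification

section Step

variable {E : Type*} [NormedAddCommGroup E] [NormedSpace ℂ E]

lemma deriv_add_sq_smul {f g : ℂ → E} (hf : Differentiable ℂ f) (hg : Differentiable ℂ g) :
    deriv (fun ζ => f ζ + ζ ^ 2 • g ζ) 0 = deriv f 0 :=
  (((hf 0).hasDerivAt.add (((hasDerivAt_id (0 : ℂ)).pow 2).smul (hg 0).hasDerivAt)).congr_deriv
    (by simp)).deriv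

lemma norm_quad_sub_le (z a b : E) {η : ℂ} (hη : ‖η‖ ≤ 1) :
    ‖quad z a b η - z‖ ≤ ‖η‖ * (‖a‖ + ‖b‖) :=
  calc ‖quad z a b η - z‖ = ‖η • (a + η • b)‖ := by
        congr 1; simp only [quad, smul_add, smul_smul, pow_two]; abel
    _ ≤ ‖η‖ * (‖a‖ + ‖b‖) := by
        rw [norm_smul]
        gcongr
        exact norm_add_le_of_le le_rfl ((norm_smul_le _ _).trans
          (mul_le_of_le_one_left (norm_nonneg b) hη))

variable {X : Set E} {φ : E → ℝ}

lemma PushField.exists_uniform_nhd {W B : E → E} {κ : E → ℝ} {C : ℝ} (h : PushField φ X W B κ C)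
    (hX : IsOpen X) (hφ : ContinuousOn φ X) {f : ℂ → E} (hf : Adm X f) {ε : ℝ} (hε : 0 < ε) :
    ∃ δ > 0, ∀ ζ η : ℂ, ‖ζ‖ ≤ 1 → ‖η‖ ≤ 1 → ∀ y, ‖y - quad (f ζ) (W (f ζ)) (B (f ζ)) η‖ < δ →
      y ∈ X ∧ φ (f ζ) + κ (f ζ) * ‖η‖ ^ 2 - ε < φ y := by
  have hfc := hf.differentiable.continuous
  have hcont : Continuous fun x : ℂ × ℂ => quad (f x.1) (W (f x.1)) (B (f x.1)) x.2 :=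
    ((hfc.comp continuous_fst).add
      (continuous_snd.smul ((h.continuous_linear.comp hfc).comp continuous_fst))).add
      ((continuous_snd.pow 2).smul ((h.continuous_quadratic.comp hfc).comp continuous_fst))
  obtain ⟨δ, hδ, hnhd⟩ := exists_uniform_nhd_of_isCompact hX hφ
    (((isCompact_closedBall (0 : ℂ) 1).prod (isCompact_closedBall (0 : ℂ) 1)).image hcont) (by
      rintro _ ⟨⟨ζ, η⟩, ⟨hζ, hη⟩, rfl⟩
      exact h.mem _ (hf.mem ζ (by simpa using hζ)) η (by simpa using hη)) hε
  refine ⟨δ, hδ, fun ζ η hζ hη y hy => ?_⟩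
  obtain ⟨hmem, hlow⟩ := hnhd _
    ⟨(ζ, η), ⟨mem_closedBall_zero_iff.2 hζ, mem_closedBall_zero_iff.2 hη⟩, rfl⟩ y hy
  exact ⟨hmem, by linarith [h.add_le _ (hf.mem ζ hζ) _ hη]⟩

variable [FiniteDimensional ℂ E]

lemma eventually_exists_differentiable_norm_sub_quad_le {f a b : ℂ → E}
    (hf : Differentiable ℂ f) (ha : ContinuousOn a (closedBall 0 1))
    (hb : ContinuousOn b (closedBall 0 1)) {ε : ℝ} (hε : 0 < ε) :
    ∀ᶠ N : ℕ in atTop, ∃ F : ℂ → E, Differentiable ℂ F ∧ F 0 = f 0 ∧ deriv F 0 = deriv f 0 ∧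
      ∀ ζ, ‖ζ‖ ≤ 1 → ‖F ζ - quad (f ζ) (a ζ) (b ζ) (ζ ^ (N + 2))‖ ≤ ε := by
  have hexp : Tendsto (fun N : ℕ => 2 * N + 2) atTop atTop :=
    tendsto_atTop_mono (fun N => by simp only [id]; omega) tendsto_id
  filter_upwards [eventually_exists_differentiable_norm_sub_pow_smul_le ha (half_pos hε),
    hexp.eventually (eventually_exists_differentiable_norm_sub_pow_smul_le hb (half_pos hε))]
    with N ⟨p, hp, hpa⟩ ⟨q, hq, hqb⟩
  refine ⟨fun ζ => f ζ + ζ ^ 2 • (p ζ + q ζ), by fun_prop, by simp,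
    deriv_add_sq_smul hf (hp.add hq), fun ζ hζ => ?_⟩
  have hfactor : f ζ + ζ ^ 2 • (p ζ + q ζ) - quad (f ζ) (a ζ) (b ζ) (ζ ^ (N + 2))
      = ζ ^ 2 • ((p ζ - ζ ^ N • a ζ) + (q ζ - ζ ^ (2 * N + 2) • b ζ)) := by
    rw [quad, ← pow_mul, show (N + 2) * 2 = 2 + (2 * N + 2) by ring, add_comm N 2, pow_add,
      pow_add, mul_smul, mul_smul]
    module
  rw [hfactor, norm_smul, norm_pow]
  calc _ ≤ 1 * (ε / 2 + ε / 2) := by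
        gcongr
        · exact pow_le_one₀ (norm_nonneg ζ) hζ
        · exact norm_add_le_of_le (hpa ζ hζ) (hqb ζ hζ)
    _ = ε := by ring

lemma PushField.exists_step {W B : E → E} {κ : E → ℝ} {C : ℝ} (h : PushField φ X W B κ C)
    (hX : IsOpen X) (hφ : ContinuousOn φ X) {f : ℂ → E} (hf : Adm X f) {r ε : ℝ} (hr : r < 1)
    (hε : 0 < ε) :
    ∃ F, Modification X φ r ε f F ∧ (∀ ζ, ‖ζ‖ = 1 → φ (f ζ) + κ (f ζ) - ε ≤ φ (F ζ)) ∧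
      ∀ ζ, ‖ζ‖ ≤ 1 → ‖F ζ - f ζ‖ ≤ C + ε := by
  have hC : 0 ≤ C := (add_nonneg (norm_nonneg _) (norm_nonneg _)).trans (h.bound (f 0))
  obtain ⟨δ, hδ, hnhd⟩ := h.exists_uniform_nhd hX hφ hf hε
  have hsmall : ∀ᶠ N : ℕ in atTop, max r 0 ^ (N + 2) * C < ε / 2 := by
    have := (((tendsto_pow_atTop_nhds_zero_of_lt_one (le_max_right r 0)
      (max_lt hr one_pos)).comp (tendsto_add_atTop_nat 2)).mul_const C)
    exact this.eventually_lt_const (by simpa using hε)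
  obtain ⟨N, ⟨F, hF, hF0, hF1, hFquad⟩, hN⟩ :=
    ((eventually_exists_differentiable_norm_sub_quad_le hf.differentiable
      (h.continuous_linear.comp hf.differentiable.continuous).continuousOn
      (h.continuous_quadratic.comp hf.differentiable.continuous).continuousOn
      (lt_min (half_pos hδ) (half_pos hε))).and hsmall).exists
  have hpow : ∀ ζ : ℂ, ‖ζ‖ ≤ 1 → ‖ζ ^ (N + 2)‖ ≤ 1 := fun ζ hζ => by
    rw [norm_pow]; exact pow_le_one₀ (norm_nonneg _) hζ
  have hpush : ∀ ζ, ‖ζ‖ ≤ 1 →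
      F ζ ∈ X ∧ φ (f ζ) + κ (f ζ) * ‖ζ ^ (N + 2)‖ ^ 2 - ε < φ (F ζ) := fun ζ hζ =>
    hnhd ζ _ hζ (hpow ζ hζ) _ (((hFquad ζ hζ).trans (min_le_left _ _)).trans_lt (half_lt_self hδ))
  have hdist : ∀ ζ, ‖ζ‖ ≤ 1 → ‖F ζ - f ζ‖ ≤ ε / 2 + ‖ζ‖ ^ (N + 2) * C := fun ζ hζ =>
    (norm_sub_le_norm_sub_add_norm_sub _ _ _).trans (add_le_add
      ((hFquad ζ hζ).trans (min_le_right _ _)) ((norm_quad_sub_le _ _ _ (hpow ζ hζ)).trans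
        (by rw [norm_pow]; gcongr; exact h.bound _)))
  refine ⟨F, ⟨⟨hF, fun ζ hζ => (hpush ζ hζ).1⟩, hF0, hF1, fun ζ hζ => ?_, fun ζ hζ => ?_⟩,
    fun ζ hζ => by simpa [hζ] using (hpush ζ hζ.le).2.le, fun ζ hζ => ?_⟩
  · have hζr : ‖ζ‖ ≤ max r 0 := hζ.trans (le_max_left _ _)
    calc ‖F ζ - f ζ‖ ≤ ε / 2 + ‖ζ‖ ^ (N + 2) * C :=
          hdist ζ (hζr.trans (max_lt hr one_pos).le)
      _ ≤ ε / 2 + max r 0 ^ (N + 2) * C := by gcongr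
      _ < ε := by linarith
  · linarith [(hpush ζ hζ).2, mul_nonneg (h.gain_nonneg (f ζ)) (sq_nonneg ‖ζ ^ (N + 2)‖)]
  · have := mul_le_of_le_one_left hC (pow_le_one₀ (norm_nonneg ζ) hζ (n := N + 2))
    linarith [hdist ζ hζ]

end Step

section Round

variable {E : Type*} [NormedAddCommGroup E] [NormedSpace ℂ E] [FiniteDimensional ℂ E]
  {X : Set E} {φ : E → ℝ}

lemma exists_multi_step {ι : Type*} {W B : ι → E → E} {κ : ι → E → ℝ} {C : ι → ℝ}
    (hX : IsOpen X) (hφ : ContinuousOn φ X) {t : Finset ι}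
    (h : ∀ i ∈ t, PushField φ X (W i) (B i) (κ i) (C i)) {d : ℝ} (hd : 0 < d)
    (hC : ∀ i ∈ t, C i ≤ d) {f : ℂ → E} (hf : Adm X f) {r : ℝ} (hr : r < 1) :
    ∀ ε > 0, ∃ F, Modification X φ r ε f F ∧
      (∀ ζ, ‖ζ‖ = 1 → ∀ i ∈ t, ∃ y, ‖y - f ζ‖ ≤ t.card * (2 * d) ∧
        φ (f ζ) + κ i y - ε ≤ φ (F ζ)) ∧
      ∀ ζ, ‖ζ‖ ≤ 1 → ‖F ζ - f ζ‖ ≤ t.card * (2 * d) := by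
  classical
  induction t using Finset.induction_on with
  | empty => exact fun ε hε => ⟨f, .refl hf hε, by simp, by simp⟩
  | insert i t hi ih =>
    intro ε hε
    obtain ⟨F, hF, hgain, hdist⟩ := ih (fun j hj => h j (Finset.mem_insert_of_mem hj))
      (fun j hj => hC j (Finset.mem_insert_of_mem hj)) (ε / 2) (half_pos hε)
    obtain ⟨G, hG, hgain', hdist'⟩ := (h i (Finset.mem_insert_self i t)).exists_step hX hφ
      hF.adm hr (lt_min (half_pos hε) hd)
    have hG' := hG.mono (min_le_left (ε / 2) d)
    have hCi := hC i (Finset.mem_insert_self i t)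
    rw [Finset.card_insert_of_notMem hi]
    push_cast
    refine ⟨G, (hF.trans hG').mono (add_halves ε).le, fun ζ hζ j hj => ?_, fun ζ hζ => ?_⟩
    · rcases Finset.mem_insert.1 hj with rfl | hj
      · exact ⟨F ζ, by linarith [hdist ζ hζ.le],
          by linarith [hgain' ζ hζ, hF.sub_le ζ hζ.le, min_le_left (ε / 2) d]⟩
      · obtain ⟨y, hy, hy'⟩ := hgain ζ hζ j hj
        exact ⟨y, by linarith, by linarith [hG'.sub_le ζ hζ.le]⟩
    · linarith [norm_sub_le_norm_sub_add_norm_sub (G ζ) (F ζ) (f ζ), hdist ζ hζ, hdist' ζ hζ,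
        min_le_right (ε / 2) d]

lemma exists_pushField_cover (hX : IsOpen X) (hφ : ∀ z ∈ X, ContDiffAt ℝ 2 φ z) {K : Set E}
    (hK : IsCompact K) (hKX : K ⊆ X) (hreg : ∀ z ∈ K, Regular φ z) :
    ∃ (W B : K → E → E) (κ : K → E → ℝ) (C : K → ℝ) (t : Finset K), ∃ μ > 0,
      (∀ i, PushField φ X (W i) (B i) (κ i) (C i)) ∧
        ∀ z ∈ K, ∃ i ∈ t, ∀ y, ‖y - z‖ < μ → μ ≤ κ i y := by
  choose W B κ C hpush hpos using fun z : K => exists_pushField hX hφ (hKX z.2) (hreg z z.2)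
  have hball : ∀ z : K, ∃ δ > 0, ∀ y ∈ ball (z : E) (2 * δ), δ ≤ κ z y := by
    intro z
    obtain ⟨δ, hδ, h⟩ := eventually_nhds_iff_ball.1
      ((hpush z).continuous_gain.continuousAt.eventually_const_lt (half_lt_self (hpos z)))
    refine ⟨min (δ / 2) (κ z z / 2), lt_min (half_pos hδ) (half_pos (hpos z)), fun y hy => ?_⟩
    refine (min_le_right _ _).trans (h y (ball_subset_ball ?_ hy)).le
    linarith [min_le_left (δ / 2) (κ z z / 2)]
  choose δ hδ hδκ using hball
  obtain ⟨t, ht⟩ := hK.elim_finite_subcover (fun z : K => ball (z : E) (δ z))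
    (fun z => isOpen_ball) (fun z hz => mem_iUnion.2 ⟨⟨z, hz⟩, mem_ball_self (hδ _)⟩)
  obtain ⟨μ, hμ, hμ0⟩ := (((Filter.eventually_all_finset t).2 fun i _ =>
    (ge_mem_nhds (hδ i)).filter_mono nhdsWithin_le_nhds).and
    (self_mem_nhdsWithin (s := Ioi (0 : ℝ)))).exists
  refine ⟨W, B, κ, C, t, μ, hμ0, hpush, fun z hz => ?_⟩
  obtain ⟨i, hi, hzi⟩ := mem_iUnion₂.1 (ht hz)
  refine ⟨i, hi, fun y hy => (hμ i hi).trans (hδκ i y ?_)⟩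
  rw [mem_ball] at hzi ⊢
  linarith [dist_triangle y z i, hμ i hi, dist_eq_norm y z]

lemma exists_round (hX : IsOpen X) (hφ : ∀ z ∈ X, ContDiffAt ℝ 2 φ z) {K : Set E}
    (hK : IsCompact K) (hKX : K ⊆ X) (hreg : ∀ z ∈ K, Regular φ z) :
    ∃ δ > 0, ∀ f, Adm X f → ∀ r < 1, ∀ ε > 0, ∃ F, Modification X φ r ε f F ∧
      ∀ ζ, ‖ζ‖ = 1 → f ζ ∈ K → φ (f ζ) + δ ≤ φ (F ζ) := by
  have hφc : ContinuousOn φ X := fun z hz => (hφ z hz).continuousAt.continuousWithinAt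
  obtain ⟨W, B, κ, C, t, μ, hμ, hpush, hcover⟩ := exists_pushField_cover hX hφ hK hKX hreg
  set d := μ / (2 * (t.card + 1)) with hd
  have hd0 : 0 < d := by positivity
  have hscale : ∀ᶠ s : ℝ in 𝓝[>] 0, (∀ i ∈ t, s * C i ≤ d) ∧ s ≤ 1 := by
    refine Eventually.filter_mono nhdsWithin_le_nhds
      (((Filter.eventually_all_finset t).2 fun i _ => ?_).and (ge_mem_nhds one_pos))
    exact ((continuous_mul_const (C i)).continuousAt.eventually_lt_const
      (by simpa using hd0)).mono fun _ => le_of_lt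
  obtain ⟨s, ⟨hsC, hs1⟩, hs0⟩ := (hscale.and self_mem_nhdsWithin).exists
  have hs0 : 0 < s := hs0
  refine ⟨s ^ 2 * μ / 2, by positivity, fun f hf r hr ε hε => ?_⟩
  obtain ⟨F, hF, hgain, -⟩ := exists_multi_step hX hφc (fun i _ => (hpush i).scale hs0.le hs1)
    hd0 hsC hf hr (min ε (s ^ 2 * μ / 2)) (by positivity)
  refine ⟨F, hF.mono (min_le_left _ _), fun ζ hζ hfK => ?_⟩
  obtain ⟨i, hi, hκ⟩ := hcover _ hfK
  obtain ⟨y, hy, hFy⟩ := hgain ζ hζ i hi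
  have hyμ : ‖y - f ζ‖ < μ := by
    refine hy.trans_lt ?_
    calc (t.card : ℝ) * (2 * d) < (t.card + 1) * (2 * d) := by gcongr; exact lt_add_one _
      _ = μ := by rw [hd]; field_simp
  have := mul_le_mul_of_nonneg_left (hκ y hyμ) (sq_nonneg s)
  linarith [min_le_right ε (s ^ 2 * μ / 2)]

lemma exists_modification_of_regular (hX : IsOpen X) (hφ : ∀ z ∈ X, ContDiffAt ℝ 2 φ z)
    {a b b' : ℝ} (hab : a ≤ b) (hbb' : b < b') (hK : IsCompact {z ∈ X | a ≤ φ z ∧ φ z ≤ b'})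
    (hreg : ∀ z ∈ X, a ≤ φ z → φ z ≤ b' → Regular φ z) {f : ℂ → E} (hf : Adm X f)
    (hfa : ∀ ζ, ‖ζ‖ = 1 → a ≤ φ (f ζ)) {r ε : ℝ} (hr : r < 1) (hε : 0 < ε) :
    ∃ F, Modification X φ r ε f F ∧ ∀ ζ, ‖ζ‖ = 1 → b ≤ φ (F ζ) := by
  obtain ⟨δ, hδ, hround⟩ := exists_round hX hφ hK (fun z hz => hz.1)
    (fun z hz => hreg z hz.1 hz.2.1 hz.2.2)
  have hiter : ∀ k : ℕ, ∀ ε > 0, ∃ F, Modification X φ r ε f F ∧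
      ∀ ζ, ‖ζ‖ = 1 → min (a + k * δ) b ≤ φ (F ζ) := by
    intro k
    induction k with
    | zero => exact fun ε hε => ⟨f, .refl hf hε, fun ζ hζ =>
        (min_le_left _ _).trans (by simpa using hfa ζ hζ)⟩
    | succ k ih =>
      intro ε hε
      obtain ⟨F, hF, hFk⟩ := ih (ε / 2) (half_pos hε)
      obtain ⟨G, hG, hFG⟩ := hround F hF.adm r hr (min (ε / 2) (b' - b))
        (lt_min (half_pos hε) (sub_pos.2 hbb'))
      refine ⟨G, (hF.trans (hG.mono (min_le_left _ _))).mono (add_halves ε).le, fun ζ hζ => ?_⟩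
      have haF : a ≤ φ (F ζ) :=
        (le_min (le_add_of_nonneg_right (by positivity)) hab).trans (hFk ζ hζ)
      rcases le_or_gt (φ (F ζ)) b' with hFb | hFb
      · calc min (a + (k + 1 : ℕ) * δ) b ≤ min (a + k * δ) b + δ := by
              rw [← min_add_add_right]
              push_cast
              exact min_le_min (by linarith) (by linarith)
          _ ≤ φ (F ζ) + δ := by gcongr; exact hFk ζ hζ
          _ ≤ φ (G ζ) := hFG ζ hζ ⟨hF.adm.mem ζ hζ.le, haF, hFb⟩
      · exact (min_le_right _ _).trans
          (by linarith [hG.sub_le ζ hζ.le, min_le_right (ε / 2) (b' - b)])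
  obtain ⟨k, hk⟩ := exists_nat_ge ((b - a) / δ)
  obtain ⟨F, hF, hFk⟩ := hiter k ε hε
  rw [div_le_iff₀ hδ] at hk
  exact ⟨F, hF, fun ζ hζ => by
    rw [← min_eq_right (show b ≤ a + k * δ by linarith)]
    exact hFk ζ hζ⟩

end Round

/-! ### A cutoff with small logarithmic derivatives -/

section LogCutoff

open Real

/-- A `C²` cutoff, equal to `1` up to `τ` and to `0` from `R` on, whose derivatives are at most `δ`
in the scale-invariant sense. -/
structure IsLogCutoff (δ τ R : ℝ) (g : ℝ → ℝ) : Prop where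
  contDiff : ContDiff ℝ 2 g
  nonneg : ∀ t, 0 ≤ g t
  le_one : ∀ t, g t ≤ 1
  antitone : Antitone g
  eq_one : ∀ t ≤ τ, g t = 1
  eq_zero : ∀ t ≥ R, g t = 0
  abs_mul_deriv_le : ∀ t, |t * deriv g t| ≤ δ
  abs_sq_mul_deriv_deriv_le : ∀ t, |t ^ 2 * deriv (deriv g) t| ≤ δ

lemma deriv_eq_zero_of_forall_le_eq_one {g : ℝ → ℝ} {τ t : ℝ} (hg : ∀ t ≤ τ, g t = 1)
    (ht : t < τ) : deriv g t = 0 ∧ deriv (deriv g) t = 0 := by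
  have h₀ : g =ᶠ[𝓝 t] fun _ => 1 := by
    filter_upwards [gt_mem_nhds ht] with s hs using hg s hs.le
  have h₁ : deriv g =ᶠ[𝓝 t] fun _ => 0 := by simpa using h₀.deriv
  exact ⟨h₁.self_of_nhds, by simpa using h₁.deriv_eq⟩

lemma exists_abs_deriv_smoothTransition_le :
    ∃ K, ∀ x, |deriv smoothTransition x| ≤ K ∧ |deriv (deriv smoothTransition) x| ≤ K := by
  have hS : ContDiff ℝ 2 smoothTransition := smoothTransition.contDiff
  have hS' : ContDiff ℝ 1 (deriv smoothTransition) := ((contDiff_succ_iff_deriv (n := 1)).1 hS).2.2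
  have hsupp : HasCompactSupport (deriv smoothTransition) := by
    refine .intro (isCompact_Icc (a := (0 : ℝ)) (b := 1)) fun x hx => ?_
    rcases not_and_or.1 hx with h | h
    · have : smoothTransition =ᶠ[𝓝 x] fun _ => 0 := by
        filter_upwards [gt_mem_nhds (not_le.1 h)] with y hy
          using smoothTransition.zero_of_nonpos hy.le
      simpa using this.deriv_eq
    · have : smoothTransition =ᶠ[𝓝 x] fun _ => 1 := by
        filter_upwards [lt_mem_nhds (not_le.1 h)] with y hy
          using smoothTransition.one_of_one_le hy.le
      simpa using this.deriv_eq
  obtain ⟨K₁, hK₁⟩ := hS'.continuous.bounded_above_of_compact_support hsupp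
  obtain ⟨K₂, hK₂⟩ :=
    (hS'.continuous_deriv le_rfl).bounded_above_of_compact_support hsupp.deriv
  exact ⟨max K₁ K₂, fun x => ⟨(hK₁ x).trans (le_max_left _ _), (hK₂ x).trans (le_max_right _ _)⟩⟩

lemma mul_deriv_comp_log {S : ℝ → ℝ} (hS : ContDiff ℝ 2 S) (a e : ℝ) {t : ℝ} (ht : 0 < t) :
    t * deriv (fun t => S (a + e * log t)) t = e * deriv S (a + e * log t) ∧
      t ^ 2 * deriv (deriv fun t => S (a + e * log t)) t =
        e ^ 2 * deriv (deriv S) (a + e * log t) - e * deriv S (a + e * log t) := by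
  have hS' : ContDiff ℝ 1 (deriv S) := ((contDiff_succ_iff_deriv (n := 1)).1 hS).2.2
  have hlog : ∀ s > 0, HasDerivAt (fun t => a + e * log t) (e * s⁻¹) s := fun s hs =>
    ((hasDerivAt_log hs.ne').const_mul e).const_add a
  have h₁ : ∀ s > 0, HasDerivAt (fun t => S (a + e * log t))
      (deriv S (a + e * log s) * (e * s⁻¹)) s := fun s hs =>
    ((hS.differentiable two_ne_zero).differentiableAt.hasDerivAt).comp s (hlog s hs)
  have heq : deriv (fun t => S (a + e * log t)) =ᶠ[𝓝 t]
      fun s => deriv S (a + e * log s) * (e * s⁻¹) := by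
    filter_upwards [lt_mem_nhds ht] with s hs using (h₁ s hs).deriv
  have h₂ := (((hS'.differentiable one_ne_zero).differentiableAt.hasDerivAt).comp t
    (hlog t ht)).mul ((hasDerivAt_inv ht.ne').const_mul e)
  have h₂' : deriv (deriv fun t => S (a + e * log t)) t = _ := heq.deriv_eq.trans h₂.deriv
  rw [(h₁ t ht).deriv, h₂']
  constructor
  · field_simp
  · simp only [Function.comp_apply]
    field_simp
    ring

/-- A fixed transition function of `e * log t`, truncated below `R * exp (-1 / e)`: as `e` tends to
`0`, so do its derivatives with respect to `log t`. -/
noncomputable def logCutoff (e R t : ℝ) : ℝ :=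
  1 - smoothTransition (1 - e * log R + e * log (max t (R * exp (-1 / e))))

variable {e R : ℝ}

lemma logCutoff_eq_one (he : 0 < e) (hR : 0 < R) : ∀ t ≤ R * exp (-1 / e), logCutoff e R t = 1 := by
  intro t ht
  have hlog : log (R * exp (-1 / e)) = log R - 1 / e := by
    rw [log_mul hR.ne' (exp_ne_zero _), log_exp]; ring
  rw [logCutoff, max_eq_right ht, hlog, smoothTransition.zero_of_nonpos, sub_zero]
  field_simp
  simp

lemma logCutoff_eventuallyEq (he : 0 < e) (hR : 0 < R) {t : ℝ} (ht : 0 < t) :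
    logCutoff e R =ᶠ[𝓝 t] fun s => 1 - smoothTransition (1 - e * log R + e * log s) := by
  filter_upwards [lt_mem_nhds ht] with s hs
  rcases le_total s (R * exp (-1 / e)) with hsτ | hsτ
  · have hone := logCutoff_eq_one he hR s hsτ
    rw [hone, eq_comm, sub_eq_self]
    refine smoothTransition.zero_of_nonpos (le_trans ?_ (smoothTransition.zero_iff_nonpos.1
      (sub_eq_self.1 (logCutoff_eq_one he hR _ le_rfl))))
    rw [max_self]
    gcongr
  · rw [logCutoff, max_eq_left hsτ]

lemma contDiff_logCutoff (he : 0 < e) (hR : 0 < R) : ContDiff ℝ 2 (logCutoff e R) := by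
  refine contDiff_iff_contDiffAt.2 fun t => ?_
  rcases lt_or_ge t (R * exp (-1 / e)) with ht | ht
  · refine contDiffAt_const (c := 1).congr_of_eventuallyEq ?_
    filter_upwards [gt_mem_nhds ht] with s hs using logCutoff_eq_one he hR s hs.le
  · have ht0 : 0 < t := lt_of_lt_of_le (by positivity) ht
    have hu : ContDiffAt ℝ 2 (fun s => 1 - e * log R + e * log s) t :=
      contDiffAt_const.add (contDiffAt_const.mul (contDiffAt_log.2 ht0.ne'))
    exact (contDiffAt_const.sub (smoothTransition.contDiffAt.comp t hu)).congr_of_eventuallyEq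
      (logCutoff_eventuallyEq he hR ht0)

lemma abs_mul_deriv_logCutoff_le {K : ℝ} (hK : ∀ x, |deriv smoothTransition x| ≤ K ∧
    |deriv (deriv smoothTransition) x| ≤ K) (he : 0 < e) (he1 : e ≤ 1) (hR : 0 < R) {t : ℝ}
    (ht : 0 < t) :
    |t * deriv (logCutoff e R) t| ≤ 2 * K * e ∧
      |t ^ 2 * deriv (deriv (logCutoff e R)) t| ≤ 2 * K * e := by
  obtain ⟨h₁, h₂⟩ := mul_deriv_comp_log smoothTransition.contDiff (1 - e * log R) e ht
  have hd : deriv (logCutoff e R) =ᶠ[𝓝 t]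
      fun s => -deriv (fun s => smoothTransition (1 - e * log R + e * log s)) s :=
    (logCutoff_eventuallyEq he hR ht).deriv.trans (.of_eq (deriv_const_sub' 1))
  rw [hd.deriv_eq, hd.self_of_nhds, deriv.fun_neg, mul_neg, mul_neg, abs_neg, abs_neg, h₁, h₂]
  obtain ⟨hS₁, hS₂⟩ := hK (1 - e * log R + e * log t)
  have hK0 : 0 ≤ K := (abs_nonneg _).trans hS₁
  have hKe : 0 ≤ K * e := mul_nonneg hK0 he.le
  have hle₁ : |e * deriv smoothTransition (1 - e * log R + e * log t)| ≤ K * e := by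
    rw [abs_mul, abs_of_pos he, mul_comm]; gcongr
  have hle₂ : |e ^ 2 * deriv (deriv smoothTransition) (1 - e * log R + e * log t)| ≤ K * e := by
    rw [abs_mul, abs_of_pos (pow_pos he 2), mul_comm]
    gcongr
    exact pow_le_of_le_one he.le he1 two_ne_zero
  exact ⟨by linarith, (abs_sub _ _).trans (by linarith)⟩

lemma exists_isLogCutoff {δ : ℝ} (hδ : 0 < δ) (hR : 0 < R) :
    ∃ τ > 0, ∃ g, IsLogCutoff δ τ R g := by
  obtain ⟨K, hK⟩ := exists_abs_deriv_smoothTransition_le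
  have hK0 : 0 ≤ K := (abs_nonneg _).trans (hK 0).1
  obtain ⟨e, he0, he1, heK⟩ : ∃ e > 0, e ≤ 1 ∧ 2 * K * e ≤ δ :=
    ⟨min 1 (δ / (2 * K + 1)), by positivity, min_le_left _ _, by
      calc _ ≤ (2 * K + 1) * (δ / (2 * K + 1)) := by
            gcongr; exacts [by simp, min_le_right _ _]
        _ = δ := by field_simp⟩
  have hτ : 0 < R * exp (-1 / e) := by positivity
  have hone := logCutoff_eq_one he0 hR
  have hderiv : ∀ t, |t * deriv (logCutoff e R) t| ≤ δ ∧
      |t ^ 2 * deriv (deriv (logCutoff e R)) t| ≤ δ := fun t => by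
    rcases le_or_gt t 0 with ht | ht
    · simp [deriv_eq_zero_of_forall_le_eq_one hone (ht.trans_lt hτ), hδ.le]
    · exact (abs_mul_deriv_logCutoff_le hK he0 he1 hR ht).imp (·.trans heK) (·.trans heK)
  refine ⟨_, hτ, logCutoff e R, contDiff_logCutoff he0 hR,
    fun t => sub_nonneg.2 (smoothTransition.le_one _),
    fun t => sub_le_self _ (smoothTransition.nonneg _), fun s t hst => ?_, hone, fun t ht => ?_,
    fun t => (hderiv t).1, fun t => (hderiv t).2⟩
  · have : 0 < max s (R * exp (-1 / e)) := lt_max_of_lt_right hτ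
    unfold logCutoff
    gcongr
    refine smoothTransition.monotone ?_
    gcongr
  · rw [logCutoff, smoothTransition.one_of_one_le, sub_self]
    have : e * log R ≤ e * log (max t (R * exp (-1 / e))) := by
      gcongr; exact ht.trans (le_max_left _ _)
    linarith

end LogCutoff

/-! ### Nondegenerate symmetric bilinear forms -/

section Reflection

variable {E : Type*} [NormedAddCommGroup E] [NormedSpace ℝ E]

/-- `σ` is an `H`-self-adjoint involution with `H v (σ v) ≥ m ‖v‖ ^ 2`, for a symmetric form `H`:
the form is positive on the fixed space of `σ` and negative on the orthogonal `-1`-eigenspace. -/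
structure IsPosReflection (H : E →L[ℝ] E →L[ℝ] ℝ) (σ : E →L[ℝ] E) (m : ℝ) : Prop where
  symm : ∀ v w, H v w = H w v
  involutive : ∀ v, σ (σ v) = v
  adjoint : ∀ v w, H (σ v) w = H v (σ w)
  pos : 0 < m
  le : ∀ v, m * ‖v‖ ^ 2 ≤ H v (σ v)

variable {H : E →L[ℝ] E →L[ℝ] ℝ} {σ : E →L[ℝ] E} {m : ℝ}

namespace IsPosReflection

lemma apply_reflection_reflection (h : IsPosReflection H σ m) (v : E) :
    H (σ v) (σ v) = H v v := by
  rw [h.adjoint, h.involutive]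

lemma apply_reflection_nonneg (h : IsPosReflection H σ m) (v : E) : 0 ≤ H v (σ v) :=
  (mul_nonneg h.pos.le (sq_nonneg _)).trans (h.le v)

lemma apply_reflection_pos (h : IsPosReflection H σ m) {v : E} (hv : v ≠ 0) : 0 < H v (σ v) :=
  (mul_pos h.pos (pow_pos (norm_pos_iff.2 hv) 2)).trans_le (h.le v)

lemma apply_add_reflection (h : IsPosReflection H σ m) (v : E) :
    H (v + σ v) (σ (v + σ v)) = 2 * (H v (σ v) + H v v) := by
  simp only [map_add, add_apply, h.involutive, h.adjoint]
  ring

lemma apply_sub_reflection (h : IsPosReflection H σ m) (v : E) :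
    H (v - σ v) (σ (v - σ v)) = 2 * (H v (σ v) - H v v) := by
  simp only [map_sub, sub_apply, h.involutive, h.adjoint]
  ring

lemma abs_apply_self_le (h : IsPosReflection H σ m) (v : E) : |H v v| ≤ H v (σ v) :=
  abs_le.2 ⟨by linarith [h.apply_add_reflection v, h.apply_reflection_nonneg (v + σ v)],
    by linarith [h.apply_sub_reflection v, h.apply_reflection_nonneg (v - σ v)]⟩

lemma apply_reflection_add_apply_self_pos (h : IsPosReflection H σ m) {v : E}
    (hv : v + σ v ≠ 0) : 0 < H v (σ v) + H v v := by
  linarith [h.apply_add_reflection v, h.apply_reflection_pos hv]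

lemma apply_self_neg (h : IsPosReflection H σ m) {v : E} (hv : v + σ v = 0) (hv0 : v ≠ 0) :
    H v v < 0 := by
  have := h.apply_add_reflection v
  simp only [hv, map_zero] at this
  linarith [h.apply_reflection_pos hv0]

end IsPosReflection

lemma exists_pos_mul_norm_sq_le [FiniteDimensional ℝ E] {q : E → ℝ} (hq : Continuous q)
    (hq2 : ∀ (c : ℝ) v, q (c • v) = c ^ 2 * q v) (V : Submodule ℝ E)
    (hpos : ∀ v ∈ V, v ≠ 0 → 0 < q v) : ∃ m > 0, ∀ v ∈ V, m * ‖v‖ ^ 2 ≤ q v := by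
  have := FiniteDimensional.proper ℝ E
  have hK : IsCompact (sphere (0 : E) 1 ∩ V) :=
    (isCompact_sphere 0 1).inter_right V.closed_of_finiteDimensional
  obtain ⟨m, hm, hmq⟩ : ∃ m > 0, ∀ v ∈ sphere (0 : E) 1 ∩ V, m ≤ q v := by
    obtain ⟨m, hm0, hm⟩ := hK.exists_forall_le' hq.continuousOn (a := 0) fun v hv =>
      hpos v hv.2 (ne_zero_of_mem_unit_sphere ⟨v, hv.1⟩)
    exact ⟨m, hm0, hm⟩
  refine ⟨m, hm, fun v hv => ?_⟩
  rcases eq_or_ne v 0 with rfl | hv0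
  · simpa using (hq2 0 0).ge
  · have hunit : ‖v‖⁻¹ • v ∈ sphere (0 : E) 1 ∩ V :=
      ⟨by simp [norm_smul, hv0], V.smul_mem _ hv⟩
    have := hmq _ hunit
    rwa [hq2, inv_pow, ← div_eq_inv_mul, le_div_iff₀ (by positivity)] at this

lemma apply_eq_sum_of_iIsOrtho {R M ι : Type*} [CommRing R] [AddCommGroup M] [Module R M]
    [Fintype ι] {B : LinearMap.BilinForm R M} {b : Module.Basis ι R M} (hb : B.iIsOrtho b)
    (v w : M) : B v w = ∑ i, b.repr v i * b.repr w i * B (b i) (b i) := by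
  classical
  rw [← B.sum_repr_mul_repr_mul b v w, Finsupp.sum_fintype _ _ (by simp)]
  refine Finset.sum_congr rfl fun i _ => ?_
  rw [Finsupp.sum_fintype _ _ (by simp), Finset.sum_eq_single i
    (fun j _ hji => by simp [show B (b i) (b j) = 0 from hb hji.symm]) (by simp)]
  simp [mul_assoc]

lemma exists_isPosReflection [FiniteDimensional ℝ E] (hs : ∀ v w, H v w = H w v)
    (hn : ∀ v, H v = 0 → v = 0) : ∃ σ m, IsPosReflection H σ m := by
  let B : LinearMap.BilinForm ℝ E := (ContinuousLinearMap.coeLM ℝ).comp (H : E →ₗ[ℝ] E →L[ℝ] ℝ)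
  obtain ⟨b, hb⟩ := LinearMap.BilinForm.exists_orthogonal_basis (B := B)
    ⟨fun v w => by simpa [B] using hs v w⟩
  have hH : ∀ v w, H v w = ∑ i, b.repr v i * b.repr w i * H (b i) (b i) :=
    apply_eq_sum_of_iIsOrtho hb
  have hb0 : ∀ i, H (b i) (b i) ≠ 0 := fun i hi => b.ne_zero i <| hn _ <| by
    ext w
    rw [hH, Finset.sum_eq_single i (fun j _ hji => by simp [hji.symm]) (by simp)]
    simp [hi]
  let s : Fin (Module.finrank ℝ E) → ℝ := fun i => SignType.sign (H (b i) (b i))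
  let σ : E →L[ℝ] E := LinearMap.toContinuousLinearMap (b.constr ℝ fun i => s i • b i)
  have hσ : ∀ v i, b.repr (σ v) i = s i * b.repr v i := fun v i => by
    simp [σ, Module.Basis.constr_apply_fintype, Finsupp.single_apply, mul_comm]
  have hs2 : ∀ i, s i * s i = 1 := fun i => by
    rcases (hb0 i).lt_or_gt with h | h <;> simp [s, h]
  have hpos : ∀ v ∈ (⊤ : Submodule ℝ E), v ≠ 0 → 0 < H v (σ v) := by
    intro v _ hv
    obtain ⟨i, hi⟩ : ∃ i, b.repr v i ≠ 0 := by
      by_contra! h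
      exact hv (b.ext_elem fun i => by simp [h i])
    have hterm : ∀ j, b.repr v j * b.repr (σ v) j * H (b j) (b j) =
        b.repr v j ^ 2 * |H (b j) (b j)| := fun j => by rw [hσ, ← sign_mul_self]; ring
    rw [hH]
    simp only [hterm]
    exact Finset.sum_pos' (fun j _ => by positivity)
      ⟨i, Finset.mem_univ i, mul_pos (sq_pos_of_ne_zero hi) (abs_pos.2 (hb0 i))⟩
  obtain ⟨m, hm, hmle⟩ := exists_pos_mul_norm_sq_le (q := fun v => H v (σ v)) (by fun_prop)
    (fun c v => by simp only [map_smul, smul_apply, smul_eq_mul]; ring) ⊤ hpos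
  refine ⟨σ, m, hs, fun v => ?_, fun v w => ?_, hm, fun v => hmle v trivial⟩
  · refine b.ext_elem fun i => ?_
    rw [hσ, hσ, ← mul_assoc, hs2, one_mul]
  · rw [hH, hH]
    simp only [hσ]
    exact Finset.sum_congr rfl fun i _ => by ring

end Reflection

/-- `E / N` has real dimension at least `2`, since `w ↦ (w, I w)` embeds the four-dimensional space
`V` in its square. -/
lemma finrank_add_two_le {E : Type*} [NormedAddCommGroup E] [NormedSpace ℂ E]
    [FiniteDimensional ℂ E] {V : Submodule ℂ E} (hV : Module.finrank ℂ V = 2)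
    {N : Submodule ℝ E} (h : ∀ w ∈ V, w ∈ N → Complex.I • w ∈ N → w = 0) :
    Module.finrank ℝ N + 2 ≤ Module.finrank ℝ E := by
  let J : E →ₗ[ℝ] E := (Complex.I • (LinearMap.id : E →ₗ[ℂ] E)).restrictScalars ℝ
  let L : V.restrictScalars ℝ →ₗ[ℝ] (E ⧸ N) × (E ⧸ N) :=
    (N.mkQ.prod (N.mkQ.comp J)).comp (V.restrictScalars ℝ).subtype
  have hinj : Function.Injective L := by
    refine LinearMap.ker_eq_bot.1 (LinearMap.ker_eq_bot'.2 fun w hw => Subtype.ext ?_)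
    obtain ⟨h₁, h₂⟩ := Prod.ext_iff.1 hw
    exact h w w.2 ((Submodule.Quotient.mk_eq_zero N).1 h₁) ((Submodule.Quotient.mk_eq_zero N).1 h₂)
  have hrank := LinearMap.finrank_le_finrank_of_injective hinj
  rw [Module.finrank_prod, show Module.finrank ℝ (V.restrictScalars ℝ) = 2 * Module.finrank ℂ V
    from finrank_real_of_complex V, hV] at hrank
  have := N.finrank_quotient_add_finrank
  omega

/-! ### Removing a critical point -/

section Derivatives

variable {E : Type*} [NormedAddCommGroup E] [NormedSpace ℝ E]

lemma differentiableAt_fderiv {u : E → ℝ} {z : E} (hu : ContDiffAt ℝ 2 u z) :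
    DifferentiableAt ℝ (fderiv ℝ u) z :=
  (hu.fderiv_right (m := 1) (by norm_num)).differentiableAt (by norm_num)

lemma eventually_differentiableAt {u : E → ℝ} {z : E} (hu : ContDiffAt ℝ 2 u z) :
    ∀ᶠ y in 𝓝 z, DifferentiableAt ℝ u y :=
  (hu.eventually (by norm_num)).mono fun _ hy => hy.differentiableAt (by norm_num)

lemma hessian_add {u v : E → ℝ} {z : E} (hu : ContDiffAt ℝ 2 u z) (hv : ContDiffAt ℝ 2 v z) :
    fderiv ℝ (fderiv ℝ fun y => u y + v y) z =
      fderiv ℝ (fderiv ℝ u) z + fderiv ℝ (fderiv ℝ v) z := by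
  have heq : fderiv ℝ (fun y => u y + v y) =ᶠ[𝓝 z] fun y => fderiv ℝ u y + fderiv ℝ v y := by
    filter_upwards [eventually_differentiableAt hu, eventually_differentiableAt hv] with y hy₁ hy₂
      using fderiv_fun_add hy₁ hy₂
  rw [heq.fderiv_eq, fderiv_fun_add (differentiableAt_fderiv hu) (differentiableAt_fderiv hv)]

lemma fderiv_comp_mul {g : ℝ → ℝ} {q ψ : E → ℝ} {z : E} (hg : DifferentiableAt ℝ g (q z))
    (hq : DifferentiableAt ℝ q z) (hψ : DifferentiableAt ℝ ψ z) :
    fderiv ℝ (fun y => g (q y) * ψ y) z =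
      g (q z) • fderiv ℝ ψ z + (ψ z * deriv g (q z)) • fderiv ℝ q z := by
  rw [mul_smul]
  exact ((hg.hasDerivAt.comp_hasFDerivAt z hq.hasFDerivAt).mul hψ.hasFDerivAt).fderiv

lemma hessian_comp_mul {g : ℝ → ℝ} {q ψ : E → ℝ} {z : E} (hg : ContDiff ℝ 2 g)
    (hq : ContDiffAt ℝ 2 q z) (hψ : ContDiffAt ℝ 2 ψ z) (h : E) :
    fderiv ℝ (fderiv ℝ fun y => g (q y) * ψ y) z h h =
      deriv (deriv g) (q z) * ψ z * fderiv ℝ q z h ^ 2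
        + deriv g (q z) * ψ z * fderiv ℝ (fderiv ℝ q) z h h
        + 2 * deriv g (q z) * fderiv ℝ q z h * fderiv ℝ ψ z h
        + g (q z) * fderiv ℝ (fderiv ℝ ψ) z h h := by
  have hq1 := (hq.differentiableAt (by norm_num)).hasFDerivAt
  have hψ1 := (hψ.differentiableAt (by norm_num)).hasFDerivAt
  have hq2 := (differentiableAt_fderiv hq).hasFDerivAt
  have hψ2 := (differentiableAt_fderiv hψ).hasFDerivAt
  have hgd := hg.differentiable (by norm_num)
  have hgd' : Differentiable ℝ (deriv g) :=
    (hg.deriv' (n := 1)).differentiable (by norm_num)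
  have heq : fderiv ℝ (fun y => g (q y) * ψ y) =ᶠ[𝓝 z] fun y =>
      g (q y) • fderiv ℝ ψ y + (ψ y * deriv g (q y)) • fderiv ℝ q y := by
    filter_upwards [eventually_differentiableAt hq, eventually_differentiableAt hψ] with y hy₁ hy₂
      using fderiv_comp_mul (hgd _) hy₁ hy₂
  have hgq := (hgd (q z)).hasDerivAt.comp_hasFDerivAt z hq1
  have hgq' := (hgd' (q z)).hasDerivAt.comp_hasFDerivAt z hq1
  rw [heq.fderiv_eq.trans ((hgq.smul hψ2).add ((hψ1.mul hgq').smul hq2)).fderiv]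
  simp only [add_apply, smul_apply, ContinuousLinearMap.smulRight_apply, Pi.mul_apply,
    Function.comp_apply, smul_eq_mul]
  ring

/-- The quadratic form with Hessian `B` and critical point `z₀`, vanishing at `z₀`. -/
noncomputable def halfQuad (B : E →L[ℝ] E →L[ℝ] ℝ) (z₀ z : E) : ℝ :=
  B (z - z₀) (z - z₀) / 2

variable {B : E →L[ℝ] E →L[ℝ] ℝ}

lemma contDiff_halfQuad (B : E →L[ℝ] E →L[ℝ] ℝ) (z₀ : E) : ContDiff ℝ 2 (halfQuad B z₀) := by
  unfold halfQuad
  fun_prop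

lemma hasFDerivAt_halfQuad (hB : ∀ v w, B v w = B w v) (z₀ z : E) :
    HasFDerivAt (halfQuad B z₀) (B (z - z₀)) z := by
  have hsub : HasFDerivAt (fun z : E => z - z₀) (ContinuousLinearMap.id ℝ E) z :=
    (hasFDerivAt_id z).sub_const z₀
  refine (((B.hasFDerivAt.comp z hsub).clm_apply hsub).mul_const 2⁻¹).congr_fderiv ?_
  ext w
  have := hB w (z - z₀)
  simp only [map_sub, sub_apply, Function.comp_apply, ContinuousLinearMap.comp_id, smul_add,
    add_apply, smul_apply, smul_eq_mul, ContinuousLinearMap.flip_apply] at this ⊢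
  linarith

lemma fderiv_halfQuad (hB : ∀ v w, B v w = B w v) (z₀ : E) :
    fderiv ℝ (halfQuad B z₀) = fun z => B (z - z₀) :=
  funext fun z => (hasFDerivAt_halfQuad hB z₀ z).fderiv

lemma hessian_halfQuad (hB : ∀ v w, B v w = B w v) (z₀ z : E) :
    fderiv ℝ (fderiv ℝ (halfQuad B z₀)) z = B := by
  rw [fderiv_halfQuad hB]
  exact (B.hasFDerivAt.comp z ((hasFDerivAt_id z).sub_const z₀)).fderiv

/-- The function `φ`, its gradient and its Hessian at `z` are within relative error `η` of those of
the quadratic form `φ z₀ + H / 2` centred at `z₀`. -/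
structure TaylorClose (φ : E → ℝ) (z₀ : E) (H : E →L[ℝ] E →L[ℝ] ℝ) (η : ℝ) (z : E) : Prop where
  contDiffAt : ContDiffAt ℝ 2 φ z
  hessian : ‖fderiv ℝ (fderiv ℝ φ) z - H‖ ≤ η
  gradient : ‖fderiv ℝ φ z - H (z - z₀)‖ ≤ η * ‖z - z₀‖
  value : |φ z - φ z₀ - halfQuad H z₀ z| ≤ η * ‖z - z₀‖ ^ 2

namespace TaylorClose

variable {φ : E → ℝ} {z₀ z : E} {H : E →L[ℝ] E →L[ℝ] ℝ} {η : ℝ}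

lemma nonneg (hz : TaylorClose φ z₀ H η z) : 0 ≤ η :=
  (ContinuousLinearMap.opNorm_nonneg _).trans hz.hessian

lemma abs_fderiv_sub_le (hz : TaylorClose φ z₀ H η z) (h : E) :
    |fderiv ℝ φ z h - H (z - z₀) h| ≤ η * ‖z - z₀‖ * ‖h‖ :=
  (fderiv ℝ φ z - H (z - z₀)).le_of_opNorm_le hz.gradient h

lemma le_hessian_apply_self (hz : TaylorClose φ z₀ H η z) (h : E) :
    H h h - η * ‖h‖ ^ 2 ≤ fderiv ℝ (fderiv ℝ φ) z h h := by
  have := (fderiv ℝ (fderiv ℝ φ) z - H).le_of_opNorm₂_le_of_le hz.hessian (le_refl ‖h‖)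
    (le_refl ‖h‖)
  rw [sub_apply, sub_apply, Real.norm_eq_abs, mul_assoc, ← sq] at this
  linarith [(abs_le.1 this).1]

end TaylorClose

lemma eventually_taylorClose {φ : E → ℝ} {z₀ : E} {H : E →L[ℝ] E →L[ℝ] ℝ} {η : ℝ}
    (hφ : ContDiffAt ℝ 2 φ z₀) (hd : fderiv ℝ φ z₀ = 0) (hH : fderiv ℝ (fderiv ℝ φ) z₀ = H)
    (hη : 0 < η) : ∀ᶠ z in 𝓝 z₀, TaylorClose φ z₀ H η z := by
  have hHs : ∀ v w, H v w = H w v := fun v w => by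
    rw [← hH]
    exact (hφ.isSymmSndFDerivAt (by simp)).eq v w
  have hD : ContDiffAt ℝ 1 (fderiv ℝ φ) z₀ := hφ.fderiv_right (by norm_num)
  have hhess : ∀ᶠ z in 𝓝 z₀, ‖fderiv ℝ (fderiv ℝ φ) z - H‖ < η := by
    have := ((hD.fderiv_right (m := 0) (by norm_num)).continuousAt.sub_const H).norm
    exact this.eventually_lt_const (by simpa [hH] using hη)
  have hgrad : ∀ᶠ z in 𝓝 z₀, ‖fderiv ℝ φ z - H (z - z₀)‖ ≤ η * ‖z - z₀‖ := by
    have := (hD.differentiableAt (by norm_num)).hasFDerivAt.isLittleO.def hη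
    simpa only [hd, hH, sub_zero] using this
  obtain ⟨R, hR, h⟩ := Metric.eventually_nhds_iff_ball.1
    ((hφ.eventually (by norm_num)).and (hhess.and hgrad))
  filter_upwards [ball_mem_nhds z₀ hR] with z hz
  refine ⟨(h z hz).1, (h z hz).2.1.le, (h z hz).2.2, ?_⟩
  have hle : ∀ y ∈ closedBall z₀ ‖z - z₀‖, y ∈ ball z₀ R := fun y hy =>
    mem_ball.2 ((mem_closedBall.1 hy).trans_lt (mem_ball_iff_norm.1 hz))
  have hder : ∀ y ∈ closedBall z₀ ‖z - z₀‖, HasFDerivWithinAt (fun y => φ y - halfQuad H z₀ y)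
      (fderiv ℝ φ y - H (y - z₀)) (closedBall z₀ ‖z - z₀‖) y := fun y hy =>
    (((h y (hle y hy)).1.differentiableAt (by norm_num)).hasFDerivAt.sub
      (hasFDerivAt_halfQuad hHs z₀ y)).hasFDerivWithinAt
  have := (convex_closedBall z₀ ‖z - z₀‖).norm_image_sub_le_of_norm_hasFDerivWithin_le hder
    (fun y hy => ((h y (hle y hy)).2.2).trans
      (mul_le_mul_of_nonneg_left (mem_closedBall_iff_norm.1 hy) hη.le))
    (mem_closedBall_self (norm_nonneg _)) (mem_closedBall_iff_norm.2 le_rfl)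
  rw [show halfQuad H z₀ z₀ = 0 by simp [halfQuad], sub_zero, Real.norm_eq_abs, mul_assoc,
    ← sq] at this
  rwa [sub_right_comm]

end Derivatives

section CrossingFunction

variable {E : Type*} [NormedAddCommGroup E] [NormedSpace ℝ E]

/-- The absolute value `|H|` of a form `H` with reflection `σ`: the sign of `H` is reversed on the
`-1`-eigenspace of `σ`. -/
noncomputable def absForm (H : E →L[ℝ] E →L[ℝ] ℝ) (σ : E →L[ℝ] E) : E →L[ℝ] E →L[ℝ] ℝ :=
  H.comp σ

/-- The positive part `(|H| + H) / 2` of a form `H` with reflection `σ`. -/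
noncomputable def posForm (H : E →L[ℝ] E →L[ℝ] ℝ) (σ : E →L[ℝ] E) : E →L[ℝ] E →L[ℝ] ℝ :=
  (2⁻¹ : ℝ) • (absForm H σ + H)

/-- The difference between the positive semidefinite model `c + posForm H σ / 2` centred at `z₀`
and `φ`. -/
noncomputable def crossingGap (φ : E → ℝ) (H : E →L[ℝ] E →L[ℝ] ℝ) (σ : E →L[ℝ] E) (z₀ : E) (c : ℝ)
    (z : E) : ℝ :=
  c + halfQuad (posForm H σ) z₀ z - φ z

/-- The correction which, added to `φ`, interpolates between `φ` and its positive semidefinite model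
`c + posForm H σ / 2` near `z₀`, with weight the function `g` of `|H|`. -/
noncomputable def crossing (φ : E → ℝ) (H : E →L[ℝ] E →L[ℝ] ℝ) (σ : E →L[ℝ] E) (z₀ : E) (c : ℝ)
    (g : ℝ → ℝ) (z : E) : ℝ :=
  g (halfQuad (absForm H σ) z₀ z) * crossingGap φ H σ z₀ c z

variable {φ : E → ℝ} {H : E →L[ℝ] E →L[ℝ] ℝ} {σ : E →L[ℝ] E} {m : ℝ} {z₀ z : E} {c D : ℝ}
  {g : ℝ → ℝ} {δ τ R η M : ℝ}

lemma posForm_apply (v w : E) : posForm H σ v w = (absForm H σ v w + H v w) / 2 := by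
  simp only [posForm, smul_apply, add_apply, smul_eq_mul]
  ring

namespace IsPosReflection

lemma absForm_apply_self (hσ : IsPosReflection H σ m) (v : E) : absForm H σ v v = H v (σ v) :=
  hσ.adjoint v v

lemma absForm_symm (hσ : IsPosReflection H σ m) (v w : E) : absForm H σ v w = absForm H σ w v :=
  (hσ.symm _ _).trans (hσ.adjoint w v).symm

lemma posForm_symm (hσ : IsPosReflection H σ m) (v w : E) : posForm H σ v w = posForm H σ w v := by
  rw [posForm_apply, posForm_apply, hσ.absForm_symm, hσ.symm]

lemma abs_apply_self_le_absForm (hσ : IsPosReflection H σ m) (v : E) :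
    |H v v| ≤ absForm H σ v v :=
  hσ.absForm_apply_self v ▸ hσ.abs_apply_self_le v

lemma le_halfQuad_absForm (hσ : IsPosReflection H σ m) (z₀ z : E) :
    m * ‖z - z₀‖ ^ 2 / 2 ≤ halfQuad (absForm H σ) z₀ z := by
  unfold halfQuad
  linarith [hσ.le (z - z₀), hσ.absForm_apply_self (z - z₀)]

lemma halfQuad_absForm_nonneg (hσ : IsPosReflection H σ m) (z₀ z : E) :
    0 ≤ halfQuad (absForm H σ) z₀ z := by
  have := hσ.pos
  exact (by positivity : 0 ≤ m * ‖z - z₀‖ ^ 2 / 2).trans (hσ.le_halfQuad_absForm z₀ z)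

end IsPosReflection

lemma contDiffAt_crossingGap (hφ : ContDiffAt ℝ 2 φ z) :
    ContDiffAt ℝ 2 (crossingGap φ H σ z₀ c) z :=
  (contDiffAt_const.add (contDiff_halfQuad _ _).contDiffAt).sub hφ

lemma contDiffAt_crossing (hg : ContDiff ℝ 2 g) (hφ : ContDiffAt ℝ 2 φ z) :
    ContDiffAt ℝ 2 (crossing φ H σ z₀ c g) z :=
  (hg.contDiffAt.comp z (contDiff_halfQuad _ _).contDiffAt).mul (contDiffAt_crossingGap hφ)

lemma fderiv_crossingGap (hσ : IsPosReflection H σ m) (hφ : DifferentiableAt ℝ φ z) :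
    fderiv ℝ (crossingGap φ H σ z₀ c) z = posForm H σ (z - z₀) - fderiv ℝ φ z :=
  (((hasFDerivAt_halfQuad hσ.posForm_symm z₀ z).const_add c).sub hφ.hasFDerivAt).fderiv

lemma hessian_crossingGap (hσ : IsPosReflection H σ m) (hφ : ContDiffAt ℝ 2 φ z) :
    fderiv ℝ (fderiv ℝ (crossingGap φ H σ z₀ c)) z = posForm H σ - fderiv ℝ (fderiv ℝ φ) z := by
  have heq : fderiv ℝ (crossingGap φ H σ z₀ c) =ᶠ[𝓝 z]
      fun y => fderiv ℝ (halfQuad (posForm H σ) z₀) y - fderiv ℝ φ y :=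
    (eventually_differentiableAt hφ).mono fun y hy => by
      rw [fderiv_crossingGap hσ hy, fderiv_halfQuad hσ.posForm_symm]
  rw [heq.fderiv_eq, fderiv_fun_sub (differentiableAt_fderiv (contDiff_halfQuad _ _).contDiffAt)
    (differentiableAt_fderiv hφ), hessian_halfQuad hσ.posForm_symm]

lemma fderiv_add_crossing (hσ : IsPosReflection H σ m) (hg : ContDiff ℝ 2 g)
    (hφ : ContDiffAt ℝ 2 φ z) (h : E) :
    fderiv ℝ (fun y => φ y + crossing φ H σ z₀ c g y) z h =
      fderiv ℝ φ z h
        + g (halfQuad (absForm H σ) z₀ z) * (posForm H σ (z - z₀) h - fderiv ℝ φ z h)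
        + deriv g (halfQuad (absForm H σ) z₀ z) * crossingGap φ H σ z₀ c z
          * absForm H σ (z - z₀) h := by
  have hd := hφ.differentiableAt (by norm_num)
  rw [fderiv_fun_add hd ((contDiffAt_crossing hg hφ).differentiableAt (by norm_num))]
  unfold crossing
  rw [fderiv_comp_mul (hg.differentiable (by norm_num) _)
    (hasFDerivAt_halfQuad hσ.absForm_symm z₀ z).differentiableAt
    ((contDiffAt_crossingGap hφ).differentiableAt (by norm_num)),
    fderiv_crossingGap hσ hd, fderiv_halfQuad hσ.absForm_symm]
  simp only [add_apply, smul_apply, sub_apply, smul_eq_mul]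
  ring

lemma hessian_add_crossing (hσ : IsPosReflection H σ m) (hg : ContDiff ℝ 2 g)
    (hφ : ContDiffAt ℝ 2 φ z) (h : E) :
    fderiv ℝ (fderiv ℝ fun y => φ y + crossing φ H σ z₀ c g y) z h h =
      fderiv ℝ (fderiv ℝ φ) z h h
        + g (halfQuad (absForm H σ) z₀ z) * (posForm H σ h h - fderiv ℝ (fderiv ℝ φ) z h h)
        + (deriv (deriv g) (halfQuad (absForm H σ) z₀ z) * crossingGap φ H σ z₀ c z
            * absForm H σ (z - z₀) h ^ 2
          + deriv g (halfQuad (absForm H σ) z₀ z) * crossingGap φ H σ z₀ c z * absForm H σ h h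
          + 2 * deriv g (halfQuad (absForm H σ) z₀ z) * absForm H σ (z - z₀) h
            * (posForm H σ (z - z₀) h - fderiv ℝ φ z h)) := by
  rw [hessian_add hφ (contDiffAt_crossing hg hφ), add_apply, add_apply]
  unfold crossing
  rw [hessian_comp_mul hg (contDiff_halfQuad _ _).contDiffAt (contDiffAt_crossingGap hφ),
    hessian_halfQuad hσ.absForm_symm, fderiv_halfQuad hσ.absForm_symm, hessian_crossingGap hσ hφ,
    fderiv_crossingGap hσ (hφ.differentiableAt (by norm_num))]
  simp only [sub_apply]
  ring

lemma crossing_gradient_pos {s q h a k : ℝ} (hs0 : 0 ≤ s) (hs1 : s ≤ 1) (hq : 0 < q)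
    (hh : |h| ≤ q) (ha : q / 2 ≤ a) (hk : |k| ≤ 1 / 4) (hneg : h ≤ 0 → k ≤ 0)
    (hone : s = 1 → 0 < q + h) : 0 < a + s * ((h + q) / 2 - a) + k * h := by
  have hh' := abs_le.1 hh
  rcases le_or_gt h 0 with h0 | h0
  · have hkh : 0 ≤ k * h := mul_nonneg_of_nonpos_of_nonpos (hneg h0) h0
    rcases hs1.lt_or_eq with hs | rfl
    · have h₁ : 0 < (1 - s) * a := mul_pos (by linarith) (by linarith)
      have h₂ : 0 ≤ s * ((h + q) / 2) := mul_nonneg hs0 (by linarith)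
      linarith
    · linarith [hone rfl]
  · have hkh : |k * h| ≤ 1 / 4 * q := by
      rw [abs_mul]
      gcongr
    have h₁ : 0 ≤ (1 - s) * (a - q / 2) := mul_nonneg (by linarith) (by linarith)
    have h₂ : 0 ≤ s * h := mul_nonneg hs0 h0.le
    linarith [(abs_le.1 hkh).1]

lemma abs_cutoff_error_le {γ γ₂ ψ t r n b a q M m δ : ℝ} (hm : 0 < m) (ht : 0 ≤ t)
    (hrt : r ^ 2 * m ≤ 2 * t) (hb : |b| ≤ M * r * n) (hq : |q| ≤ M * n ^ 2)
    (ha : |a| ≤ 2 * M * r * n) (hγψ : |γ * ψ| ≤ 2 * δ) (hγ : |t * γ| ≤ δ)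
    (hγ₂ : |γ₂ * ψ| * t ≤ 2 * δ) :
    |γ₂ * ψ * b ^ 2 + γ * ψ * q + 2 * γ * b * a| ≤ δ * (12 * M ^ 2 / m + 2 * M) * n ^ 2 := by
  have hr : r ^ 2 ≤ 2 * t / m := (le_div_iff₀ hm).2 hrt
  have hδ : 0 ≤ δ := (abs_nonneg _).trans hγ
  rw [abs_mul, abs_of_nonneg ht] at hγ
  have h₁ : |γ₂ * ψ * b ^ 2| ≤ δ * (4 * M ^ 2 / m) * n ^ 2 := by
    rw [abs_mul, abs_pow]
    calc |γ₂ * ψ| * |b| ^ 2 ≤ |γ₂ * ψ| * (M * r * n) ^ 2 := by gcongr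
      _ = |γ₂ * ψ| * (M * n) ^ 2 * r ^ 2 := by ring
      _ ≤ |γ₂ * ψ| * (M * n) ^ 2 * (2 * t / m) := by gcongr
      _ = |γ₂ * ψ| * t * (2 * M ^ 2 / m) * n ^ 2 := by ring
      _ ≤ 2 * δ * (2 * M ^ 2 / m) * n ^ 2 := by gcongr
      _ = δ * (4 * M ^ 2 / m) * n ^ 2 := by ring
  have h₂ : |γ * ψ * q| ≤ δ * (2 * M) * n ^ 2 := by
    rw [abs_mul]
    calc |γ * ψ| * |q| ≤ 2 * δ * (M * n ^ 2) := by gcongr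
      _ = δ * (2 * M) * n ^ 2 := by ring
  have h₃ : |2 * γ * b * a| ≤ δ * (8 * M ^ 2 / m) * n ^ 2 := by
    rw [abs_mul, abs_mul, abs_mul, abs_two]
    calc 2 * |γ| * |b| * |a| ≤ 2 * |γ| * (M * r * n) * (2 * M * r * n) := by
          gcongr
          exact mul_nonneg (by positivity) ((abs_nonneg _).trans hb)
      _ = 4 * |γ| * (M * n) ^ 2 * r ^ 2 := by ring
      _ ≤ 4 * |γ| * (M * n) ^ 2 * (2 * t / m) := by gcongr
      _ = (t * |γ|) * (8 * M ^ 2 / m) * n ^ 2 := by ring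
      _ ≤ δ * (8 * M ^ 2 / m) * n ^ 2 := by gcongr
  calc |γ₂ * ψ * b ^ 2 + γ * ψ * q + 2 * γ * b * a|
      ≤ δ * (4 * M ^ 2 / m) * n ^ 2 + δ * (2 * M) * n ^ 2 + δ * (8 * M ^ 2 / m) * n ^ 2 :=
        (abs_add_three _ _ _).trans (by gcongr)
    _ = δ * (12 * M ^ 2 / m + 2 * M) * n ^ 2 := by ring

lemma abs_crossingGap_sub_le (hσ : IsPosReflection H σ m) (hη : η ≤ m / 16)
    (hz : TaylorClose φ z₀ H η z) :
    |crossingGap φ H σ z₀ (φ z₀ - D) z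
        + D - (absForm H σ (z - z₀) (z - z₀) - H (z - z₀) (z - z₀)) / 4|
      ≤ halfQuad (absForm H σ) z₀ z / 8 := by
  have herr : η * ‖z - z₀‖ ^ 2 ≤ m / 16 * ‖z - z₀‖ ^ 2 := by gcongr
  have heq : crossingGap φ H σ z₀ (φ z₀ - D) z
      + D - (absForm H σ (z - z₀) (z - z₀) - H (z - z₀) (z - z₀)) / 4
      = -(φ z - φ z₀ - halfQuad H z₀ z) := by
    simp only [crossingGap, halfQuad, posForm_apply]
    ring
  rw [heq, abs_neg]
  linarith [hz.value, hσ.le_halfQuad_absForm z₀ z]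

lemma abs_crossingGap_le (hσ : IsPosReflection H σ m) (hη : η ≤ m / 16) (hD : 0 ≤ D)
    (hz : TaylorClose φ z₀ H η z) :
    |crossingGap φ H σ z₀ (φ z₀ - D) z| ≤ D + 9 / 8 * halfQuad (absForm H σ) z₀ z := by
  have h₁ := abs_le.1 (abs_crossingGap_sub_le (D := D) hσ hη hz)
  have h₂ := abs_le.1 (hσ.abs_apply_self_le_absForm (z - z₀))
  unfold halfQuad at h₁ ⊢
  exact abs_le.2 ⟨by linarith, by linarith⟩

lemma crossingGap_nonneg (hσ : IsPosReflection H σ m) (hη : η ≤ m / 16)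
    (hz : TaylorClose φ z₀ H η z) (hDt : 8 * D ≤ halfQuad (absForm H σ) z₀ z)
    (hneg : H (z - z₀) (z - z₀) ≤ 0) : 0 ≤ crossingGap φ H σ z₀ (φ z₀ - D) z := by
  have h₁ := abs_le.1 (abs_crossingGap_sub_le (D := D) hσ hη hz)
  have h₂ := hσ.halfQuad_absForm_nonneg z₀ z
  unfold halfQuad at h₁ h₂ hDt
  linarith

section Cutoff

variable (hσ : IsPosReflection H σ m) (hη : η ≤ m / 16) (hDτ : 8 * D ≤ τ)
  (hg : IsLogCutoff δ τ R g) (hz : TaylorClose φ z₀ H η z)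
include hσ hη hDτ hg hz

lemma deriv_mul_crossingGap_nonpos (hneg : H (z - z₀) (z - z₀) ≤ 0) :
    deriv g (halfQuad (absForm H σ) z₀ z) * crossingGap φ H σ z₀ (φ z₀ - D) z ≤ 0 := by
  rcases lt_or_ge (halfQuad (absForm H σ) z₀ z) τ with h | h
  · simp [(deriv_eq_zero_of_forall_le_eq_one hg.eq_one h).1]
  · exact mul_nonpos_of_nonpos_of_nonneg hg.antitone.deriv_nonpos
      (crossingGap_nonneg hσ hη hz (hDτ.trans h) hneg)

lemma abs_deriv_mul_crossingGap_le (hτ : 0 < τ) (hD : 0 ≤ D) :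
    |deriv g (halfQuad (absForm H σ) z₀ z) * crossingGap φ H σ z₀ (φ z₀ - D) z| ≤ 2 * δ ∧
    |deriv (deriv g) (halfQuad (absForm H σ) z₀ z) * crossingGap φ H σ z₀ (φ z₀ - D) z|
      * halfQuad (absForm H σ) z₀ z ≤ 2 * δ := by
  have hgap := abs_crossingGap_le hσ hη hD hz
  have hδ : 0 ≤ δ := (abs_nonneg _).trans (hg.abs_mul_deriv_le 0)
  generalize halfQuad (absForm H σ) z₀ z = t at *
  generalize crossingGap φ H σ z₀ (φ z₀ - D) z = ψ at *
  rcases lt_or_ge t τ with h | h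
  · obtain ⟨h₁, h₂⟩ := deriv_eq_zero_of_forall_le_eq_one hg.eq_one h
    simp [h₁, h₂, hδ]
  · have ht : 0 < t := hτ.trans_le h
    have hψ : |ψ| ≤ 2 * t := by linarith
    have h₁ := hg.abs_mul_deriv_le t
    have h₂ := hg.abs_sq_mul_deriv_deriv_le t
    rw [abs_mul, abs_of_pos ht] at h₁
    rw [abs_mul, abs_of_pos (by positivity)] at h₂
    rw [abs_mul, abs_mul]
    constructor
    · calc |deriv g t| * |ψ| ≤ |deriv g t| * (2 * t) := by gcongr
        _ ≤ 2 * δ := by linarith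
    · calc |deriv (deriv g) t| * |ψ| * t ≤ |deriv (deriv g) t| * (2 * t) * t := by gcongr
        _ ≤ 2 * δ := by linarith

lemma fderiv_add_crossing_reflection_pos (hτ : 0 < τ) (hησ : η * ‖σ‖ ≤ m / 2) (hδ : δ ≤ 1 / 8)
    (hD : 0 < D) (hlt : φ z₀ - D < φ z + crossing φ H σ z₀ (φ z₀ - D) g z) :
    0 < fderiv ℝ (fun y => φ y + crossing φ H σ z₀ (φ z₀ - D) g y) z (σ (z - z₀)) := by
  have hgt := hg.le_one (halfQuad (absForm H σ) z₀ z)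
  have hv : z - z₀ ≠ 0 := fun h => by
    obtain rfl := sub_eq_zero.1 h
    simp [crossing, crossingGap, halfQuad, hg.eq_one 0 hτ.le] at hlt
  have hkey : g (halfQuad (absForm H σ) z₀ z) = 1 →
      0 < H (z - z₀) (σ (z - z₀)) + H (z - z₀) (z - z₀) := fun h => by
    rw [crossing, h, crossingGap, halfQuad, posForm_apply, hσ.absForm_apply_self] at hlt
    linarith
  have hgrad : H (z - z₀) (σ (z - z₀)) / 2 ≤ fderiv ℝ φ z (σ (z - z₀)) := by
    have h₁ : η * ‖z - z₀‖ * ‖σ (z - z₀)‖ ≤ m / 2 * ‖z - z₀‖ ^ 2 := by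
      have hη0 := hz.nonneg
      calc η * ‖z - z₀‖ * ‖σ (z - z₀)‖ ≤ η * ‖z - z₀‖ * (‖σ‖ * ‖z - z₀‖) := by
            gcongr
            exact σ.le_opNorm _
        _ = η * ‖σ‖ * ‖z - z₀‖ ^ 2 := by ring
        _ ≤ m / 2 * ‖z - z₀‖ ^ 2 := by gcongr
    linarith [(abs_le.1 (hz.abs_fderiv_sub_le (σ (z - z₀)))).1, hσ.le (z - z₀)]
  rw [fderiv_add_crossing hσ hg.contDiff hz.contDiffAt, posForm_apply,
    show absForm H σ (z - z₀) (σ (z - z₀)) = H (z - z₀) (z - z₀) from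
      hσ.apply_reflection_reflection _]
  refine crossing_gradient_pos (hg.nonneg _) hgt (hσ.apply_reflection_pos hv)
    (hσ.abs_apply_self_le _) hgrad ?_ (deriv_mul_crossingGap_nonpos hσ hη hDτ hg hz) hkey
  linarith [(abs_deriv_mul_crossingGap_le hσ hη hDτ hg hz hτ hD.le).1]

lemma le_hessian_add_crossing (hτ : 0 < τ) (hD : 0 ≤ D) (hHM : ‖H‖ ≤ M) (hQM : ‖absForm H σ‖ ≤ M)
    (hηM : η ≤ M) (h : E) :
    H h h - (η + δ * (12 * M ^ 2 / m + 2 * M)) * ‖h‖ ^ 2 ≤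
      fderiv ℝ (fderiv ℝ fun y => φ y + crossing φ H σ z₀ (φ z₀ - D) g y) z h h := by
  have hη0 := hz.nonneg
  have hQv : |absForm H σ (z - z₀) h| ≤ M * ‖z - z₀‖ * ‖h‖ :=
    ((absForm H σ).le_opNorm₂ _ _).trans (by gcongr)
  have hQh : |absForm H σ h h| ≤ M * ‖h‖ ^ 2 :=
    ((absForm H σ).le_opNorm₂ _ _).trans (by rw [sq, mul_assoc]; gcongr)
  have hHv : |H (z - z₀) h| ≤ M * ‖z - z₀‖ * ‖h‖ := (H.le_opNorm₂ _ _).trans (by gcongr)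
  have hgrad : |posForm H σ (z - z₀) h - fderiv ℝ φ z h| ≤ 2 * M * ‖z - z₀‖ * ‖h‖ := by
    have h₁ : |fderiv ℝ φ z h - H (z - z₀) h| ≤ M * ‖z - z₀‖ * ‖h‖ :=
      (hz.abs_fderiv_sub_le h).trans (by gcongr)
    rw [posForm_apply]
    rw [abs_le] at h₁ hQv hHv ⊢
    constructor <;> linarith
  obtain ⟨hγ, hγ₂⟩ := abs_deriv_mul_crossingGap_le hσ hη hDτ hg hz hτ hD
  have herr := abs_cutoff_error_le hσ.pos (hσ.halfQuad_absForm_nonneg z₀ z)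
    (by linarith [hσ.le_halfQuad_absForm z₀ z]) hQv hQh hgrad hγ
    (hg.abs_mul_deriv_le _) hγ₂
  have hmain := mul_nonneg (sub_nonneg.2 (hg.le_one (halfQuad (absForm H σ) z₀ z)))
    (sub_nonneg.2 (hz.le_hessian_apply_self h))
  have hle : H h h ≤ posForm H σ h h := by
    rw [posForm_apply]
    linarith [le_of_abs_le (hσ.abs_apply_self_le_absForm h)]
  have hpos := mul_nonneg (hg.nonneg (halfQuad (absForm H σ) z₀ z))
    (by linarith [mul_nonneg hη0 (sq_nonneg ‖h‖)] :
      0 ≤ posForm H σ h h - (H h h - η * ‖h‖ ^ 2))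
  rw [hessian_add_crossing hσ hg.contDiff hz.contDiffAt]
  linarith [(abs_le.1 herr).1]

end Cutoff

lemma lt_add_crossing (hσ : IsPosReflection H σ m) (hg : IsLogCutoff δ τ R g)
    (hz : z - z₀ + σ (z - z₀) ≠ 0) (hlt : c < φ z) : c < φ z + crossing φ H σ z₀ c g z := by
  have hpos : 0 < posForm H σ (z - z₀) (z - z₀) := by
    rw [posForm_apply, hσ.absForm_apply_self]
    exact half_pos (hσ.apply_reflection_add_apply_self_pos hz)
  have h₀ := hg.nonneg (halfQuad (absForm H σ) z₀ z)
  have h₁ := hg.le_one (halfQuad (absForm H σ) z₀ z)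
  unfold crossing crossingGap
  generalize g (halfQuad (absForm H σ) z₀ z) = s at h₀ h₁
  rcases h₁.lt_or_eq with h | rfl
  · have := mul_pos (sub_pos.2 h) (sub_pos.2 hlt)
    have := mul_nonneg h₀ hpos.le
    unfold halfQuad
    linarith
  · unfold halfQuad
    linarith

lemma crossing_eq_zero {r : ℝ} (hσ : IsPosReflection H σ m)
    (hg : IsLogCutoff δ τ (m * r ^ 2 / 2) g) (hr : 0 ≤ r) (hz : z ∉ closedBall z₀ r) :
    crossing φ H σ z₀ c g z = 0 := by
  rw [mem_closedBall_iff_norm, not_le] at hz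
  have hm := hσ.pos
  rw [crossing, hg.eq_zero _ (le_trans (by gcongr) (hσ.le_halfQuad_absForm z₀ z)), zero_mul]

lemma abs_crossing_le (hσ : IsPosReflection H σ m) (hη : η ≤ m / 16) (hD : 0 ≤ D)
    (hg : IsLogCutoff δ τ R g) (hR : 0 ≤ R) (hz : TaylorClose φ z₀ H η z) :
    |crossing φ H σ z₀ (φ z₀ - D) g z| ≤ D + 9 / 8 * R := by
  unfold crossing
  rcases le_or_gt R (halfQuad (absForm H σ) z₀ z) with h | h
  · rw [hg.eq_zero _ h, zero_mul, abs_zero]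
    positivity
  · rw [abs_mul, abs_of_nonneg (hg.nonneg _)]
    calc _ ≤ |crossingGap φ H σ z₀ (φ z₀ - D) z| :=
          mul_le_of_le_one_left (abs_nonneg _) (hg.le_one _)
      _ ≤ D + 9 / 8 * halfQuad (absForm H σ) z₀ z := abs_crossingGap_le hσ hη hD hz
      _ ≤ D + 9 / 8 * R := by gcongr

end CrossingFunction

section LocalCrossing

variable {E : Type*} [NormedAddCommGroup E] [NormedSpace ℂ E]

/-- Adding `χ` to `φ` removes the obstruction to crossing the level `ℓ` inside `X`: the correction
`χ` is at most `w`, supported in `S`, and `φ + χ` is regular on the part of `S` above the level `ℓ`.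
Away from the set `N` of bad points, the superlevel set of `φ` is contained in that of `φ + χ`. -/
structure IsCrossing (φ : E → ℝ) (X : Set E) (ℓ w : ℝ) (S N : Set E) (χ : E → ℝ) : Prop where
  contDiffAt : ∀ z ∈ X, ContDiffAt ℝ 2 χ z
  eq_zero : ∀ z ∉ S, χ z = 0
  abs_apply_le : ∀ z, |χ z| ≤ w
  regular : ∀ z ∈ S, ℓ < φ z + χ z → Regular (fun y => φ y + χ y) z
  lt : ∀ z ∈ X, ℓ < φ z → z ∉ N → ℓ < φ z + χ z

variable {φ : E → ℝ} {X : Set E} {H : E →L[ℝ] E →L[ℝ] ℝ} {σ : E →L[ℝ] E} {m : ℝ} {z₀ : E} {D : ℝ}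
  {g : ℝ → ℝ} {δ τ r η M l w : ℝ} {V : Submodule ℂ E}

lemma LeviTwoPos.exists_mul_norm_sq_le [FiniteDimensional ℂ E] (h : LeviTwoPos φ z₀) :
    ∃ V : Submodule ℂ E, Module.finrank ℂ V = 2 ∧
      ∃ l > 0, ∀ w ∈ V, l * ‖w‖ ^ 2 ≤ levi φ z₀ w := by
  obtain ⟨V, hV, hpos⟩ := h
  refine ⟨V, hV, ?_⟩
  have := FiniteDimensional.complexToReal E
  refine exists_pos_mul_norm_sq_le ?_ (fun c v => ?_) (V.restrictScalars ℝ) hpos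
  · unfold levi
    fun_prop
  · simp only [levi, smul_comm Complex.I c v, map_smul, smul_apply, smul_eq_mul]
    ring

lemma leviTwoPos_add_crossing (hσ : IsPosReflection H σ m) (hη : η ≤ m / 16) (hDτ : 8 * D ≤ τ)
    (hg : IsLogCutoff δ τ r g) {z : E} (hz : TaylorClose φ z₀ H η z) (hτ : 0 < τ) (hD : 0 ≤ D)
    (hHM : ‖H‖ ≤ M) (hQM : ‖absForm H σ‖ ≤ M) (hηM : η ≤ M) (hV : Module.finrank ℂ V = 2)
    (hl : ∀ w ∈ V, l * ‖w‖ ^ 2 ≤ H w w + H (Complex.I • w) (Complex.I • w))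
    (hlt : 2 * (η + δ * (12 * M ^ 2 / m + 2 * M)) < l) :
    LeviTwoPos (fun y => φ y + crossing φ H σ z₀ (φ z₀ - D) g y) z := by
  refine ⟨V, hV, fun w hw hw0 => ?_⟩
  have h := le_hessian_add_crossing hσ hη hDτ hg hz hτ hD hHM hQM hηM
  have hI := h (Complex.I • w)
  rw [norm_smul, Complex.norm_I, one_mul] at hI
  have := mul_pos (sub_pos.2 hlt) (pow_pos (norm_pos_iff.2 hw0) 2)
  unfold levi
  linarith [h w, hl w hw]

lemma isCrossing_crossing (hφ : ∀ z ∈ X, ContDiffAt ℝ 2 φ z) (hσ : IsPosReflection H σ m)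
    (hη : η ≤ m / 16) (hησ : η * ‖σ‖ ≤ m / 2) (hηM : η ≤ M) (hHM : ‖H‖ ≤ M)
    (hQM : ‖absForm H σ‖ ≤ M) (hV : Module.finrank ℂ V = 2)
    (hl : ∀ w ∈ V, l * ‖w‖ ^ 2 ≤ H w w + H (Complex.I • w) (Complex.I • w)) (hδ : δ ≤ 1 / 8)
    (hlt : 2 * (η + δ * (12 * M ^ 2 / m + 2 * M)) < l) (hr : 0 ≤ r)
    (hz : ∀ z ∈ closedBall z₀ r, TaylorClose φ z₀ H η z)
    (hg : IsLogCutoff δ τ (m * r ^ 2 / 2) g) (hτ : 0 < τ) (hD : 0 < D) (hDτ : 8 * D ≤ τ)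
    (hw : D + m * r ^ 2 ≤ w) :
    IsCrossing φ X (φ z₀ - D) w (closedBall z₀ r) {z | z - z₀ + σ (z - z₀) = 0}
      (crossing φ H σ z₀ (φ z₀ - D) g) where
  contDiffAt z hzX := contDiffAt_crossing hg.contDiff (hφ z hzX)
  eq_zero z hzr := crossing_eq_zero hσ hg hr hzr
  abs_apply_le z := by
    have hmr : 0 ≤ m * r ^ 2 := mul_nonneg hσ.pos.le (sq_nonneg r)
    by_cases hzr : z ∈ closedBall z₀ r
    · linarith [abs_crossing_le hσ hη hD.le hg (by positivity) (hz z hzr)]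
    · rw [crossing_eq_zero hσ hg hr hzr, abs_zero]
      linarith
  regular z hzr hzD := by
    refine (leviTwoPos_add_crossing hσ hη hDτ hg (hz z hzr) hτ hD.le hHM hQM hηM hV hl hlt).regular
      fun h => ?_
    have := fderiv_add_crossing_reflection_pos hσ hη hDτ hg (hz z hzr) hτ hησ hδ hD hzD
    rw [h, zero_apply] at this
    exact this.false
  lt z _ hzD hzN := lt_add_crossing hσ hg hzN hzD

lemma eventually_mul_le {c : ℝ} (hc : 0 < c) (C : ℝ) : ∀ᶠ x in 𝓝[>] (0 : ℝ), x * C ≤ c := by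
  have : Tendsto (fun x => x * C) (𝓝 0) (𝓝 (0 * C)) := tendsto_id.mul_const C
  exact nhdsWithin_le_nhds (this.eventually_le_const (by simpa using hc))

lemma exists_crossing_constants (hm : 0 < m) (hl : 0 < l) (hM : 0 < M) (S : ℝ) :
    ∃ η > 0, ∃ δ > 0, η ≤ m / 16 ∧ η * S ≤ m / 2 ∧ η ≤ M ∧ δ ≤ 1 / 8 ∧
      2 * (η + δ * (12 * M ^ 2 / m + 2 * M)) < l := by
  have hpos : ∀ᶠ x in 𝓝[>] (0 : ℝ), 0 < x := self_mem_nhdsWithin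
  obtain ⟨η, ⟨⟨⟨⟨hη, h₁⟩, h₂⟩, h₃⟩, h₄⟩⟩ := ((((hpos.and
    (eventually_mul_le (by positivity : 0 < m / 16) 1)).and (eventually_mul_le (half_pos hm) S)).and
    (eventually_mul_le hM 1)).and (eventually_mul_le (by positivity : 0 < l / 8) 1)).exists
  obtain ⟨δ, ⟨⟨hδ, h₅⟩, h₆⟩⟩ := ((hpos.and
    (eventually_mul_le (by norm_num : (0 : ℝ) < 1 / 8) 1)).and
    (eventually_mul_le (by positivity : 0 < l / 8) (12 * M ^ 2 / m + 2 * M))).exists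
  rw [mul_one] at h₁ h₃ h₄ h₅
  exact ⟨η, hη, δ, hδ, h₁, h₂, h₃, h₅, by linarith⟩

lemma eventually_exists_isCrossing (hφ : ∀ z ∈ X, ContDiffAt ℝ 2 φ z)
    (hz₀ : ContDiffAt ℝ 2 φ z₀) (hd : fderiv ℝ φ z₀ = 0)
    (hσ : IsPosReflection (fderiv ℝ (fderiv ℝ φ) z₀) σ m) (hV : Module.finrank ℂ V = 2)
    (hl : 0 < l) (hVl : ∀ w ∈ V, l * ‖w‖ ^ 2 ≤ levi φ z₀ w) (hw : 0 < w) :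
    ∀ᶠ r in 𝓝[>] 0, ∀ᶠ D in 𝓝[>] 0, ∃ χ,
      IsCrossing φ X (φ z₀ - D) w (closedBall z₀ r) {z | z - z₀ + σ (z - z₀) = 0} χ := by
  set H := fderiv ℝ (fderiv ℝ φ) z₀ with hH
  have hH0 := H.opNorm_nonneg
  have hQ0 := (absForm H σ).opNorm_nonneg
  obtain ⟨η, hη, δ, hδ, hηm, hησ, hηM, hδ₁, hlt⟩ :=
    exists_crossing_constants hσ.pos hl (by linarith : 0 < ‖H‖ + ‖absForm H σ‖ + 1) ‖σ‖
  obtain ⟨s, hs, hz⟩ := Metric.eventually_nhds_iff_ball.1 (eventually_taylorClose hz₀ hd hH.symm hη)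
  have hmr : ∀ᶠ r in 𝓝[>] (0 : ℝ), m * r ^ 2 ≤ w / 2 := by
    have : Tendsto (fun r : ℝ => m * r ^ 2) (𝓝 0) (𝓝 (m * 0 ^ 2)) :=
      (tendsto_id.pow 2).const_mul m
    exact nhdsWithin_le_nhds (this.eventually_le_const (by simpa using hw))
  filter_upwards [hmr, Ioo_mem_nhdsGT hs] with r hmr hr
  obtain ⟨τ, hτ, g, hg⟩ :=
    exists_isLogCutoff hδ (half_pos (mul_pos hσ.pos (pow_pos hr.1 2)))
  filter_upwards [self_mem_nhdsWithin, eventually_mul_le hτ 8, eventually_mul_le (half_pos hw) 1]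
    with D hD hDτ hDw
  exact ⟨_, isCrossing_crossing hφ hσ hηm hησ hηM (by linarith) (by linarith) hV hVl hδ₁ hlt hr.1.le
    (fun z hzr => hz z (closedBall_subset_ball hr.2 hzr)) hg hτ hD (by linarith) (by linarith)⟩

lemma exists_isCrossing [FiniteDimensional ℂ E] (hφ : ∀ z ∈ X, ContDiffAt ℝ 2 φ z)
    (hz₀ : ContDiffAt ℝ 2 φ z₀) (hd : fderiv ℝ φ z₀ = 0)
    (hn : ∀ v, fderiv ℝ (fderiv ℝ φ) z₀ v = 0 → v = 0) (hL : LeviTwoPos φ z₀) :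
    ∃ 𝓔 : Submodule ℝ E, Module.finrank ℝ 𝓔 + 2 ≤ Module.finrank ℝ E ∧
      ∀ w > 0, ∀ᶠ r in 𝓝[>] 0, ∀ᶠ D in 𝓝[>] 0, ∃ χ,
        IsCrossing φ X (φ z₀ - D) w (closedBall z₀ r) {z | z - z₀ ∈ 𝓔} χ := by
  have := FiniteDimensional.complexToReal E
  obtain ⟨σ, m, hσ⟩ := exists_isPosReflection (hz₀.isSymmSndFDerivAt (by simp)).eq hn
  obtain ⟨V, hV, l, hl, hVl⟩ := hL.exists_mul_norm_sq_le
  refine ⟨LinearMap.ker (LinearMap.id + (σ : E →ₗ[ℝ] E)),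
    finrank_add_two_le hV fun w hw h₁ h₂ => ?_, fun w hw => by
      simpa only [LinearMap.mem_ker, LinearMap.add_apply, LinearMap.id_apply,
        ContinuousLinearMap.coe_coe] using
        eventually_exists_isCrossing hφ hz₀ hd hσ hV hl hVl hw⟩
  by_contra hw0
  have hpos := (mul_pos hl (pow_pos (norm_pos_iff.2 hw0) 2)).trans_le (hVl w hw)
  have hI : Complex.I • w ≠ 0 := smul_ne_zero Complex.I_ne_zero hw0
  exact hpos.not_gt (add_neg (hσ.apply_self_neg h₁ hw0) (hσ.apply_self_neg h₂ hI))

end LocalCrossing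

section CrossingSum

variable {E : Type*} [NormedAddCommGroup E] [NormedSpace ℂ E] {φ : E → ℝ} {X : Set E} {ℓ w : ℝ}

lemma Regular.congr {ψ : E → ℝ} {z : E} (h : Regular φ z) (he : φ =ᶠ[𝓝 z] ψ) : Regular ψ z := by
  have h₁ : complexDeriv φ z = complexDeriv ψ z := by rw [complexDeriv, complexDeriv, he.fderiv_eq]
  have h₂ : levi φ z = levi ψ z := by
    unfold levi
    rw [he.fderiv.fderiv_eq]
  rwa [Regular, h₁, h₂] at h

lemma IsCrossing.eventuallyEq_zero {S N : Set E} {χ : E → ℝ} (h : IsCrossing φ X ℓ w S N χ)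
    (hS : IsClosed S) {z : E} (hz : z ∉ S) : χ =ᶠ[𝓝 z] 0 :=
  (hS.isOpen_compl.eventually_mem hz).mono h.eq_zero

lemma IsCrossing.regular_of_notMem {S N : Set E} {χ : E → ℝ} (h : IsCrossing φ X ℓ w S N χ)
    (hS : IsClosed S) {z : E} (hz : z ∉ S) (hr : Regular φ z) :
    Regular (fun y => φ y + χ y) z :=
  hr.congr ((h.eventuallyEq_zero hS hz).mono fun y hy => by simp [hy])

variable {ι : Type*} {s : Finset ι} {S N : ι → Set E} {χ : ι → E → ℝ}

lemma sum_eventuallyEq_of_isCrossing (hS : ∀ c ∈ s, IsClosed (S c))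
    (hd : (s : Set ι).PairwiseDisjoint S) (h : ∀ c ∈ s, IsCrossing φ X ℓ w (S c) (N c) (χ c))
    {c : ι} (hc : c ∈ s) {z : E} (hz : z ∈ S c) :
    (fun y => ∑ b ∈ s, χ b y) =ᶠ[𝓝 z] χ c := by
  have hne : ∀ b ∈ s, ∀ᶠ y in 𝓝 z, b ≠ c → χ b y = 0 := fun b hb => by
    rcases eq_or_ne b c with rfl | hbc
    · exact Eventually.of_forall fun _ h => absurd rfl h
    · have hzb : z ∉ S b := fun hzb => (hd hb hc hbc).notMem_of_mem_left hzb hz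
      exact ((h b hb).eventuallyEq_zero (hS b hb) hzb).mono fun _ hy _ => hy
  filter_upwards [(eventually_all_finset s).2 hne] with y hy
  exact Finset.sum_eq_single_of_mem c hc hy

lemma IsCrossing.sum (hw : 0 ≤ w) (hS : ∀ c ∈ s, IsClosed (S c))
    (hd : (s : Set ι).PairwiseDisjoint S)
    (h : ∀ c ∈ s, IsCrossing φ X ℓ w (S c) (N c) (χ c)) :
    IsCrossing φ X ℓ w (⋃ c ∈ s, S c) (⋃ c ∈ s, N c) fun z => ∑ c ∈ s, χ c z := by
  have hloc : ∀ {c z}, c ∈ s → z ∈ S c → (fun y => ∑ b ∈ s, χ b y) =ᶠ[𝓝 z] χ c :=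
    fun hc hz => sum_eventuallyEq_of_isCrossing hS hd h hc hz
  have hzero : ∀ z ∉ ⋃ c ∈ s, S c, ∑ c ∈ s, χ c z = 0 := fun z hz =>
    Finset.sum_eq_zero fun c hc => (h c hc).eq_zero z fun hzc => hz (mem_biUnion hc hzc)
  refine ⟨fun z hz => ContDiffAt.sum fun c hc => (h c hc).contDiffAt z hz, hzero, fun z => ?_,
    fun z hz hlt => ?_, fun z hzX hlt hzN => ?_⟩
  · by_cases hz : z ∈ ⋃ c ∈ s, S c
    · obtain ⟨c, hc, hzc⟩ := mem_iUnion₂.1 hz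
      exact (hloc hc hzc).eq_of_nhds ▸ (h c hc).abs_apply_le z
    · rwa [hzero z hz, abs_zero]
  · obtain ⟨c, hc, hzc⟩ := mem_iUnion₂.1 hz
    rw [(hloc hc hzc).eq_of_nhds] at hlt
    exact ((h c hc).regular z hzc hlt).congr
      ((hloc hc hzc).mono fun y hy => congrArg (φ y + ·) hy.symm)
  · by_cases hz : z ∈ ⋃ c ∈ s, S c
    · obtain ⟨c, hc, hzc⟩ := mem_iUnion₂.1 hz
      rw [(hloc hc hzc).eq_of_nhds]
      exact (h c hc).lt z hzX hlt fun hzNc => hzN (mem_biUnion hc hzNc)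
    · rwa [hzero z hz, add_zero]

lemma exists_isCrossing_finset [FiniteDimensional ℂ E] (hφ : ∀ z ∈ X, ContDiffAt ℝ 2 φ z)
    (hL : ∀ z ∈ X, LeviTwoPos φ z) {κ : ℝ} (hw : 0 < w) {C : Finset E} (hCX : ∀ c ∈ C, c ∈ X)
    (hCκ : ∀ c ∈ C, φ c = κ) (hCd : ∀ c ∈ C, fderiv ℝ φ c = 0)
    (hCn : ∀ c ∈ C, ∀ v, fderiv ℝ (fderiv ℝ φ) c v = 0 → v = 0) :
    ∃ (𝓔 : E → Submodule ℝ E) (D : ℝ) (S : Set E) (χ : E → ℝ),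
      (∀ c ∈ C, Module.finrank ℝ (𝓔 c) + 2 ≤ Module.finrank ℝ E) ∧ 0 < D ∧ D ≤ w ∧ IsClosed S ∧
      (C : Set E) ⊆ S ∧ (∀ z ∈ S, κ - w ≤ φ z) ∧
      IsCrossing φ X (κ - D) w S (⋃ c ∈ C, {z | z - c ∈ 𝓔 c}) χ := by
  choose! 𝓔 h𝓔 hcross using fun c (hc : c ∈ C) =>
    exists_isCrossing hφ (hφ c (hCX c hc)) (hCd c hc) (hCn c hc) (hL c (hCX c hc))
  obtain ⟨U, hU, hUd⟩ := C.finite_toSet.t2_separation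
  have hsub : ∀ c ∈ C, ∀ᶠ r in 𝓝[>] 0, closedBall c r ⊆ U c ∩ {z | κ - w ≤ φ z} := fun c hc => by
    have hle : ∀ᶠ z in 𝓝 c, κ - w ≤ φ z :=
      (hφ c (hCX c hc)).continuousAt.eventually_const_le (by linarith [hCκ c hc])
    exact nhdsWithin_le_nhds (eventually_closedBall_subset
      (inter_mem ((hU c).2.mem_nhds (hU c).1) hle))
  obtain ⟨r, hr, hrU, hcr⟩ := (eventually_mem_nhdsWithin.and
    (((eventually_all_finset C).2 hsub).and ((eventually_all_finset C).2 fun c hc =>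
      hcross c hc w hw))).exists
  obtain ⟨D, hD, hDw, hcD⟩ := (eventually_mem_nhdsWithin.and
    ((eventually_mul_le hw 1).and ((eventually_all_finset C).2 hcr))).exists
  choose! χ hχ using hcD
  refine ⟨𝓔, D, ⋃ c ∈ C, closedBall c r, _, h𝓔, hD, by linarith,
    C.finite_toSet.isClosed_biUnion fun _ _ => isClosed_closedBall,
    fun c hc => mem_biUnion hc (mem_closedBall_self (le_of_lt hr)), fun z hz => ?_,
    IsCrossing.sum hw.le (fun _ _ => isClosed_closedBall)
      (hUd.mono_on fun c hc => (hrU c hc).trans inter_subset_left)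
      fun c hc => hCκ c hc ▸ hχ c hc⟩
  obtain ⟨c, hc, hzc⟩ := mem_iUnion₂.1 hz
  exact (hrU c hc hzc).2

end CrossingSum

/-! ### Lifting the boundary of a disc across a critical level -/

section Avoidance

variable {E : Type*} [NormedAddCommGroup E] [NormedSpace ℂ E]

lemma exp_mul_sq_smul_eq {ζ : ℂ} (hζ : ‖ζ‖ = 1) (a : E) :
    Complex.exp (-2 * ζ.arg * Complex.I) • ζ ^ 2 • a = a := by
  have hexp : Complex.exp (ζ.arg * Complex.I) = ζ := by
    simpa [hζ] using Complex.norm_mul_exp_arg_mul_I ζ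
  rw [smul_smul]
  nth_rw 2 [← hexp]
  rw [← Complex.exp_nat_mul, ← Complex.exp_add]
  ring_nf
  simp

lemma dimH_setOf_exists_add_sq_smul_mem_le [FiniteDimensional ℂ E] {f : ℂ → E}
    (hf : Differentiable ℂ f) (c : E) (𝓔 : Submodule ℝ E) :
    dimH {a | ∃ ζ : ℂ, ‖ζ‖ = 1 ∧ f ζ + ζ ^ 2 • a - c ∈ 𝓔} ≤ (Module.finrank ℝ 𝓔 + 1 : ℕ) := by
  have := FiniteDimensional.complexToReal E
  let G : ℝ × 𝓔 → E := fun x =>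
    Complex.exp (-2 * x.1 * Complex.I) • ((x.2 : E) + c - f (Complex.exp (x.1 * Complex.I)))
  have hG : ContDiff ℝ 1 G := by
    have hf' : ContDiff ℝ 1 f := hf.contDiff.restrict_scalars ℝ
    have hofReal : ContDiff ℝ 1 (fun x : ℝ × 𝓔 => (x.1 : ℂ)) :=
      Complex.ofRealCLM.contDiff.comp contDiff_fst
    have hcoe : ContDiff ℝ 1 (fun x : ℝ × 𝓔 => (x.2 : E)) := 𝓔.subtypeL.contDiff.comp contDiff_snd
    exact ((contDiff_const.mul hofReal).mul contDiff_const).cexp.smul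
      ((hcoe.add contDiff_const).sub (hf'.comp (hofReal.mul contDiff_const).cexp))
  calc dimH _ ≤ dimH (range G) := dimH_mono ?_
    _ ≤ (Module.finrank ℝ (ℝ × 𝓔) : ℕ) := hG.dimH_range_le
    _ = (Module.finrank ℝ 𝓔 + 1 : ℕ) := by rw [Module.finrank_prod, Module.finrank_self, add_comm]
  rintro a ⟨ζ, hζ, hmem⟩
  refine ⟨(ζ.arg, ⟨_, hmem⟩), ?_⟩
  have hexp : Complex.exp (ζ.arg * Complex.I) = ζ := by
    simpa [hζ] using Complex.norm_mul_exp_arg_mul_I ζ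
  simp only [G, hexp]
  rw [show f ζ + ζ ^ 2 • a - c + c - f ζ = ζ ^ 2 • a by abel, exp_mul_sq_smul_eq hζ]

lemma dense_setOf_forall_add_sq_smul_notMem [FiniteDimensional ℂ E] {f : ℂ → E}
    (hf : Differentiable ℂ f) (C : Finset E) {𝓔 : E → Submodule ℝ E}
    (h𝓔 : ∀ c ∈ C, Module.finrank ℝ (𝓔 c) + 2 ≤ Module.finrank ℝ E) :
    Dense {a | ∀ ζ : ℂ, ‖ζ‖ = 1 → f ζ + ζ ^ 2 • a ∉ ⋃ c ∈ C, {z | z - c ∈ 𝓔 c}} := by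
  have := FiniteDimensional.complexToReal E
  rcases C.eq_empty_or_nonempty with rfl | ⟨c₀, hc₀⟩
  · simp
  have hdim : dimH (⋃ c ∈ C, {a | ∃ ζ : ℂ, ‖ζ‖ = 1 ∧ f ζ + ζ ^ 2 • a - c ∈ 𝓔 c})
      < Module.finrank ℝ E := by
    have h₀ := h𝓔 c₀ hc₀
    calc dimH _ ≤ (Module.finrank ℝ E - 1 : ℕ) := by
          rw [← Finset.set_biUnion_coe, dimH_bUnion C.countable_toSet]
          refine iSup₂_le fun c hc => (dimH_setOf_exists_add_sq_smul_mem_le hf c (𝓔 c)).trans ?_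
          have := h𝓔 c hc
          exact Nat.cast_le.2 (by omega)
      _ < Module.finrank ℝ E := Nat.cast_lt.2 (by omega)
  refine (dense_compl_of_dimH_lt_finrank hdim).mono fun a ha ζ hζ hmem => ?_
  obtain ⟨c, hc, hmem⟩ := mem_iUnion₂.1 hmem
  exact ha (mem_iUnion₂.2 ⟨c, hc, ζ, hζ, hmem⟩)

end Avoidance

section Lift

variable {E : Type*} [NormedAddCommGroup E] [NormedSpace ℂ E] {X : Set E} {φ : E → ℝ}
  {base a b c r ε : ℝ} {f F : ℂ → E}

/-- Every disc in `X` with boundary in `{a < φ}` can be modified into one with boundary in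
`{b < φ}`, without lowering `min φ base` significantly. -/
def Lift (X : Set E) (φ : E → ℝ) (base a b : ℝ) : Prop :=
  ∀ f, Adm X f → (∀ ζ, ‖ζ‖ = 1 → a < φ (f ζ)) → ∀ r < 1, ∀ ε > 0, ∃ F,
    Modification X (fun z => min (φ z) base) r ε f F ∧ ∀ ζ, ‖ζ‖ = 1 → b < φ (F ζ)

namespace Lift

lemma refl (X : Set E) (φ : E → ℝ) (base a : ℝ) : Lift X φ base a a :=
  fun f hf hfa _ _ _ hε => ⟨f, .refl hf hε, hfa⟩

lemma trans (h₁ : Lift X φ base a b) (h₂ : Lift X φ base b c) : Lift X φ base a c := by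
  intro f hf hfa r hr ε hε
  obtain ⟨F, hF, hFb⟩ := h₁ f hf hfa r hr (ε / 2) (half_pos hε)
  obtain ⟨G, hG, hGc⟩ := h₂ F hF.adm hFb r hr (ε / 2) (half_pos hε)
  exact ⟨G, (hF.trans hG).mono (add_halves ε).le, hGc⟩

lemma mono {a' b' : ℝ} (h : Lift X φ base a b) (ha : a ≤ a') (hb : b' ≤ b) :
    Lift X φ base a' b' := fun f hf hfa r hr ε hε =>
  let ⟨F, hF, hFb⟩ := h f hf (fun ζ hζ => ha.trans_lt (hfa ζ hζ)) r hr ε hε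
  ⟨F, hF, fun ζ hζ => hb.trans_lt (hFb ζ hζ)⟩

lemma of_local {A B : ℝ} (h : ∀ κ, A < κ → κ < B → ∃ d > 0, Lift X φ base (κ - d) (κ + d))
    (ha : A < a) (hab : a ≤ b) (hb : b < B) : Lift X φ base a b := by
  set T := {x | a ≤ x ∧ x ≤ b ∧ Lift X φ base a x}
  have haT : a ∈ T := ⟨le_rfl, hab, refl _ _ _ _⟩
  have hbdd : BddAbove T := ⟨b, fun x hx => hx.2.1⟩
  have has : a ≤ sSup T := le_csSup hbdd haT
  have hsb : sSup T ≤ b := csSup_le ⟨a, haT⟩ fun x hx => hx.2.1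
  obtain ⟨d, hd, hl⟩ := h (sSup T) (by linarith) (by linarith)
  obtain ⟨x, hx, hxs⟩ := exists_lt_of_lt_csSup ⟨a, haT⟩ (by linarith : sSup T - d < sSup T)
  have hlift : Lift X φ base a (sSup T + d) := hx.2.2.trans (hl.mono hxs.le le_rfl)
  rcases le_or_gt b (sSup T + d) with hbd | hbd
  · exact hlift.mono le_rfl hbd
  · have : sSup T + d ≤ sSup T := le_csSup hbdd ⟨by linarith, hbd.le, hlift⟩
    linarith

end Lift

lemma Modification.min_const (h : Modification X φ r ε f F) (hε : 0 ≤ ε) (base : ℝ) :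
    Modification X (fun z => min (φ z) base) r ε f F :=
  { h with
    sub_le := fun ζ hζ => by
      rw [← min_sub_sub_right]
      exact min_le_min (h.sub_le ζ hζ) (sub_le_self _ hε) }

lemma IsCrossing.modification_min {ℓ w : ℝ} {S N : Set E} {χ : E → ℝ}
    (hχ : IsCrossing φ X ℓ w S N χ) (hS : ∀ z ∈ S, base + w ≤ φ z)
    (h : Modification X (fun z => φ z + χ z) r ε f F) (hε : 0 ≤ ε) :
    Modification X (fun z => min (φ z) base) r ε f F :=
  { h with
    sub_le := fun ζ hζ => by
      have hle := h.sub_le ζ hζ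
      have hmin₁ := min_le_left (φ (f ζ)) base
      have hmin₂ := min_le_right (φ (f ζ)) base
      have hχf := neg_le_of_abs_le (hχ.abs_apply_le (f ζ))
      have hw : 0 ≤ w := (abs_nonneg _).trans (hχ.abs_apply_le 0)
      refine le_min ?_ (by linarith)
      by_cases hF : F ζ ∈ S
      · linarith [hS _ hF]
      · rw [hχ.eq_zero _ hF] at hle
        by_cases hf : f ζ ∈ S
        · linarith [hS _ hf]
        · rw [hχ.eq_zero _ hf] at hle
          linarith }

lemma Adm.eventually_modification_add_sq_smul (hX : IsOpen X) (hφ : ContinuousOn φ X)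
    (hf : Adm X f) (hr : r ≤ 1) (hε : 0 < ε) :
    ∀ᶠ a in 𝓝 (0 : E), Modification X φ r ε f fun ζ => f ζ + ζ ^ 2 • a := by
  obtain ⟨δ, hδ, hδX⟩ := hf.exists_uniform_nhd hX hφ hε
  filter_upwards [ball_mem_nhds 0 (lt_min hδ hε)] with a ha
  rw [mem_ball_zero_iff, lt_min_iff] at ha
  have hle : ∀ ζ : ℂ, ‖ζ‖ ≤ 1 → ‖f ζ + ζ ^ 2 • a - f ζ‖ ≤ ‖a‖ := fun ζ hζ => by
    rw [add_sub_cancel_left, norm_smul, norm_pow]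
    exact mul_le_of_le_one_left (norm_nonneg _) (pow_le_one₀ (norm_nonneg _) hζ)
  have hnear := fun (ζ : ℂ) (hζ : ‖ζ‖ ≤ 1) =>
    hδX ζ hζ _ ((hle ζ hζ).trans_lt ha.1)
  exact ⟨⟨hf.differentiable.add (by fun_prop), fun ζ hζ => (hnear ζ hζ).1⟩, by simp,
    deriv_add_sq_smul hf.differentiable (differentiable_const a),
    fun ζ hζ => (hle ζ (hζ.trans hr)).trans_lt ha.2, fun ζ hζ => (hnear ζ hζ).2.le⟩

lemma Adm.exists_lt_forall_le (hφ : ContinuousOn φ X) (hf : Adm X f)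
    (ha : ∀ ζ, ‖ζ‖ = 1 → a < φ (f ζ)) : ∃ b > a, ∀ ζ, ‖ζ‖ = 1 → b ≤ φ (f ζ) := by
  obtain ⟨ζ₀, hζ₀, hmin⟩ := (isCompact_sphere (0 : ℂ) 1).exists_isMinOn ⟨1, by simp⟩
    ((hf.continuousOn_comp hφ).mono sphere_subset_closedBall)
  exact ⟨_, ha ζ₀ (mem_sphere_zero_iff_norm.1 hζ₀),
    fun ζ hζ => hmin (mem_sphere_zero_iff_norm.2 hζ)⟩

end Lift

lemma isCompact_setOf_mem_Icc {E : Type*} [TopologicalSpace E] [T2Space E] {X K : Set E}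
    {ψ : E → ℝ} {a b : ℝ} (hK : IsCompact K) (hψ : ContinuousOn ψ K)
    (h : ∀ z, a ≤ ψ z → ψ z ≤ b → (z ∈ X ↔ z ∈ K)) : IsCompact {z ∈ X | a ≤ ψ z ∧ ψ z ≤ b} := by
  convert hK.of_isClosed_subset (hψ.preimage_isClosed_of_isClosed hK.isClosed
    (isClosed_Icc (a := a) (b := b))) inter_subset_left using 1
  ext z
  exact and_congr_left fun hz => h z hz.1 hz.2

section LiftCrossing

variable {E : Type*} [NormedAddCommGroup E] [NormedSpace ℂ E] [FiniteDimensional ℂ E] {φ : E → ℝ}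
  {X : Set E} {A B κ : ℝ}

lemma IsCrossing.lift (hX : IsOpen X) (hφ : ∀ z ∈ X, ContDiffAt ℝ 2 φ z)
    (hK : IsCompact {z ∈ X | A ≤ φ z ∧ φ z ≤ B}) {D w : ℝ} {S N : Set E} {χ : E → ℝ}
    (hχ : IsCrossing φ X (κ - D) w S N χ) (hD : 0 < D) (hDw : D ≤ w) (hA : A + 2 * w ≤ κ)
    (hB : κ + 4 * w ≤ B) (hS : IsClosed S) (hSφ : ∀ z ∈ S, κ - w ≤ φ z)
    (hN : ∀ f : ℂ → E, Differentiable ℂ f → Dense {a | ∀ ζ : ℂ, ‖ζ‖ = 1 → f ζ + ζ ^ 2 • a ∉ N})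
    (hreg : ∀ z ∈ X, z ∉ S → |φ z - κ| ≤ 4 * w → Regular φ z) :
    Lift X φ A (κ - D / 2) (κ + D / 2) := by
  intro f hf hfa r hr ε hε
  have hφc : ContinuousOn φ X := fun z hz => (hφ z hz).continuousAt.continuousWithinAt
  have hψ : ∀ z ∈ X, ContDiffAt ℝ 2 (fun y => φ y + χ y) z :=
    fun z hz => (hφ z hz).add (hχ.contDiffAt z hz)
  have hψc : ContinuousOn (fun y => φ y + χ y) X :=
    fun z hz => (hψ z hz).continuousAt.continuousWithinAt
  obtain ⟨a, hav, hfD, hfε⟩ := ((hN f hf.differentiable).inter_nhds_nonempty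
    ((hf.eventually_modification_add_sq_smul hX hφc hr.le (half_pos hD)).and
      (hf.eventually_modification_add_sq_smul hX hφc hr.le (half_pos hε))))
  obtain ⟨α, hα, hαf⟩ := hfD.adm.exists_lt_forall_le hψc (a := κ - D) fun ζ hζ =>
    hχ.lt _ (hfD.adm.mem ζ hζ.le) (by linarith [hfD.sub_le ζ hζ.le, hfa ζ hζ]) (hav ζ hζ)
  have hlow : κ - D < min α (κ + 2 * w) := lt_min hα (by linarith)
  obtain ⟨F, hF, hFb⟩ := exists_modification_of_regular hX hψ (min_le_right α (κ + 2 * w))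
    (by linarith : κ + 2 * w < κ + 3 * w)
    (isCompact_setOf_mem_Icc hK (hψc.mono (sep_subset _ _)) fun z h₁ h₂ => by
      have := abs_le.1 (hχ.abs_apply_le z)
      exact ⟨fun hz => ⟨hz, by linarith, by linarith⟩, fun hz => hz.1⟩)
    (fun z hz h₁ h₂ => by
      by_cases hzS : z ∈ S
      · exact hχ.regular z hzS (hlow.trans_le h₁)
      · refine hχ.regular_of_notMem hS hzS (hreg z hz hzS ?_)
        rw [hχ.eq_zero z hzS, add_zero] at h₁ h₂
        exact abs_le.2 ⟨by linarith, by linarith⟩)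
    hfε.adm (fun ζ hζ => (min_le_left _ _).trans (hαf ζ hζ)) hr (half_pos hε)
  refine ⟨F, ((hfε.min_const (half_pos hε).le A).trans (hχ.modification_min
    (fun z hz => by linarith [hSφ z hz]) hF (by linarith))).mono (add_halves ε).le, fun ζ hζ => ?_⟩
  linarith [hFb ζ hζ, le_of_abs_le (hχ.abs_apply_le (F ζ))]

lemma exists_lift_crossing (hX : IsOpen X) (hφ : ∀ z ∈ X, ContDiffAt ℝ 2 φ z)
    (hL : ∀ z ∈ X, LeviTwoPos φ z) (hK : IsCompact {z ∈ X | A ≤ φ z ∧ φ z ≤ B}) (hAκ : A < κ)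
    (hκB : κ < B) (hfin : {z ∈ X | A ≤ φ z ∧ φ z ≤ B ∧ fderiv ℝ φ z = 0}.Finite)
    (hnd : ∀ z ∈ X, A ≤ φ z → φ z ≤ B → fderiv ℝ φ z = 0 →
      ∀ v, fderiv ℝ (fderiv ℝ φ) z v = 0 → v = 0) :
    ∃ d > 0, Lift X φ A (κ - d) (κ + d) := by
  have hisol : ∀ᶠ w in 𝓝[>] (0 : ℝ), ∀ z ∈ {z ∈ X | A ≤ φ z ∧ φ z ≤ B ∧ fderiv ℝ φ z = 0},
      |φ z - κ| ≤ w * 4 → φ z = κ := by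
    refine (eventually_all_finite hfin).2 fun z _ => ?_
    by_cases hz : φ z = κ
    · exact Eventually.of_forall fun _ _ => hz
    · filter_upwards [eventually_mul_le (half_pos (abs_pos.2 (sub_ne_zero.2 hz))) 4] with w hw h
      linarith [abs_pos.2 (sub_ne_zero.2 hz)]
  obtain ⟨w, hw, hwA, hwB, hwκ⟩ := (eventually_mem_nhdsWithin.and
    ((eventually_mul_le (sub_pos.2 hAκ) 4).and
      ((eventually_mul_le (sub_pos.2 hκB) 4).and hisol))).exists
  rw [mem_Ioi] at hw
  set crit := {z ∈ X | φ z = κ ∧ fderiv ℝ φ z = 0} with hcrit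
  have hcfin : crit.Finite := hfin.subset fun z hz =>
    ⟨hz.1, hz.2.1 ▸ hAκ.le, hz.2.1 ▸ hκB.le, hz.2.2⟩
  obtain ⟨𝓔, D, S, χ, h𝓔, hD, hDw, hS, hCS, hSφ, hχ⟩ := exists_isCrossing_finset hφ hL hw
    (C := hcfin.toFinset) (κ := κ) (by simp +contextual [hcrit]) (by simp +contextual [hcrit])
    (by simp +contextual [hcrit]) fun c hc => by
      obtain ⟨hcX, hcκ, hcd⟩ := hcfin.mem_toFinset.1 hc
      exact hnd c hcX (hcκ ▸ hAκ.le) (hcκ ▸ hκB.le) hcd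
  refine ⟨D / 2, half_pos hD, hχ.lift hX hφ hK hD hDw (by linarith) (by linarith) hS hSφ
    (fun f hf => dense_setOf_forall_add_sq_smul_notMem hf _ h𝓔) fun z hz hzS hzκ => ?_⟩
  refine (hL z hz).regular fun hd => hzS (hCS (hcfin.mem_toFinset.2 ⟨hz, ?_, hd⟩))
  have := abs_le.1 hzκ
  exact hwκ z ⟨hz, by linarith, by linarith, hd⟩ (by linarith)

end LiftCrossing

/-! ### Generic linear perturbations are Morse functions -/

section Morse

open MeasureTheory

variable {E : Type*} [NormedAddCommGroup E] [NormedSpace ℝ E] {φ : E → ℝ} {X : Set E} {z : E}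

lemma fderiv_add_clm (hφ : DifferentiableAt ℝ φ z) (l : E →L[ℝ] ℝ) :
    fderiv ℝ (fun y => φ y + l y) z = fderiv ℝ φ z + l :=
  (hφ.hasFDerivAt.add l.hasFDerivAt).fderiv

lemma fderiv_fderiv_add_clm (hφ : ContDiffAt ℝ 2 φ z) (l : E →L[ℝ] ℝ) :
    fderiv ℝ (fderiv ℝ fun y => φ y + l y) z = fderiv ℝ (fderiv ℝ φ) z := by
  have hfderiv : fderiv ℝ (fun y => φ y + l y) =ᶠ[𝓝 z] fun y => fderiv ℝ φ y + l :=
    (eventually_differentiableAt hφ).mono fun _ hy => fderiv_add_clm hy l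
  rw [hfderiv.fderiv_eq, fderiv_add_const]

variable [FiniteDimensional ℝ E]

lemma finite_setOf_fderiv_eq_zero {K : Set E} (hK : IsCompact K)
    (hφ : ∀ z ∈ K, ContDiffAt ℝ 2 φ z)
    (hnd : ∀ z ∈ K, fderiv ℝ φ z = 0 → ∀ v, fderiv ℝ (fderiv ℝ φ) z v = 0 → v = 0) :
    {z ∈ K | fderiv ℝ φ z = 0}.Finite := by
  by_contra hinf
  obtain ⟨x, hxK, hx⟩ := Set.Infinite.exists_accPt_of_subset_isCompact hinf hK fun z hz => hz.1
  have hfreq : ∃ᶠ z in 𝓝[≠] x, fderiv ℝ φ z = 0 :=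
    (accPt_iff_frequently_nhdsNE.1 hx).mono fun z hz => hz.2
  have hD := (differentiableAt_fderiv (hφ x hxK)).hasFDerivAt
  have hx0 : fderiv ℝ φ x = 0 := by
    by_contra hne
    exact hfreq (nhdsWithin_le_nhds (hD.continuousAt.eventually_ne hne))
  obtain ⟨C, -, hC⟩ := LinearMap.exists_antilipschitzWith
    (fderiv ℝ (fderiv ℝ φ) x : E →ₗ[ℝ] E →L[ℝ] ℝ) (LinearMap.ker_eq_bot'.2 (hnd x hxK hx0))
  exact hfreq (hD.eventually_ne ⟨C, hC⟩)

/-- The easy case of Sard's theorem, for maps between spaces of the same dimension. -/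
lemma dense_compl_image_of_not_injective {F : Type*} [NormedAddCommGroup F] [NormedSpace ℝ F]
    [FiniteDimensional ℝ F] (hEF : Module.finrank ℝ F = Module.finrank ℝ E) {g : E → F}
    {g' : E → E →L[ℝ] F} {S : Set E} (hg : ∀ z ∈ S, HasFDerivAt g (g' z) z)
    (hS : ∀ z ∈ S, ¬ Function.Injective (g' z)) : Dense (g '' S)ᶜ := by
  borelize E
  let T : F ≃L[ℝ] E := .ofFinrankEq hEF
  have hnull : Measure.addHaar ((fun z => T (g z)) '' S) = 0 := by
    refine addHaar_image_eq_zero_of_det_fderivWithin_eq_zero _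
      (f' := fun z => (T : F →L[ℝ] E).comp (g' z))
      (fun z hz => (T.hasFDerivAt.comp z (hg z hz)).hasFDerivWithinAt) fun z hz => ?_
    by_contra hdet
    exact hS z hz (.of_comp (LinearMap.equivOfDetNeZero _ hdet).injective)
  have hdense := (Measure.dense_of_ae (compl_mem_ae_iff.2 hnull)).preimage T.toHomeomorph.isOpenMap
  refine hdense.mono ?_
  rintro y hy ⟨z, hz, rfl⟩
  exact hy ⟨z, hz, rfl⟩

lemma dense_setOf_forall_nondegenerate (hφ : ∀ z ∈ X, ContDiffAt ℝ 2 φ z) :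
    Dense {l : E →L[ℝ] ℝ | ∀ z ∈ X, fderiv ℝ φ z + l = 0 →
      ∀ v, fderiv ℝ (fderiv ℝ φ) z v = 0 → v = 0} := by
  have hEF : Module.finrank ℝ (E →L[ℝ] ℝ) = Module.finrank ℝ E := by
    rw [← LinearMap.toContinuousLinearMap.finrank_eq]
    exact Subspace.dual_finrank_eq
  have hdense := (dense_compl_image_of_not_injective hEF
    (S := {z ∈ X | ¬ Function.Injective (fderiv ℝ (fderiv ℝ φ) z)})
    (fun z hz => (differentiableAt_fderiv (hφ z hz.1)).hasFDerivAt) fun z hz => hz.2).preimage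
    (Homeomorph.neg (E →L[ℝ] ℝ)).isOpenMap
  refine hdense.mono fun l hl z hz hzl => ?_
  rw [← injective_iff_map_eq_zero]
  by_contra hinj
  exact hl ⟨z, ⟨hz, hinj⟩, eq_neg_of_add_eq_zero_left hzl⟩

lemma exists_abs_le_forall_nondegenerate (hφ : ∀ z ∈ X, ContDiffAt ℝ 2 φ z) {K : Set E}
    (hK : Bornology.IsBounded K) {s : ℝ} (hs : 0 < s) :
    ∃ l : E →L[ℝ] ℝ, (∀ z ∈ K, |l z| ≤ s) ∧ ∀ z ∈ X, fderiv ℝ φ z + l = 0 →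
      ∀ v, fderiv ℝ (fderiv ℝ φ) z v = 0 → v = 0 := by
  obtain ⟨R, hR, hRK⟩ := hK.exists_pos_norm_le
  obtain ⟨l, hl, hls⟩ := (dense_setOf_forall_nondegenerate hφ).exists_mem_open isOpen_ball
    ⟨0, mem_ball_self (div_pos hs hR)⟩
  refine ⟨l, fun z hz => ?_, hl⟩
  calc |l z| ≤ ‖l‖ * ‖z‖ := l.le_opNorm z
    _ ≤ s / R * R := by
      gcongr
      exacts [(mem_ball_zero_iff.1 hls).le, hRK z hz]
    _ = s := div_mul_cancel₀ s hR.ne'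

end Morse

/-! ### Lifting the boundary of a disc to higher levels of an exhaustion function -/

section Level

variable {E : Type*} [NormedAddCommGroup E] [NormedSpace ℂ E] {φ ψ ρ : E → ℝ} {X Y : Set E}
  {A B M a b r ε s : ℝ} {f F : ℂ → E} {z : E}

lemma LeviTwoPos.add_clm (h : LeviTwoPos φ z) (hφ : ContDiffAt ℝ 2 φ z) (l : E →L[ℝ] ℝ) :
    LeviTwoPos (fun y => φ y + l y) z := by
  simpa only [LeviTwoPos, levi, fderiv_fderiv_add_clm hφ l] using h

lemma Adm.subset (hf : Adm X f) (hXY : X ⊆ Y) : Adm Y f :=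
  ⟨hf.differentiable, fun ζ hζ => hXY (hf.mem ζ hζ)⟩

lemma Modification.of_abs_sub_le (h : Modification X φ r ε f F) (hf : Adm X f)
    (hs : ∀ z ∈ X, |ψ z - φ z| ≤ s) : Modification X ψ r (ε + 2 * s) f F :=
  { h with
    norm_sub_lt := fun ζ hζ => by
      linarith [h.norm_sub_lt ζ hζ, (abs_nonneg _).trans (hs _ (hf.mem 0 (by simp)))]
    sub_le := fun ζ hζ => by
      linarith [h.sub_le ζ hζ, abs_le.1 (hs _ (hf.mem ζ hζ)), abs_le.1 (hs _ (h.adm.mem ζ hζ))] }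

variable [FiniteDimensional ℂ E]

lemma lift_of_isCompact (hX : IsOpen X) (hφ : ∀ z ∈ X, ContDiffAt ℝ 2 φ z)
    (hL : ∀ z ∈ X, LeviTwoPos φ z) (hK : IsCompact {z ∈ X | A ≤ φ z ∧ φ z ≤ B})
    (hnd : ∀ z ∈ X, fderiv ℝ φ z = 0 → ∀ v, fderiv ℝ (fderiv ℝ φ) z v = 0 → v = 0)
    (hA : A < a) (hab : a ≤ b) (hB : b < B) : Lift X φ A a b := by
  have := FiniteDimensional.complexToReal E
  have hfin : {z ∈ X | A ≤ φ z ∧ φ z ≤ B ∧ fderiv ℝ φ z = 0}.Finite :=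
    (finite_setOf_fderiv_eq_zero hK (fun z hz => hφ z hz.1) fun z hz => hnd z hz.1).subset
      fun z hz => ⟨⟨hz.1, hz.2.1, hz.2.2.1⟩, hz.2.2.2⟩
  exact .of_local (fun κ hAκ hκB => exists_lift_crossing hX hφ hL hK hAκ hκB hfin
    fun z hz _ _ => hnd z hz) hA hab hB

lemma lift_sublevel (hX : IsOpen X) (hρ : ∀ z ∈ X, ContDiffAt ℝ 2 ρ z)
    (hL : ∀ z ∈ X, LeviTwoPos ρ z) (hK : IsCompact {z ∈ X | ρ z ≤ M})
    (hA : A < a) (hab : a ≤ b) (hM : b < M) : Lift {z ∈ X | ρ z < M} ρ A a b := by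
  intro f hf hfa r hr ε hε
  have := FiniteDimensional.complexToReal E
  have hρc : ContinuousOn ρ X := fun z hz => (hρ z hz).continuousAt.continuousWithinAt
  obtain ⟨s, hs, hsA, hsM, hsε⟩ := (eventually_mem_nhdsWithin.and
    ((eventually_mul_le (sub_pos.2 hA) 2).and
      ((eventually_mul_le (sub_pos.2 hM) 4).and (eventually_mul_le hε 4)))).exists
  rw [mem_Ioi] at hs
  obtain ⟨l, hl, hnd⟩ := exists_abs_le_forall_nondegenerate hρ hK.isBounded hs
  have hlY : ∀ z ∈ {z ∈ X | ρ z < M}, |l z| ≤ s := fun z hz => hl z ⟨hz.1, hz.2.le⟩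
  have hcompact : IsCompact {z ∈ {z ∈ X | ρ z < M} | A ≤ ρ z + l z ∧ ρ z + l z ≤ b + 2 * s} :=
    isCompact_setOf_mem_Icc hK ((hρc.mono (sep_subset _ _)).add l.continuous.continuousOn)
      fun z _ h => ⟨fun hz => ⟨hz.1, hz.2.le⟩,
        fun hz => ⟨hz.1, by linarith [neg_le_of_abs_le (hl z hz)]⟩⟩
  have hlift : Lift {z ∈ X | ρ z < M} (fun z => ρ z + l z) A (a - s) (b + s) := by
    refine lift_of_isCompact (hρc.isOpen_inter_preimage hX isOpen_Iio)
      (fun z hz => (hρ z hz.1).add l.contDiff.contDiffAt)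
      (fun z hz => (hL z hz.1).add_clm (hρ z hz.1) l) hcompact
      (fun z hz => ?_) (by linarith) (by linarith) (by linarith)
    rw [fderiv_add_clm ((hρ z hz.1).differentiableAt two_ne_zero),
      fderiv_fderiv_add_clm (hρ z hz.1)]
    exact hnd z hz.1
  obtain ⟨F, hF, hFb⟩ := hlift f hf (fun ζ hζ => by
    linarith [hfa ζ hζ, neg_le_of_abs_le (hlY _ (hf.mem ζ hζ.le))]) r hr (ε / 2) (half_pos hε)
  refine ⟨F, (hF.of_abs_sub_le (s := s) hf fun z hz => ?_).mono (by linarith), fun ζ hζ => ?_⟩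
  · refine (abs_min_sub_min_le_max _ _ _ _).trans ?_
    simpa [hs.le] using hlY z hz
  · linarith [hFb ζ hζ, le_of_abs_le (hlY _ (hF.adm.mem ζ hζ.le))]

lemma lift_of_exhaustion (hX : IsOpen X) (hρ : ∀ z ∈ X, ContDiffAt ℝ 2 ρ z)
    (hL : ∀ z ∈ X, LeviTwoPos ρ z) (hexh : ∀ c : ℝ, IsCompact {z ∈ X | ρ z ≤ c})
    (hA : A < a) (hab : a ≤ b) : Lift X ρ A a b := by
  intro f hf hfa r hr ε hε
  obtain ⟨M, hM⟩ := (isCompact_closedBall (0 : ℂ) 1).bddAbove_image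
    (hf.continuousOn_comp fun z hz => (hρ z hz).continuousAt.continuousWithinAt)
  have hfM : ∀ ζ, ‖ζ‖ ≤ 1 → ρ (f ζ) < max M b + 1 := fun ζ hζ => by
    linarith [hM ⟨ζ, mem_closedBall_zero_iff.2 hζ, rfl⟩, le_max_left M b]
  obtain ⟨F, hF, hFb⟩ := lift_sublevel hX hρ hL (hexh (max M b + 1)) hA hab
    ((le_max_right M b).trans_lt (lt_add_one _)) f
    ⟨hf.differentiable, fun ζ hζ => ⟨hf.mem ζ hζ, hfM ζ hζ⟩⟩ hfa r hr ε hε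
  exact ⟨F, { hF with adm := hF.adm.subset (sep_subset _ _) }, hFb⟩

end Level

/-! ### The limit disc -/

lemma exists_forall_dist_le_two_mul {α E : Type*} [PseudoMetricSpace E] [CompleteSpace E]
    {f : ℕ → α → E} {U : ℕ → Set α} {e : ℕ → ℝ} (hU : Monotone U) (he : ∀ k, e (k + 1) ≤ e k / 2)
    (h : ∀ k, ∀ x ∈ U k, dist (f k x) (f (k + 1) x) ≤ e k) :
    ∃ F : α → E, ∀ k, ∀ x ∈ U k, dist (f k x) (F x) ≤ 2 * e k := by
  have hpow : ∀ k j, e (k + j) ≤ 2 * e k / 2 / 2 ^ j := by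
    intro k j
    induction j with
    | zero => simp
    | succ j ih =>
      refine (he (k + j)).trans ?_
      rw [pow_succ, ← div_div]
      linarith
  have hdist : ∀ k, ∀ x ∈ U k, ∀ j, dist (f (k + j) x) (f (k + j + 1) x) ≤ 2 * e k / 2 / 2 ^ j :=
    fun k x hx j => (h (k + j) x (hU (Nat.le_add_right k j) hx)).trans (hpow k j)
  have hlim : ∀ x, ∃ y, ∀ k, x ∈ U k → dist (f k x) y ≤ 2 * e k := by
    intro x
    by_cases hx : ∃ k, x ∈ U k
    · obtain ⟨k, hk⟩ := hx
      obtain ⟨y, hy⟩ := cauchySeq_tendsto_of_complete (cauchySeq_of_le_geometric_two (hdist k x hk))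
      have hy' : Tendsto (fun j => f j x) atTop (𝓝 y) :=
        (tendsto_add_atTop_iff_nat k).1 (by simpa only [add_comm] using hy)
      refine ⟨y, fun m hm => dist_le_of_le_geometric_two_of_tendsto₀ (hdist m x hm) ?_⟩
      simpa only [add_comm] using (tendsto_add_atTop_iff_nat m).2 hy'
    · exact ⟨f 0 x, fun k hk => (hx ⟨k, hk⟩).elim⟩
  choose F hF using hlim
  exact ⟨F, fun k x hx => hF x k hx⟩

lemma isCompact_setOf_mem_ball_of_norm_le {E : Type*} [TopologicalSpace E] {F : ℂ → E}
    (hF : ContinuousOn F (ball 0 1)) {K : Set E} (hK : IsClosed K) {r : ℝ} (hr : r < 1)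
    (h : ∀ ζ, ‖ζ‖ < 1 → F ζ ∈ K → ‖ζ‖ ≤ r) : IsCompact {ζ ∈ ball (0 : ℂ) 1 | F ζ ∈ K} := by
  have hball : closedBall (0 : ℂ) r ⊆ ball 0 1 := closedBall_subset_ball hr
  convert (isCompact_closedBall (0 : ℂ) r).of_isClosed_subset
    ((hF.mono hball).preimage_isClosed_of_isClosed isClosed_closedBall hK) inter_subset_left using 1
  ext ζ
  exact ⟨fun hζ => ⟨mem_closedBall_zero_iff.2 (h ζ (mem_ball_zero_iff.1 hζ.1) hζ.2), hζ.2⟩,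
    fun hζ => ⟨hball hζ.1, hζ.2⟩⟩

section Limit

variable {E : Type*} [NormedAddCommGroup E] [NormedSpace ℂ E] {X : Set E} {ρ : E → ℝ}
  {c : ℝ}

/-- The disc `f` has `ρ ∘ f > c` on the annulus `r ≤ ‖ζ‖ ≤ 1`, and `2 * e`-perturbations of `f` stay
in `X` and change `ρ ∘ f` by less than `1`. -/
structure Stable (X : Set E) (ρ : E → ℝ) (c r e : ℝ) (f : ℂ → E) : Prop where
  adm : Adm X f
  radius_lt : r < 1
  pos : 0 < e
  lt : ∀ ζ, r ≤ ‖ζ‖ → ‖ζ‖ ≤ 1 → c < ρ (f ζ)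
  near : ∀ ζ, ‖ζ‖ ≤ 1 → ∀ y, ‖y - f ζ‖ ≤ 2 * e → y ∈ X ∧ ρ (f ζ) - 1 < ρ y

lemma Adm.exists_forall_lt {f : ℂ → E} (hf : Adm X f) (hρ : ContinuousOn ρ X) :
    ∃ c, ∀ ζ, ‖ζ‖ ≤ 1 → c < ρ (f ζ) := by
  obtain ⟨m, hm⟩ := (isCompact_closedBall (0 : ℂ) 1).bddBelow_image (hf.continuousOn_comp hρ)
  exact ⟨m - 1, fun ζ hζ => (sub_one_lt m).trans_le (hm ⟨ζ, mem_closedBall_zero_iff.2 hζ, rfl⟩)⟩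

lemma Adm.exists_lt_one_forall_lt {f : ℂ → E} (hf : Adm X f) (hρ : ContinuousOn ρ X)
    (hc : ∀ ζ, ‖ζ‖ = 1 → c < ρ (f ζ)) : ∃ r < 1, ∀ ζ, r ≤ ‖ζ‖ → ‖ζ‖ ≤ 1 → c < ρ (f ζ) := by
  have hcompact : IsCompact {ζ ∈ closedBall (0 : ℂ) 1 | ρ (f ζ) ≤ c} :=
    (isCompact_closedBall 0 1).of_isClosed_subset
      ((hf.continuousOn_comp hρ).preimage_isClosed_of_isClosed isClosed_closedBall isClosed_Iic)
      inter_subset_left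
  rcases {ζ ∈ closedBall (0 : ℂ) 1 | ρ (f ζ) ≤ c}.eq_empty_or_nonempty with hempty | hne
  · refine ⟨0, one_pos, fun ζ _ hζ => ?_⟩
    by_contra! hle
    exact hempty.le ⟨mem_closedBall_zero_iff.2 hζ, hle⟩
  · obtain ⟨ζ₀, ⟨hζ₀, hρζ₀⟩, hmax⟩ := hcompact.exists_isMaxOn hne continuous_norm.continuousOn
    have hlt : ‖ζ₀‖ < 1 := (mem_closedBall_zero_iff.1 hζ₀).lt_of_ne fun h => (hc ζ₀ h).not_ge hρζ₀
    obtain ⟨r, hr, hr1⟩ := exists_between hlt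
    refine ⟨r, hr1, fun ζ hrζ hζ => ?_⟩
    by_contra! hle
    exact (hr.trans_le hrζ).not_ge (hmax ⟨mem_closedBall_zero_iff.2 hζ, hle⟩)

lemma Adm.exists_stable (hX : IsOpen X) (hρ : ContinuousOn ρ X) {f : ℂ → E} (hf : Adm X f)
    (hc : ∀ ζ, ‖ζ‖ = 1 → c < ρ (f ζ)) {r₀ e₀ : ℝ} (hr₀ : r₀ < 1) (he₀ : 0 < e₀) :
    ∃ r e, r₀ ≤ r ∧ e ≤ e₀ ∧ Stable X ρ c r e f := by
  obtain ⟨δ, hδ, hnear⟩ := hf.exists_uniform_nhd hX hρ one_pos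
  obtain ⟨r, hr, hlt⟩ := hf.exists_lt_one_forall_lt hρ hc
  refine ⟨max r₀ r, min e₀ (δ / 3), le_max_left _ _, min_le_left _ _, hf, max_lt hr₀ hr,
    lt_min he₀ (by positivity), fun ζ hrζ => hlt ζ ((le_max_right _ _).trans hrζ),
    fun ζ hζ y hy => hnear ζ hζ y ?_⟩
  linarith [min_le_right e₀ (δ / 3)]

lemma Stable.exists_succ [FiniteDimensional ℂ E] (hX : IsOpen X)
    (hρ : ∀ z ∈ X, ContDiffAt ℝ 2 ρ z) (hL : ∀ z ∈ X, LeviTwoPos ρ z)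
    (hexh : ∀ c : ℝ, IsCompact {z ∈ X | ρ z ≤ c}) {r e : ℝ} {f : ℂ → E} (h : Stable X ρ c r e f)
    {r₀ : ℝ} (hr₀ : r₀ < 1) : ∃ F r' e', Stable X ρ (c + 1) r' e' F ∧ r ≤ r' ∧ r₀ ≤ r' ∧
      e' ≤ e / 2 ∧ Modification X (fun z => min (ρ z) (c - 1)) r (min e 1) f F := by
  obtain ⟨F, hF, hFc⟩ := lift_of_exhaustion hX hρ hL hexh (sub_one_lt c) (lt_add_one c).le f h.adm
    (fun ζ hζ => h.lt ζ (h.radius_lt.le.trans hζ.ge) hζ.le) r h.radius_lt _ (lt_min h.pos one_pos)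
  obtain ⟨r', e', hr', he', hF'⟩ := hF.adm.exists_stable hX
    (fun z hz => (hρ z hz).continuousAt.continuousWithinAt) hFc (max_lt h.radius_lt hr₀)
    (half_pos h.pos)
  exact ⟨F, r', e', hF', (le_max_left _ _).trans hr', (le_max_right _ _).trans hr', he', hF⟩

/-- A sequence of discs whose boundaries escape to infinity in `X` while their successive distances
on discs of radii `r k → 1` decrease geometrically. -/
structure DiscTower (X : Set E) (ρ : E → ℝ) (c : ℝ) (f : ℕ → ℂ → E) (r e : ℕ → ℝ) : Prop where
  stable : ∀ k : ℕ, Stable X ρ (c + k) (r k) (e k) (f k)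
  modification : ∀ k : ℕ, Modification X (fun z => min (ρ z) (c + k - 1)) (r k) (min (e k) 1) (f k)
    (f (k + 1))
  monotone : Monotone r
  tendsto : Tendsto r atTop (𝓝 1)
  succ_le : ∀ k, e (k + 1) ≤ e k / 2

lemma exists_discTower [FiniteDimensional ℂ E] (hX : IsOpen X)
    (hρ : ∀ z ∈ X, ContDiffAt ℝ 2 ρ z) (hL : ∀ z ∈ X, LeviTwoPos ρ z)
    (hexh : ∀ c : ℝ, IsCompact {z ∈ X | ρ z ≤ c}) {f₀ : ℂ → E} (hf₀ : Adm X f₀) :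
    ∃ c f r e, f 0 = f₀ ∧ DiscTower X ρ c f r e := by
  have hρc : ContinuousOn ρ X := fun z hz => (hρ z hz).continuousAt.continuousWithinAt
  obtain ⟨c, hc⟩ := hf₀.exists_forall_lt hρc
  obtain ⟨r₀, e₀, hr₀, -, hS₀⟩ := hf₀.exists_stable hX hρc (fun ζ hζ => hc ζ hζ.le) zero_lt_one
    one_pos
  let Stage := fun k : ℕ => {x : (ℂ → E) × ℝ × ℝ //
    Stable X ρ (c + k) x.2.1 x.2.2 x.1 ∧ 1 - 1 / ((k : ℝ) + 1) ≤ x.2.1}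
  have hstep : ∀ k (x : Stage k), ∃ y : Stage (k + 1), x.1.2.1 ≤ y.1.2.1 ∧
      y.1.2.2 ≤ x.1.2.2 / 2 ∧ Modification X (fun z => min (ρ z) (c + k - 1)) x.1.2.1
        (min x.1.2.2 1) x.1.1 y.1.1 := by
    rintro k ⟨⟨f, r, e⟩, hS, -⟩
    obtain ⟨F, r', e', hS', hr, hr', he, hF⟩ := hS.exists_succ hX hρ hL hexh
      (sub_lt_self 1 (Nat.one_div_pos_of_nat (n := k + 1)))
    refine ⟨⟨(F, r', e'), ?_, hr'⟩, hr, he, hF⟩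
    simpa [add_assoc] using hS'
  choose next hr he hmod using hstep
  let g : ∀ k, Stage k := fun k =>
    Nat.rec ⟨(f₀, r₀, e₀), by simpa using hS₀, by simpa using hr₀⟩ (fun k x => next k x) k
  have hlim : Tendsto (fun k : ℕ => 1 - 1 / ((k : ℝ) + 1)) atTop (𝓝 1) := by
    simpa using tendsto_one_div_add_atTop_nhds_zero_nat.const_sub (1 : ℝ)
  exact ⟨c, fun k => (g k).1.1, fun k => (g k).1.2.1, fun k => (g k).1.2.2, rfl,
    { stable := fun k => (g k).2.1
      modification := fun k => hmod k (g k)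
      monotone := monotone_nat_of_le_succ fun k => hr k (g k)
      tendsto := tendsto_of_tendsto_of_tendsto_of_le_of_le hlim tendsto_const_nhds
        (fun k => (g k).2.2) fun k => (g k).2.1.radius_lt.le
      succ_le := fun k => he k (g k) }⟩

namespace DiscTower

variable {f : ℕ → ℂ → E} {r e : ℕ → ℝ} {F : ℂ → E} {ζ : ℂ} {k : ℕ}

lemma exists_limit [CompleteSpace E] (h : DiscTower X ρ c f r e) :
    ∃ F : ℂ → E, ∀ k ζ, ‖ζ‖ ≤ r k → ‖F ζ - f k ζ‖ ≤ 2 * e k := by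
  obtain ⟨F, hF⟩ := exists_forall_dist_le_two_mul (f := f) (U := fun k => {ζ | ‖ζ‖ ≤ r k})
    (fun j k hjk ζ (hζ : ‖ζ‖ ≤ r j) => hζ.trans (h.monotone hjk)) h.succ_le fun k ζ hζ => by
      rw [dist_comm, dist_eq_norm]
      exact ((h.modification k).norm_sub_lt ζ hζ).le.trans (min_le_left _ _)
  refine ⟨F, fun k ζ hζ => ?_⟩
  rw [← dist_eq_norm, dist_comm]
  exact hF k ζ hζ

lemma tendsto_zero (h : DiscTower X ρ c f r e) : Tendsto e atTop (𝓝 0) := by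
  have hpow : ∀ k, e k ≤ e 0 * (1 / 2) ^ k := by
    intro k
    induction k with
    | zero => simp
    | succ k ih =>
      refine (h.succ_le k).trans ?_
      rw [pow_succ]
      linarith
  refine squeeze_zero (fun k => (h.stable k).pos.le) hpow ?_
  simpa using (tendsto_pow_atTop_nhds_zero_of_lt_one (by norm_num : (0 : ℝ) ≤ 1 / 2)
    (by norm_num)).const_mul (e 0)

lemma apply_zero (h : DiscTower X ρ c f r e) (k : ℕ) : f k 0 = f 0 0 := by
  induction k with
  | zero => rfl
  | succ k ih => exact (h.modification k).apply_zero.trans ih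

lemma deriv_zero (h : DiscTower X ρ c f r e) (k : ℕ) : deriv (f k) 0 = deriv (f 0) 0 := by
  induction k with
  | zero => rfl
  | succ k ih => exact (h.modification k).deriv_zero.trans ih

lemma exists_lt_radius (h : DiscTower X ρ c f r e) (hζ : ‖ζ‖ < 1) : ∃ k, ‖ζ‖ < r k :=
  (h.tendsto.eventually_const_lt hζ).exists

lemma tendstoLocallyUniformlyOn (h : DiscTower X ρ c f r e)
    (hF : ∀ k ζ, ‖ζ‖ ≤ r k → ‖F ζ - f k ζ‖ ≤ 2 * e k) :
    TendstoLocallyUniformlyOn f F atTop (ball 0 1) := by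
  rw [Metric.tendstoLocallyUniformlyOn_iff]
  intro ε hε ζ hζ
  obtain ⟨k, hk⟩ := h.exists_lt_radius (mem_ball_zero_iff.1 hζ)
  refine ⟨ball 0 (r k), mem_nhdsWithin_of_mem_nhds (isOpen_ball.mem_nhds
    (mem_ball_zero_iff.2 hk)), ?_⟩
  filter_upwards [eventually_ge_atTop k, h.tendsto_zero.eventually_lt_const (half_pos hε)]
    with j hkj hj y hy
  rw [dist_eq_norm]
  linarith [hF j y ((mem_ball_zero_iff.1 hy).le.trans (h.monotone hkj))]

lemma lt_apply_limit (h : DiscTower X ρ c f r e)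
    (hF : ∀ k ζ, ‖ζ‖ ≤ r k → ‖F ζ - f k ζ‖ ≤ 2 * e k) (hk : r k ≤ ‖ζ‖) (hζ : ‖ζ‖ < 1) :
    c + k - 3 < ρ (F ζ) := by
  obtain ⟨m, hkm, hm, hm'⟩ : ∃ m ≥ k, r m ≤ ‖ζ‖ ∧ ‖ζ‖ < r (m + 1) := by
    by_contra! hno
    obtain ⟨j, hj, hkj⟩ := ((h.tendsto.eventually_const_lt hζ).and (eventually_ge_atTop k)).exists
    have hle : r j ≤ ‖ζ‖ := Nat.le_induction hk (fun m hm => hno m hm) j hkj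
    exact hle.not_gt hj
  have hlevel : c + m < ρ (f m ζ) := (h.stable m).lt ζ hm hζ.le
  have hmin := (h.modification m).sub_le ζ hζ.le
  rw [min_eq_right (by linarith)] at hmin
  have hnear := ((h.stable (m + 1)).near ζ hζ.le _ (hF (m + 1) ζ hm'.le)).2
  have hkm' : (k : ℝ) ≤ m := Nat.cast_le.2 hkm
  linarith [min_le_left (ρ (f (m + 1) ζ)) (c + m - 1), min_le_right (e m) 1]

end DiscTower

lemma exists_proper_disc [FiniteDimensional ℂ E] (hX : IsOpen X)
    (hρ : ∀ z ∈ X, ContDiffAt ℝ 2 ρ z) (hL : ∀ z ∈ X, LeviTwoPos ρ z)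
    (hexh : ∀ c : ℝ, IsCompact {z ∈ X | ρ z ≤ c}) {f₀ : ℂ → E} (hf₀ : Adm X f₀) :
    ∃ F : ℂ → E, DifferentiableOn ℂ F (ball 0 1) ∧ (∀ ζ ∈ ball (0 : ℂ) 1, F ζ ∈ X) ∧
      (∀ K ⊆ X, IsCompact K → IsCompact {ζ ∈ ball (0 : ℂ) 1 | F ζ ∈ K}) ∧
      F 0 = f₀ 0 ∧ deriv F 0 = deriv f₀ 0 := by
  have := FiniteDimensional.complete ℂ E
  obtain ⟨c, f, r, e, rfl, h⟩ := exists_discTower hX hρ hL hexh hf₀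
  obtain ⟨F, hF⟩ := h.exists_limit
  have hlim := h.tendstoLocallyUniformlyOn hF
  have hf : ∀ᶠ k in atTop, DifferentiableOn ℂ (f k) (ball 0 1) :=
    .of_forall fun k => (h.stable k).adm.differentiable.differentiableOn
  have hFd : DifferentiableOn ℂ F (ball 0 1) := hlim.differentiableOn hf isOpen_ball
  have h0 : (0 : ℂ) ∈ ball (0 : ℂ) 1 := mem_ball_self one_pos
  refine ⟨F, hFd, fun ζ hζ => ?_, fun K hKX hK => ?_, ?_, ?_⟩
  · obtain ⟨k, hk⟩ := h.exists_lt_radius (mem_ball_zero_iff.1 hζ)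
    exact ((h.stable k).near ζ (mem_ball_zero_iff.1 hζ).le _ (hF k ζ hk.le)).1
  · obtain ⟨M, hM⟩ := hK.bddAbove_image
      fun z hz => (hρ z (hKX hz)).continuousAt.continuousWithinAt
    obtain ⟨k, hk⟩ := exists_nat_gt (M - c + 3)
    refine isCompact_setOf_mem_ball_of_norm_le hFd.continuousOn hK.isClosed (h.stable k).radius_lt
      fun ζ hζ hζK => ?_
    by_contra! hlt
    linarith [h.lt_apply_limit hF hlt.le hζ, hM ⟨F ζ, hζK, rfl⟩]
  · refine tendsto_nhds_unique (hlim.tendsto_at h0) ?_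
    simp only [h.apply_zero, tendsto_const_nhds]
  · refine tendsto_nhds_unique ((hlim.deriv hf isOpen_ball).tendsto_at h0) ?_
    simp only [Function.comp_def, h.deriv_zero, tendsto_const_nhds]

lemma exists_adm_deriv_eq_smul (hX : IsOpen X) {p : E} (hp : p ∈ X) (v : E) :
    ∃ (lam : ℝ) (f : ℂ → E), 0 < lam ∧ Adm X f ∧ f 0 = p ∧ deriv f 0 = lam • v := by
  obtain ⟨δ, hδ, hδX⟩ := Metric.isOpen_iff.1 hX p hp
  obtain ⟨lam, hlam, hlamδ⟩ := (eventually_mem_nhdsWithin.and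
    (eventually_mul_le (half_pos hδ) ‖v‖)).exists
  rw [mem_Ioi] at hlam
  have hderiv : ∀ ζ : ℂ, HasDerivAt (fun ζ : ℂ => p + ζ • (lam • v)) (lam • v) ζ := fun ζ => by
    simpa using ((hasDerivAt_id ζ).smul_const (lam • v)).const_add p
  refine ⟨lam, fun ζ => p + ζ • (lam • v), hlam,
    ⟨fun ζ => (hderiv ζ).differentiableAt, fun ζ hζ => hδX ?_⟩, by simp, (hderiv 0).deriv⟩
  rw [mem_ball_iff_norm, add_sub_cancel_left]
  calc ‖ζ • (lam • v)‖ = ‖ζ‖ * (lam * ‖v‖) := by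
        rw [norm_smul, norm_smul, Real.norm_of_nonneg hlam.le]
    _ ≤ 1 * (δ / 2) := by gcongr
    _ < δ := by linarith

end Limit

end ProperDisc

theorem proper_disc_through_point_general
    {E : Type*} [NormedAddCommGroup E] [NormedSpace ℂ E] [FiniteDimensional ℂ E]
    {X : Set E} (hX : IsOpen X) {ρ : E → ℝ} (hρ : ContDiffOn ℝ 2 ρ X)
    (hρ_exh : ∀ c : ℝ, IsCompact {z ∈ X | ρ z ≤ c})
    (hLevi : ∀ z ∈ X, ProperDisc.LeviTwoPos ρ z) {p : E} (hp : p ∈ X) (v : E) :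
    ∃ (lam : ℝ) (f : ℂ → E),
      0 < lam ∧
      DifferentiableOn ℂ f (ball (0 : ℂ) 1) ∧
      (∀ ζ ∈ ball (0 : ℂ) 1, f ζ ∈ X) ∧
      (∀ K : Set E, K ⊆ X → IsCompact K → IsCompact {ζ ∈ ball (0 : ℂ) 1 | f ζ ∈ K}) ∧
      f 0 = p ∧ deriv f 0 = lam • v := by
  obtain ⟨lam, f₀, hlam, hf₀, rfl, hderiv⟩ := ProperDisc.exists_adm_deriv_eq_smul hX hp v
  obtain ⟨F, hF, hFX, hFproper, hF0, hF'⟩ := ProperDisc.exists_proper_disc hX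
    (fun z hz => hρ.contDiffAt (hX.mem_nhds hz)) hLevi hρ_exh hf₀
  exact ⟨lam, F, hlam, hF, hFX, hFproper, hF0, hF'.trans hderiv⟩

/-- Proper holomorphic discs through any point in any direction in an
open set `X ⊆ ℂⁿ` (`n ≥ 2`) admitting a smooth exhaustion function whose Levi form has at
least 2 positive eigenvalues at each point. -/
theorem proper_disc_through_point
    (n : ℕ) (hn : 2 ≤ n)
    (X : Set (EuclideanSpace ℂ (Fin n))) (hX : IsOpen X)
    (ρ : EuclideanSpace ℂ (Fin n) → ℝ)
    (hρ_smooth : ContDiffOn ℝ (⊤ : ℕ∞) ρ X)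
    (hρ_exh : ∀ c : ℝ, IsCompact {z ∈ X | ρ z ≤ c})
    (hLevi : ∀ z ∈ X, ∃ V : Submodule ℂ (EuclideanSpace ℂ (Fin n)),
      Module.finrank ℂ V = 2 ∧ ∀ w ∈ V, w ≠ 0 →
        0 < fderiv ℝ (fderiv ℝ ρ) z w w
            + fderiv ℝ (fderiv ℝ ρ) z (Complex.I • w) (Complex.I • w))
    (p : EuclideanSpace ℂ (Fin n)) (hp : p ∈ X)
    (v : EuclideanSpace ℂ (Fin n)) :
    ∃ (lam : ℝ) (f : ℂ → EuclideanSpace ℂ (Fin n)),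
      0 < lam ∧
      DifferentiableOn ℂ f (ball (0 : ℂ) 1) ∧
      (∀ ζ ∈ ball (0 : ℂ) 1, f ζ ∈ X) ∧
      (∀ K : Set (EuclideanSpace ℂ (Fin n)), K ⊆ X → IsCompact K →
        IsCompact {ζ ∈ ball (0 : ℂ) 1 | f ζ ∈ K}) ∧
      f 0 = p ∧ deriv f 0 = lam • v :=
  proper_disc_through_point_general hX (hρ_smooth.of_le (WithTop.coe_le_coe.2 le_top)) hρ_exh hLevi
    hp v
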